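/- Let d ≥ 4 and 1 < p < p_d = (2d−2)/(d+1). Then for every finitely supported function γ : 𝒴 × ℛ → ℂ, ‖∑_{(y,r)∈𝒴×ℛ} γ(y,r) F_{y,r}‖_{L^p(ℝ^d)} ≤ C (∑_{(y,r)∈𝒴×ℛ} |γ(y,r)|^p r^{d−1})^{1/p}, where C depends only on p, d and ψ. -/

import Mathlib

open MeasureTheory Metric Set
open scoped FourierTransform ENNReal NNReal

noncomputable section

abbrev Ed (d : ℕ) := EuclideanSpace ℝ (Fin d)

/-- Surface measure on the sphere of radius `r` centered at the origin in `ℝ^d`: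
the `(d-1)`-dimensional Hausdorff measure restricted to the sphere. -/
def sphereM (d : ℕ) (r : ℝ) : Measure (Ed d) :=
  (μH[(d : ℝ) - 1]).restrict (Metric.sphere (0 : Ed d) r)

/-- `ψ₀` is admissible: radial, `C^∞`, supported in the ball of radius `1/10`, and
its Fourier transform vanishes to order `20d` at the origin. -/
def Admissible (d : ℕ) (ψ₀ : Ed d → ℂ) : Prop :=
  ContDiff ℝ (⊤ : ℕ∞) ψ₀ ∧
  (∀ x, ψ₀ x ≠ 0 → ‖x‖ ≤ 1 / 10) ∧
  (∀ x y : Ed d, ‖x‖ = ‖y‖ → ψ₀ x = ψ₀ y) ∧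
  (∀ n : ℕ, n < 20 * d → iteratedFDeriv ℝ n (𝓕 ψ₀) 0 = 0)

/-- `ψ = ψ₀ * ψ₀` (convolution). -/
def psiOf (d : ℕ) (ψ₀ : Ed d → ℂ) : Ed d → ℂ :=
  fun x => ∫ y, ψ₀ y * ψ₀ (x - y)

/-- `F_{y,r} = σ_r * ψ(· - y)`. -/
def Fyr (d : ℕ) (ψ₀ : Ed d → ℂ) (y : Ed d) (r : ℝ) : Ed d → ℂ :=
  fun x => ∫ z, psiOf d ψ₀ (x - y - z) ∂(sphereM d r)


lemma sphere_hausdorff_lt_top (n : ℕ) :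
    (μH[(n : ℝ)] : Measure (Ed (n + 1))) (Metric.sphere (0 : Ed (n + 1)) 1) < ⊤ := by
  let q : Fin (n + 1) → ℝ → (Fin n → ℝ) → Ed (n + 1) :=
    fun i s x => WithLp.toLp 2 (i.insertNth (α := fun _ => ℝ) s x)
  have hqc : ∀ i s, ContDiff ℝ 1 (q i s) := by
    intro i s
    rw [contDiff_euclidean]
    intro j
    rcases Fin.eq_self_or_eq_succAbove i j with h | ⟨k, h⟩
    · subst h; simp only [q, Fin.insertNth_apply_same]; exact contDiff_const
    · subst h; simp only [q, Fin.insertNth_apply_succAbove]; fun_prop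
  have hq0 : ∀ i s x, s ≠ 0 → q i s x ≠ 0 := by
    intro i s x hs h
    have := congrArg (fun v : Ed (n+1) => v i) h
    simp [q] at this
    exact hs this
  let f : Fin (n + 1) → ℝ → (Fin n → ℝ) → Ed (n + 1) := fun i s x => ‖q i s x‖⁻¹ • q i s x
  have hfc : ∀ i s, s ≠ 0 → ContDiff ℝ 1 (f i s) := by
    intro i s hs
    have h1 : ContDiff ℝ 1 (fun x => ‖q i s x‖) := (hqc i s).norm ℝ (fun x => hq0 i s x hs)
    exact (h1.inv (fun x => norm_ne_zero_iff.mpr (hq0 i s x hs))).smul (hqc i s)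
  let K : Set (Fin n → ℝ) := Set.Icc (-1) 1
  have hK : (μH[(n : ℝ)] : Measure (Fin n → ℝ)) K < ⊤ := by
    have := hausdorffMeasure_pi_real (ι := Fin n)
    rw [Fintype.card_fin] at this
    rw [this]
    exact isCompact_Icc.measure_lt_top
  have hfin : ∀ i s, s ≠ 0 → (μH[(n : ℝ)] : Measure (Ed (n + 1))) (f i s '' K) < ⊤ := by
    intro i s hs
    obtain ⟨C, hC⟩ := (hfc i s hs).contDiffOn.exists_lipschitzOnWith one_ne_zero
      (convex_Icc _ _) (isCompact_Icc (a := (-1 : Fin n → ℝ)) (b := 1))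
    refine (hC.hausdorffMeasure_image_le (Nat.cast_nonneg n)).trans_lt ?_
    exact ENNReal.mul_lt_top (by simp) hK
  have hsub : Metric.sphere (0 : Ed (n + 1)) 1 ⊆
      ⋃ i : Fin (n + 1), (f i 1 '' K ∪ f i (-1) '' K) := by
    intro z hz
    have hz1 : ‖z‖ = 1 := by simpa using hz
    obtain ⟨i, -, hi⟩ := Finset.exists_max_image (Finset.univ : Finset (Fin (n + 1)))
      (fun i => |z i|) ⟨0, Finset.mem_univ _⟩
    have hi0 : 0 < |z i| := by
      by_contra h
      have : z = 0 := by
        ext j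
        have := hi j (Finset.mem_univ _)
        have h3 : |z j| ≤ 0 := by linarith [abs_nonneg (z i)]
        simpa using h3
      rw [this] at hz1; simp at hz1
    let x : Fin n → ℝ := fun j => z (i.succAbove j) / |z i|
    have hx : x ∈ K := by
      have h : ∀ j, |x j| ≤ 1 := by
        intro j
        simp only [x, abs_div, abs_abs]
        rw [div_le_one hi0]
        exact hi _ (Finset.mem_univ _)
      exact ⟨fun j => (abs_le.mp (h j)).1, fun j => (abs_le.mp (h j)).2⟩
    have key : ∀ s, s = z i / |z i| → f i s x = z := by
      intro s hs
      have hq : q i s x = |z i|⁻¹ • z := by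
        ext j
        rcases Fin.eq_self_or_eq_succAbove i j with h | ⟨k, h⟩
        · subst h; simp [q, hs, div_eq_inv_mul]
        · subst h; simp [q, x, div_eq_inv_mul]
      simp only [f, hq, norm_smul, hz1, norm_inv, Real.norm_eq_abs, abs_abs, mul_one, inv_inv]
      rw [smul_smul, mul_inv_cancel₀ hi0.ne', one_smul]
    refine Set.mem_iUnion.mpr ⟨i, ?_⟩
    rcases le_or_gt 0 (z i) with h | h
    · left; refine ⟨x, hx, key 1 ?_⟩
      rw [abs_of_nonneg h, div_self]; intro h0; simp [h0] at hi0
    · right; refine ⟨x, hx, key (-1) ?_⟩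
      rw [abs_of_neg h, div_neg, div_self h.ne]
  refine (measure_mono hsub).trans_lt ?_
  refine (measure_iUnion_fintype_le _ _).trans_lt ?_
  refine ENNReal.sum_lt_top.mpr fun i _ => ?_
  exact (measure_union_le _ _).trans_lt (ENNReal.add_lt_top.mpr
    ⟨hfin i 1 one_ne_zero, hfin i (-1) (by norm_num)⟩)

instance sphereM_one_finite (d : ℕ) [NeZero d] : IsFiniteMeasure (sphereM d 1) := by
  obtain ⟨n, rfl⟩ := Nat.exists_eq_succ_of_ne_zero (NeZero.ne d)
  constructor
  simp only [sphereM, Measure.restrict_apply_univ]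
  have := sphere_hausdorff_lt_top n
  simpa using this

lemma sphereM_map (d : ℕ) (r : ℝ) (U : Ed d ≃ₗᵢ[ℝ] Ed d) :
    (sphereM d r).map U = sphereM d r := by
  unfold sphereM
  have h := U.toIsometryEquiv.measurePreserving_hausdorffMeasure ((d : ℝ) - 1)
  have h2 := h.restrict_preimage (s := Metric.sphere (0 : Ed d) r) isClosed_sphere.measurableSet
  have h3 : U.toIsometryEquiv ⁻¹' (Metric.sphere (0 : Ed d) r) = Metric.sphere (0 : Ed d) r := by
    ext x; simp
  rw [h3] at h2
  exact h2.map_eq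

lemma sphereM_integral_comp {G : Type*} [NormedAddCommGroup G] [NormedSpace ℝ G]
    (d : ℕ) (r : ℝ) (U : Ed d ≃ₗᵢ[ℝ] Ed d) (f : Ed d → G) :
    ∫ z, f (U z) ∂(sphereM d r) = ∫ z, f z ∂(sphereM d r) := by
  conv_rhs => rw [← sphereM_map d r U]
  exact ((integral_map_equiv U.toHomeomorph.toMeasurableEquiv f)).symm

open scoped Pointwise in
lemma sphereM_scale (d : ℕ) (hd : 1 ≤ d) (r : ℝ) (hr : 0 < r) :
    sphereM d r = ENNReal.ofReal (r ^ (d - 1)) • (sphereM d 1).map (fun x => r • x) := by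
  have hme : MeasurableEmbedding (fun x : Ed d => r • x) :=
    (Homeomorph.smulOfNeZero r hr.ne').measurableEmbedding
  ext s hs
  rw [Measure.smul_apply, hme.map_apply]
  unfold sphereM
  rw [Measure.restrict_apply hs, Measure.restrict_apply (hme.measurable hs)]
  have h1 : s ∩ Metric.sphere (0 : Ed d) r =
      r • (((fun x : Ed d => r • x) ⁻¹' s) ∩ Metric.sphere (0 : Ed d) 1) := by
    ext x
    constructor
    · rintro ⟨hx, hx2⟩
      refine Set.mem_smul_set.mpr ⟨r⁻¹ • x, ⟨?_, ?_⟩, ?_⟩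
      · simp [smul_smul, hr.ne', hx]
      · have : ‖x‖ = r := by simpa using hx2
        simp [norm_smul, this, abs_of_pos hr, hr.ne']
      · simp [smul_smul, hr.ne']
    · rintro ⟨y, ⟨hy, hy2⟩, rfl⟩
      have : ‖y‖ = 1 := by simpa using hy2
      refine ⟨hy, ?_⟩
      simp [norm_smul, this, abs_of_pos hr]
  have hd1 : (0 : ℝ) ≤ (d : ℝ) - 1 := by
    have : (1 : ℝ) ≤ d := by exact_mod_cast hd
    linarith
  rw [h1, Measure.hausdorffMeasure_smul₀ hd1 hr.ne']
  have h2 : (‖r‖₊ : ℝ≥0) ^ ((d : ℝ) - 1) = (r ^ (d - 1)).toNNReal := by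
    have h3 : (d : ℝ) - 1 = ((d - 1 : ℕ) : ℝ) := by push_cast [Nat.cast_sub hd]; ring
    rw [h3, NNReal.rpow_natCast, Real.toNNReal_pow hr.le, Real.nnnorm_of_nonneg hr.le]
    congr 1
    exact (Real.toNNReal_of_nonneg hr.le).symm
  rw [h2]; rfl

lemma sphereM_integral_scale {G : Type*} [NormedAddCommGroup G] [NormedSpace ℝ G]
    (d : ℕ) (hd : 1 ≤ d) (r : ℝ) (hr : 0 < r) (f : Ed d → G) :
    ∫ z, f z ∂(sphereM d r) = r ^ (d - 1) • ∫ z, f (r • z) ∂(sphereM d 1) := by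
  have hme : MeasurableEmbedding (fun x : Ed d => r • x) :=
    (Homeomorph.smulOfNeZero r hr.ne').measurableEmbedding
  rw [sphereM_scale d hd r hr, integral_smul_measure, hme.integral_map,
    ENNReal.toReal_ofReal (by positivity)]

lemma sphereM_finite (d : ℕ) (hd : 1 ≤ d) (r : ℝ) (hr : 0 < r) :
    IsFiniteMeasure (sphereM d r) := by
  have : NeZero d := ⟨by omega⟩
  rw [sphereM_scale d hd r hr]
  exact Measure.smul_finite _ (by simp)

lemma sphereM_ae (d : ℕ) (r : ℝ) : ∀ᵐ z ∂(sphereM d r), ‖z‖ = r := by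
  unfold sphereM
  filter_upwards [ae_restrict_mem (isClosed_sphere (x := (0 : Ed d)) (ε := r)).measurableSet]
    with z hz
  simpa using hz

lemma energy_bound (c : ℝ) (hc : 0 ≤ c) (w w1 : ℝ → ℝ)
    (h1 : ∀ t, 0 < t → HasDerivAt w (w1 t) t)
    (h2 : ∀ t, 0 < t → HasDerivAt w1 (-(w t) * (1 - c / t ^ 2)) t) :
    ∃ K, ∀ t, 2 * c + 2 ≤ t → |w t| ≤ K := by
  set E : ℝ → ℝ := fun t => w1 t ^ 2 + w t ^ 2 * (1 - c / t ^ 2) with hE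
  set H : ℝ → ℝ := fun t => E t * Real.exp (2 * c / t ^ 2) with hH
  have hE' : ∀ t, 0 < t → HasDerivAt E (2 * c * w t ^ 2 / t ^ 3) t := by
    intro t ht
    have hA : HasDerivAt (fun s : ℝ => 1 - c / s ^ 2) (2 * c / t ^ 3) t := by
      have := ((hasDerivAt_pow 2 t).fun_inv (by positivity)).const_mul c
      have := this.const_sub 1
      refine HasDerivAt.congr_deriv this ?_
      field_simp
      try ring
    have := ((h2 t ht).fun_pow 2).add (((h1 t ht).fun_pow 2).fun_mul hA)
    refine HasDerivAt.congr_deriv this ?_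
    field_simp
    ring
  have hX : ∀ t, 0 < t → HasDerivAt (fun s : ℝ => Real.exp (2 * c / s ^ 2))
      (Real.exp (2 * c / t ^ 2) * (-(4 * c / t ^ 3))) t := by
    intro t ht
    have hA : HasDerivAt (fun s : ℝ => 2 * c / s ^ 2) (-(4 * c / t ^ 3)) t := by
      have := ((hasDerivAt_pow 2 t).fun_inv (by positivity)).const_mul (2 * c)
      refine HasDerivAt.congr_deriv this ?_
      field_simp
      try ring
    exact hA.exp
  have hH' : ∀ t, 0 < t → HasDerivAt H (2 * c * w t ^ 2 / t ^ 3 * Real.exp (2 * c / t ^ 2) +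
      E t * (Real.exp (2 * c / t ^ 2) * (-(4 * c / t ^ 3)))) t := by
    intro t ht
    exact (hE' t ht).fun_mul (hX t ht)
  have hpos : ∀ t, 2 * c + 2 ≤ t → 0 < t := fun t ht => by linarith
  have hhalf : ∀ t, 2 * c + 2 ≤ t → c / t ^ 2 ≤ 1 / 2 := by
    intro t ht
    have := hpos t ht
    rw [div_le_div_iff₀ (by positivity) (by norm_num)]
    nlinarith
  have hwE : ∀ t, 2 * c + 2 ≤ t → w t ^ 2 ≤ 2 * E t := by
    intro t ht
    have := hhalf t ht
    simp only [hE]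
    nlinarith [sq_nonneg (w1 t), sq_nonneg (w t)]
  have hanti : AntitoneOn H (Set.Ici (2 * c + 2)) := by
    apply antitoneOn_of_deriv_nonpos (convex_Ici _)
    · intro t ht; exact (hH' t (hpos t ht)).continuousAt.continuousWithinAt
    · intro t ht; rw [interior_Ici] at ht
      exact (hH' t (hpos t (le_of_lt ht))).differentiableAt.differentiableWithinAt
    · intro t ht
      rw [interior_Ici] at ht
      have ht' : 2 * c + 2 ≤ t := le_of_lt ht
      have ht0 := hpos t ht'
      rw [(hH' t ht0).deriv]
      have := hwE t ht'
      have h3 : 2 * c * w t ^ 2 / t ^ 3 * Real.exp (2 * c / t ^ 2) +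
        E t * (Real.exp (2 * c / t ^ 2) * (-(4 * c / t ^ 3))) =
        (Real.exp (2 * c / t ^ 2) * (2 * c / t ^ 3)) * (w t ^ 2 - 2 * E t) := by ring
      rw [h3]
      apply mul_nonpos_of_nonneg_of_nonpos (by positivity) (by linarith)
  refine ⟨Real.sqrt (2 * H (2 * c + 2)), fun t ht => ?_⟩
  apply Real.abs_le_sqrt
  have h4 : H t ≤ H (2 * c + 2) := hanti (by simp) ht ht
  have h5 : E t ≤ H t := by
    simp only [hH]
    have h6 : 0 ≤ E t := by nlinarith [hwE t ht, sq_nonneg (w t)]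
    have h7 : 1 ≤ Real.exp (2 * c / t ^ 2) := Real.one_le_exp (by have := hpos t ht; positivity)
    nlinarith
  linarith [hwE t ht]

lemma ode_decay (m B : ℝ) (hm : 1 ≤ m) (φ φ1 φ2 : ℝ → ℝ)
    (h1 : ∀ t, HasDerivAt φ (φ1 t) t) (h2 : ∀ t, HasDerivAt φ1 (φ2 t) t)
    (hode : ∀ t, t * (φ t + φ2 t) = -(2 * m) * φ1 t) (hB : ∀ t, |φ t| ≤ B) :
    ∃ K, 0 ≤ K ∧ ∀ t, 0 ≤ t → |φ t| * t ^ m ≤ K := by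
  set c := m * (m - 1) with hcdef
  have hc : 0 ≤ c := by apply mul_nonneg <;> linarith
  obtain ⟨K, hK⟩ := energy_bound c hc (fun t => t ^ m * φ t)
    (fun t => m * t ^ (m - 1) * φ t + t ^ m * φ1 t) (by
      intro t ht
      have := (Real.hasDerivAt_rpow_const (x := t) (p := m) (Or.inl ht.ne')).fun_mul (h1 t)
      exact this) (by
      intro t ht
      have ha := (Real.hasDerivAt_rpow_const (x := t) (p := m) (Or.inl ht.ne')).fun_mul (h2 t)
      have hb := ((Real.hasDerivAt_rpow_const (x := t) (p := m - 1)
        (Or.inl ht.ne')).const_mul m).fun_mul (h1 t)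
      have := hb.fun_add ha
      refine HasDerivAt.congr_deriv this ?_
      have e1 : t ^ (m - 1) = t ^ m / t := by rw [Real.rpow_sub ht, Real.rpow_one]
      have e2 : t ^ (m - 1 - 1) = t ^ m / t ^ 2 := by
        rw [Real.rpow_sub ht, e1, Real.rpow_one]; field_simp
      have e3 : φ2 t = -(2 * m) * φ1 t / t - φ t := by
        field_simp; linarith [hode t]
      rw [e2, e1, e3]
      field_simp
      rw [hcdef]
      ring)
  have hB0 : 0 ≤ B := (abs_nonneg _).trans (hB 0)
  refine ⟨max K (B * (2 * c + 2) ^ m), le_max_of_le_right (by positivity), fun t ht => ?_⟩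
  rcases le_total (2 * c + 2) t with h | h
  · refine le_max_of_le_left ?_
    have := hK t h
    rw [abs_mul, abs_of_nonneg (Real.rpow_nonneg ht m)] at this
    linarith
  · refine le_max_of_le_right ?_
    exact mul_le_mul (hB t) (Real.rpow_le_rpow ht h (by linarith)) (by positivity) hB0

lemma exists_isometry_pair {d : ℕ} (e e' a b : Ed d) (he : ‖e‖ = ‖a‖) (he' : ‖e'‖ = ‖b‖)
    (h1 : inner ℝ e e' = 0) (h2 : inner ℝ a b = 0) :
    ∃ U : Ed d ≃ₗᵢ[ℝ] Ed d, U e = a ∧ U e' = b := by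
  let R1 := (Submodule.span ℝ {e - a})ᗮ.reflection
  have hR1 : R1 e = a := Submodule.reflection_sub he
  let b' := R1 e'
  have hb' : ‖b'‖ = ‖b‖ := by rw [← he']; exact R1.norm_map e'
  let R2 := (Submodule.span ℝ {b' - b})ᗮ.reflection
  have hR2 : R2 b' = b := Submodule.reflection_sub hb'
  have hab' : inner ℝ a b' = 0 := by
    rw [← hR1]; simp only [b']; rw [LinearIsometryEquiv.inner_map_map]; exact h1
  refine ⟨R1.trans R2, ?_, hR2⟩
  simp only [LinearIsometryEquiv.trans_apply, hR1]
  apply Submodule.reflection_mem_subspace_eq_self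
  rw [Submodule.mem_orthogonal_singleton_iff_inner_right]
  rw [inner_sub_left, real_inner_comm, hab', real_inner_comm, h2, sub_zero]

lemma exists_isometry {d : ℕ} (e a : Ed d) (he : ‖e‖ = ‖a‖) :
    ∃ U : Ed d ≃ₗᵢ[ℝ] Ed d, U e = a := by
  obtain ⟨U, hU, -⟩ := exists_isometry_pair e 0 a 0 he (by simp) (by simp) (by simp)
  exact ⟨U, hU⟩

lemma hasDerivAt_integral_bdd {E : Type*} [TopologicalSpace E] [MeasurableSpace E]
    [OpensMeasurableSpace E] (μ : Measure E) [IsFiniteMeasure μ]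
    (g g' : ℝ → E → ℝ) (B : ℝ) (t₀ : ℝ) (hg : ∀ t, Continuous (g t)) (hg' : Continuous (g' t₀))
    (hd : ∀ z t, HasDerivAt (fun s => g s z) (g' t z) t)
    (hb : ∀ᵐ z ∂μ, ∀ t, |g' t z| ≤ B) (hb0 : ∀ᵐ z ∂μ, |g t₀ z| ≤ B) :
    HasDerivAt (fun t => ∫ z, g t z ∂μ) (∫ z, g' t₀ z ∂μ) t₀ := by
  refine (hasDerivAt_integral_of_dominated_loc_of_deriv_le (F := g) (F' := g') (x₀ := t₀)
    (s := Set.univ) (bound := fun _ => B) Filter.univ_mem ?_ ?_ ?_ ?_ ?_ ?_).2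
  · exact Filter.Eventually.of_forall fun t => (hg t).aestronglyMeasurable
  · exact Integrable.of_bound (hg t₀).aestronglyMeasurable B hb0
  · exact hg'.aestronglyMeasurable
  · filter_upwards [hb] with z hz t _ using hz t
  · exact integrable_const _
  · exact Filter.Eventually.of_forall fun z t _ => hd z t

/-- cosine transform of the unit sphere -/
def phi (d : ℕ) [NeZero d] (t : ℝ) : ℝ := ∫ z, Real.cos (t * z 0) ∂(sphereM d 1)

lemma coord_le {d : ℕ} (z : Ed d) (i : Fin d) : |z i| ≤ ‖z‖ := by
  simpa using PiLp.norm_apply_le z i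

lemma phi_bound (d : ℕ) [NeZero d] (t : ℝ) : |phi d t| ≤ (sphereM d 1).real univ := by
  have := norm_integral_le_of_norm_le_const (μ := sphereM d 1) (C := 1)
    (f := fun z => Real.cos (t * z 0)) (Filter.Eventually.of_forall fun z => Real.abs_cos_le_one _)
  simpa [phi] using this

lemma phi_decay (d : ℕ) [NeZero d] (hd : 3 ≤ d) :
    ∃ K, 0 ≤ K ∧ ∀ t, 0 ≤ t → |phi d t| * t ^ (((d : ℝ) - 1) / 2) ≤ K := by
  have hae := sphereM_ae d 1
  have hc1 : ∀ i : Fin d, ∀ᵐ z ∂(sphereM d 1), |z i| ≤ 1 := by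
    intro i
    filter_upwards [hae] with z hz
    rw [← hz]; exact coord_le z i
  have hcont : ∀ i : Fin d, Continuous (fun z : Ed d => z i) := fun i => by fun_prop
  refine ode_decay (((d : ℝ) - 1) / 2) ((sphereM d 1).real univ) ?_ (phi d)
    (fun t => ∫ z, -(z 0 * Real.sin (t * z 0)) ∂(sphereM d 1))
    (fun t => ∫ z, -(z 0 * (z 0 * Real.cos (t * z 0))) ∂(sphereM d 1)) ?_ ?_ ?_ (phi_bound d)
  · have : (3 : ℝ) ≤ d := by exact_mod_cast hd
    linarith
  · intro t
    refine hasDerivAt_integral_bdd (sphereM d 1) (fun t z => Real.cos (t * z 0))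
      (fun t z => -(z 0 * Real.sin (t * z 0))) 1 t (fun t => by fun_prop) (by fun_prop) ?_ ?_ ?_
    · intro z t
      have := ((hasDerivAt_id t).mul_const (z 0)).cos
      refine HasDerivAt.congr_deriv this ?_
      simp only [id, one_mul]; ring
    · filter_upwards [hc1 0] with z hz t
      rw [abs_neg, abs_mul]
      exact mul_le_one₀ hz (abs_nonneg _) (Real.abs_sin_le_one _)
    · exact Filter.Eventually.of_forall fun z => Real.abs_cos_le_one _
  · intro t
    refine hasDerivAt_integral_bdd (sphereM d 1) (fun t z => -(z 0 * Real.sin (t * z 0)))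
      (fun t z => -(z 0 * (z 0 * Real.cos (t * z 0)))) 1 t (fun t => by fun_prop) (by fun_prop)
      ?_ ?_ ?_
    · intro z t
      have := (((hasDerivAt_id t).mul_const (z 0)).sin.const_mul (z 0)).fun_neg
      refine HasDerivAt.congr_deriv this ?_
      simp only [id, one_mul]; ring
    · filter_upwards [hc1 0] with z hz t
      rw [abs_neg, abs_mul, abs_mul]
      exact mul_le_one₀ hz (by positivity) (mul_le_one₀ hz (abs_nonneg _) (Real.abs_cos_le_one _))
    · filter_upwards [hc1 0] with z hz
      rw [abs_neg, abs_mul]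
      exact mul_le_one₀ hz (abs_nonneg _) (Real.abs_sin_le_one _)
  · intro t
    -- rotation identity
    have hrot : ∀ j : Fin d, j ≠ 0 →
        ∫ z, (z 0 * Real.sin (t * z 0) - t * (z j * z j * Real.cos (t * z 0))) ∂(sphereM d 1)
          = 0 := by
      intro j hj
      set g : ℝ → Ed d → ℝ := fun θ z => (-Real.sin θ * z 0 + Real.cos θ * z j) *
        Real.sin (t * (Real.cos θ * z 0 + Real.sin θ * z j)) with hg
      set g' : ℝ → Ed d → ℝ := fun θ z => (-Real.cos θ * z 0 - Real.sin θ * z j) *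
        Real.sin (t * (Real.cos θ * z 0 + Real.sin θ * z j)) +
        (-Real.sin θ * z 0 + Real.cos θ * z j) * (Real.cos (t * (Real.cos θ * z 0 + Real.sin θ * z j))
          * (t * (-Real.sin θ * z 0 + Real.cos θ * z j))) with hg'
      have hder : HasDerivAt (fun θ => ∫ z, g θ z ∂(sphereM d 1)) (∫ z, g' 0 z ∂(sphereM d 1)) 0 := by
        refine hasDerivAt_integral_bdd (sphereM d 1) g g' (2 + 2 * (|t| * 2)) 0
          (fun θ => by simp only [hg]; fun_prop) (by simp only [hg']; fun_prop) ?_ ?_ ?_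
        · intro z θ
          have hA : HasDerivAt (fun s => -Real.sin s * z 0 + Real.cos s * z j)
              (-Real.cos θ * z 0 + -Real.sin θ * z j) θ :=
            ((Real.hasDerivAt_sin θ).fun_neg.mul_const (z 0)).fun_add
              ((Real.hasDerivAt_cos θ).mul_const (z j))
          have hB : HasDerivAt (fun s => Real.cos s * z 0 + Real.sin s * z j)
              (-Real.sin θ * z 0 + Real.cos θ * z j) θ :=
            ((Real.hasDerivAt_cos θ).mul_const (z 0)).fun_add
              ((Real.hasDerivAt_sin θ).mul_const (z j))
          have := hA.fun_mul (hB.const_mul t).sin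
          refine HasDerivAt.congr_deriv this ?_
          simp only [hg']; ring
        · filter_upwards [hc1 0, hc1 j] with z hz hzj θ
          have b1 : |Real.sin θ * z 0| ≤ 1 := by
            rw [abs_mul]; exact mul_le_one₀ (Real.abs_sin_le_one _) (abs_nonneg _) hz
          have b2 : |Real.cos θ * z j| ≤ 1 := by
            rw [abs_mul]; exact mul_le_one₀ (Real.abs_cos_le_one _) (abs_nonneg _) hzj
          have b3 : |Real.cos θ * z 0| ≤ 1 := by
            rw [abs_mul]; exact mul_le_one₀ (Real.abs_cos_le_one _) (abs_nonneg _) hz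
          have b4 : |Real.sin θ * z j| ≤ 1 := by
            rw [abs_mul]; exact mul_le_one₀ (Real.abs_sin_le_one _) (abs_nonneg _) hzj
          have c1 : |-Real.sin θ * z 0 + Real.cos θ * z j| ≤ 2 := by
            rw [abs_le] at *; constructor <;> linarith [b1.1, b1.2, b2.1, b2.2]
          have c2 : |-Real.cos θ * z 0 - Real.sin θ * z j| ≤ 2 := by
            rw [abs_le] at *; constructor <;> linarith [b3.1, b3.2, b4.1, b4.2]
          simp only [hg']
          refine (abs_add_le _ _).trans (add_le_add ?_ ?_)
          · rw [abs_mul]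
            calc _ ≤ 2 * 1 := mul_le_mul c2 (Real.abs_sin_le_one _) (abs_nonneg _) (by norm_num)
              _ = 2 := by norm_num
          · rw [abs_mul, abs_mul, abs_mul]
            refine mul_le_mul c1 ?_ (by positivity) (by norm_num)
            calc _ ≤ 1 * (|t| * 2) := mul_le_mul (Real.abs_cos_le_one _)
                  (mul_le_mul_of_nonneg_left c1 (abs_nonneg _)) (by positivity) (by norm_num)
              _ = _ := one_mul _
        · filter_upwards [hc1 j] with z hzj
          simp only [hg, Real.sin_zero, Real.cos_zero, neg_zero, zero_mul, one_mul, zero_add]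
          rw [abs_mul]
          have := mul_le_one₀ hzj (abs_nonneg _) (Real.abs_sin_le_one (t * (z 0 + 0)))
          have h0 := abs_nonneg t
          linarith
      have hconst : (fun θ => ∫ z, g θ z ∂(sphereM d 1)) =
          fun _ => ∫ z : Ed d, (z j * Real.sin (t * z 0)) ∂(sphereM d 1) := by
        funext θ
        have hne : inner ℝ (EuclideanSpace.single (0 : Fin d) (1 : ℝ))
            (EuclideanSpace.single j (1 : ℝ)) = 0 := by
          simp [EuclideanSpace.inner_single_left, hj.symm]
        have hne' : inner ℝ (EuclideanSpace.single j (1 : ℝ))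
            (EuclideanSpace.single (0 : Fin d) (1 : ℝ)) = 0 := by
          rw [real_inner_comm]; exact hne
        have hn1 : ∀ a b : ℝ, a ^ 2 + b ^ 2 = 1 →
            ‖a • EuclideanSpace.single (0 : Fin d) (1 : ℝ) +
              b • EuclideanSpace.single j (1 : ℝ)‖ = 1 := by
          intro a b hab
          have : ‖a • EuclideanSpace.single (0 : Fin d) (1 : ℝ) +
              b • EuclideanSpace.single j (1 : ℝ)‖ ^ 2 = 1 := by
            rw [norm_add_sq_real, inner_smul_left, inner_smul_right, hne]
            simp [norm_smul, hab]
          nlinarith [norm_nonneg (a • EuclideanSpace.single (0 : Fin d) (1 : ℝ) +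
              b • EuclideanSpace.single j (1 : ℝ))]
        obtain ⟨U, hU0, hUj⟩ := exists_isometry_pair
          (EuclideanSpace.single (0 : Fin d) (1 : ℝ)) (EuclideanSpace.single j (1 : ℝ))
          (Real.cos θ • EuclideanSpace.single (0 : Fin d) (1 : ℝ) +
              Real.sin θ • EuclideanSpace.single j (1 : ℝ))
          ((-Real.sin θ) • EuclideanSpace.single (0 : Fin d) (1 : ℝ) +
              Real.cos θ • EuclideanSpace.single j (1 : ℝ))
          (by rw [hn1 _ _ (by rw [add_comm]; exact Real.sin_sq_add_cos_sq θ)]; simp)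
          (by rw [hn1 _ _ (by rw [neg_sq]; exact Real.sin_sq_add_cos_sq θ)]; simp)
          hne (by
            simp only [inner_add_left, inner_add_right, inner_smul_left, inner_smul_right, hne, hne']
            simp; ring)
        rw [← sphereM_integral_comp d 1 U (g θ)]
        congr 1
        funext z
        have k0 : Real.cos θ * (U z) 0 + Real.sin θ * (U z) j = z 0 := by
          have : inner ℝ (U (EuclideanSpace.single (0 : Fin d) (1 : ℝ))) (U z) = z 0 := by
            rw [LinearIsometryEquiv.inner_map_map]; simp [EuclideanSpace.inner_single_left]
          rw [hU0] at this
          simpa [inner_add_left, inner_smul_left, EuclideanSpace.inner_single_left] using this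
        have kj : -Real.sin θ * (U z) 0 + Real.cos θ * (U z) j = z j := by
          have : inner ℝ (U (EuclideanSpace.single j (1 : ℝ))) (U z) = z j := by
            rw [LinearIsometryEquiv.inner_map_map]; simp [EuclideanSpace.inner_single_left]
          rw [hUj] at this
          simpa [inner_add_left, inner_smul_left, EuclideanSpace.inner_single_left] using this
        simp only [hg, k0, kj]
      rw [hconst] at hder
      have h0 := hder.unique (hasDerivAt_const _ _)
      rw [← neg_eq_zero, ← integral_neg, ← h0]
      congr 1
      funext z
      simp only [hg', Real.cos_zero, Real.sin_zero]
      simp only [zero_mul, one_mul, neg_zero, zero_add, add_zero, sub_zero]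
      ring
    have hintg : ∀ (f : Ed d → ℝ), Continuous f → (∀ᵐ z ∂(sphereM d 1), |f z| ≤ 1) →
        Integrable f (sphereM d 1) := fun f hf hb =>
      Integrable.of_bound hf.aestronglyMeasurable 1 hb
    have i1 : Integrable (fun z : Ed d => z 0 * Real.sin (t * z 0)) (sphereM d 1) := by
      refine hintg _ (by fun_prop) ?_
      filter_upwards [hc1 0] with z hz
      rw [abs_mul]
      exact mul_le_one₀ hz (abs_nonneg _) (Real.abs_sin_le_one _)
    have i2 : ∀ j, Integrable (fun z : Ed d => z j * z j * Real.cos (t * z 0)) (sphereM d 1) := by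
      intro j
      refine hintg _ (by fun_prop) ?_
      filter_upwards [hc1 j] with z hz
      rw [abs_mul, abs_mul]
      exact mul_le_one₀ (mul_le_one₀ hz (abs_nonneg _) hz) (abs_nonneg _) (Real.abs_cos_le_one _)
    set A := ∫ z : Ed d, z 0 * Real.sin (t * z 0) ∂(sphereM d 1) with hA
    have hrot' : ∀ j : Fin d, j ≠ 0 →
        t * ∫ z : Ed d, z j * z j * Real.cos (t * z 0) ∂(sphereM d 1) = A := by
      intro j hj
      have := hrot j hj
      rw [integral_sub i1 ((i2 j).const_mul t), integral_const_mul] at this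
      linarith
    have hsum : ∑ j : Fin d, ∫ z : Ed d, z j * z j * Real.cos (t * z 0) ∂(sphereM d 1) = phi d t := by
      rw [← integral_finsetSum _ (fun j _ => i2 j)]
      apply integral_congr_ae
      filter_upwards [hae] with z hz
      rw [← Finset.sum_mul]
      have : ∑ j, z j * z j = 1 := by
        have := EuclideanSpace.real_norm_sq_eq z
        rw [hz] at this
        simp only [← sq]; linarith
      rw [this, one_mul]
    rw [← Finset.add_sum_erase _ _ (Finset.mem_univ (0 : Fin d))] at hsum
    have hs2 : t * ∑ j ∈ Finset.univ.erase (0 : Fin d),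
        ∫ z : Ed d, z j * z j * Real.cos (t * z 0) ∂(sphereM d 1) = ((d : ℝ) - 1) * A := by
      rw [Finset.mul_sum, Finset.sum_congr rfl (fun j hj => hrot' j (Finset.ne_of_mem_erase hj))]
      rw [Finset.sum_const, Finset.card_erase_of_mem (Finset.mem_univ _), Finset.card_univ,
        Fintype.card_fin, nsmul_eq_mul, Nat.cast_sub (by omega)]
      simp
    rw [integral_neg, integral_neg, ← hA, ← hsum]
    have h9 : ∫ z : Ed d, z 0 * (z 0 * Real.cos (t * z 0)) ∂(sphereM d 1) =
        ∫ z : Ed d, z 0 * z 0 * Real.cos (t * z 0) ∂(sphereM d 1) := by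
      congr 1; funext z; ring
    rw [h9]
    linear_combination hs2

lemma sphere_fourier (d : ℕ) [NeZero d] (ξ : Ed d) :
    ∫ z, Complex.exp (((-2 * Real.pi * inner ℝ z ξ : ℝ) : ℂ) * Complex.I) ∂(sphereM d 1) =
      ((phi d (2 * Real.pi * ‖ξ‖) : ℝ) : ℂ) := by
  obtain ⟨U, hU⟩ := exists_isometry (‖ξ‖ • EuclideanSpace.single (0 : Fin d) (1 : ℝ)) ξ
    (by simp [norm_smul])
  rw [← sphereM_integral_comp d 1 U]
  have h1 : ∀ z : Ed d, inner ℝ (U z) ξ = ‖ξ‖ * z 0 := by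
    intro z
    conv_lhs => rw [← hU]
    rw [LinearIsometryEquiv.inner_map_map, inner_smul_right]
    simp [EuclideanSpace.inner_single_right]
  simp only [h1]
  have hintg : ∀ s : ℝ, Integrable (fun z : Ed d =>
      Complex.exp (((s * z 0 : ℝ) : ℂ) * Complex.I)) (sphereM d 1) := by
    intro s
    refine Integrable.of_bound (by fun_prop) 1 (Filter.Eventually.of_forall fun z => ?_)
    rw [Complex.norm_exp_ofReal_mul_I]
  set s := 2 * Real.pi * ‖ξ‖ with hs
  have h2 : ∀ z : Ed d, -2 * Real.pi * (‖ξ‖ * z 0) = (-s) * z 0 := fun z => by rw [hs]; ring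
  simp only [h2]
  have hsym : ∫ z : Ed d, Complex.exp (((s * z 0 : ℝ) : ℂ) * Complex.I) ∂(sphereM d 1) =
      ∫ z : Ed d, Complex.exp ((((-s) * z 0 : ℝ) : ℂ) * Complex.I) ∂(sphereM d 1) := by
    rw [← sphereM_integral_comp d 1 (LinearIsometryEquiv.neg ℝ)]
    congr 1; funext z; simp
  have hadd : ∫ z : Ed d, Complex.exp (((s * z 0 : ℝ) : ℂ) * Complex.I) ∂(sphereM d 1) +
      ∫ z : Ed d, Complex.exp ((((-s) * z 0 : ℝ) : ℂ) * Complex.I) ∂(sphereM d 1) =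
      2 * ((phi d s : ℝ) : ℂ) := by
    rw [← integral_add (hintg s) (hintg (-s)), phi, ← integral_complex_ofReal, ← integral_const_mul]
    congr 1; funext z
    push_cast
    rw [Complex.cos]
    ring_nf
  rw [hsym] at hadd
  linear_combination hadd / 2

/-- exponential `e^{-2πi⟨y,ξ⟩}` -/
def ex {d : ℕ} (y ξ : Ed d) : ℂ := Complex.exp (((-2 * Real.pi * inner ℝ y ξ : ℝ) : ℂ) * Complex.I)

lemma ex_norm {d : ℕ} (y ξ : Ed d) : ‖ex y ξ‖ = 1 := by
  rw [ex, Complex.norm_exp_ofReal_mul_I]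

lemma ex_add {d : ℕ} (y z ξ : Ed d) : ex (y + z) ξ = ex y ξ * ex z ξ := by
  rw [ex, ex, ex, ← Complex.exp_add, inner_add_left]; congr 1; push_cast; ring

lemma ex_conj {d : ℕ} (y ξ : Ed d) : (starRingEnd ℂ) (ex y ξ) = ex (-y) ξ := by
  rw [ex, ex, ← Complex.exp_conj, inner_neg_left]; congr 1
  rw [map_mul, Complex.conj_I, Complex.conj_ofReal]; push_cast; ring

lemma ex_cont {d : ℕ} : Continuous (fun q : Ed d × Ed d => ex q.1 q.2) := by
  unfold ex; fun_prop

lemma ex_cont_right {d : ℕ} (y : Ed d) : Continuous (ex y) :=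
  ex_cont.comp (by fun_prop : Continuous fun ξ : Ed d => (y, ξ))

lemma fourier_ex {d : ℕ} (f : Ed d → ℂ) (ξ : Ed d) : 𝓕 f ξ = ∫ v, ex v ξ * f v := by
  rw [Real.fourier_eq']; rfl

lemma taylor_bound {E F : Type*} [NormedAddCommGroup E] [NormedSpace ℝ E]
    [NormedAddCommGroup F] [NormedSpace ℝ F] (f : E → F) (n : ℕ) (hf : ContDiff ℝ n f) (C : ℝ)
    (hC : ∀ x, ‖iteratedFDeriv ℝ n f x‖ ≤ C) (h0 : ∀ k < n, iteratedFDeriv ℝ k f 0 = 0) :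
    ∀ x, ‖f x‖ ≤ C * ‖x‖ ^ n := by
  have hC0 : 0 ≤ C := (norm_nonneg _).trans (hC 0)
  have key : ∀ j, j ≤ n → ∀ x, ‖iteratedFDeriv ℝ (n - j) f x‖ ≤ C * ‖x‖ ^ j := by
    intro j
    induction j with
    | zero => intro _ x; simpa using hC x
    | succ j ih =>
      intro hj x
      have hlt : n - (j + 1) < n := by omega
      have hsucc : n - (j + 1) + 1 = n - j := by omega
      have hdiff : Differentiable ℝ (iteratedFDeriv ℝ (n - (j + 1)) f) :=
        hf.differentiable_iteratedFDeriv (by exact_mod_cast hlt)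
      have hb : ∀ y ∈ closedBall (0 : E) ‖x‖,
          ‖fderiv ℝ (iteratedFDeriv ℝ (n - (j + 1)) f) y‖ ≤ C * ‖x‖ ^ j := by
        intro y hy
        rw [norm_fderiv_iteratedFDeriv, hsucc]
        refine (ih (by omega) y).trans ?_
        have : ‖y‖ ≤ ‖x‖ := by simpa using hy
        gcongr
      have := (convex_closedBall (0 : E) ‖x‖).norm_image_sub_le_of_norm_fderiv_le
        (fun y _ => hdiff y) hb (show (0:E) ∈ closedBall (0 : E) ‖x‖ by simp) (show x ∈ closedBall (0 : E) ‖x‖ by simp)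
      rw [h0 _ hlt, sub_zero, sub_zero] at this
      rw [pow_succ, ← mul_assoc]
      exact this
  intro x
  have := key n le_rfl x
  rw [Nat.sub_self, norm_iteratedFDeriv_zero] at this
  exact this

section
variable {d : ℕ} {ψ₀ : Ed d → ℂ}

lemma psi0_compact (hψ : Admissible d ψ₀) : HasCompactSupport ψ₀ := by
  refine HasCompactSupport.of_support_subset_isCompact (isCompact_closedBall (0 : Ed d) (1 / 10)) ?_
  intro x hx
  simpa using hψ.2.1 x hx

lemma psi0_cont (hψ : Admissible d ψ₀) : Continuous ψ₀ := hψ.1.continuous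

lemma psi0_integrable (hψ : Admissible d ψ₀) : Integrable ψ₀ :=
  (psi0_cont hψ).integrable_of_hasCompactSupport (psi0_compact hψ)

lemma exists_schwartz (hψ : Admissible d ψ₀) :
    ∃ T : SchwartzMap (Ed d) ℂ, (T : Ed d → ℂ) = 𝓕 ψ₀ := by
  refine ⟨𝓕 ((psi0_compact hψ).toSchwartzMap hψ.1), ?_⟩
  rw [SchwartzMap.fourier_coe]
  rfl

lemma P_cont (hψ : Admissible d ψ₀) : Continuous (𝓕 ψ₀) := by
  obtain ⟨T, hT⟩ := exists_schwartz hψ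
  rw [← hT]; exact T.continuous

lemma P_integrable (hψ : Admissible d ψ₀) : Integrable (𝓕 ψ₀) := by
  obtain ⟨T, hT⟩ := exists_schwartz hψ
  rw [← hT]; exact T.integrable

lemma P_radial (hψ : Admissible d ψ₀) (ξ η : Ed d) (h : ‖ξ‖ = ‖η‖) : 𝓕 ψ₀ ξ = 𝓕 ψ₀ η := by
  obtain ⟨U, hU⟩ := exists_isometry ξ η h
  rw [← hU, ← Real.fourier_comp_linearIsometry U]
  have : ψ₀ ∘ U = ψ₀ := funext fun x => hψ.2.2.1 _ _ (by simp)
  rw [this]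

lemma P_bound (hψ : Admissible d ψ₀) (s : ℝ) (hs0 : 0 ≤ s) (hs : s ≤ (20 * d : ℕ)) :
    ∃ C, 0 ≤ C ∧ ∀ ξ, ‖𝓕 ψ₀ ξ‖ ≤ C * ‖ξ‖ ^ s := by
  obtain ⟨T, hT⟩ := exists_schwartz hψ
  obtain ⟨C0, hC0p, hC0⟩ := T.decay 0 0
  obtain ⟨C1, hC1p, hC1⟩ := T.decay 0 (20 * d)
  have h1 := taylor_bound (𝓕 ψ₀) (20 * d) (hT ▸ (T.smooth (20 * d : ℕ))) C1
    (by rw [← hT]; simpa using hC1) hψ.2.2.2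
  have h0 : ∀ ξ, ‖𝓕 ψ₀ ξ‖ ≤ C0 := by rw [← hT]; simpa using hC0
  refine ⟨max C0 C1, le_max_of_le_left hC0p.le, fun ξ => ?_⟩
  rcases le_total ‖ξ‖ 1 with h | h
  · rcases (norm_nonneg ξ).eq_or_lt with h' | h'
    · rcases hs0.eq_or_lt with hs' | hs'
      · rw [← hs', Real.rpow_zero, mul_one]; exact (h0 ξ).trans (le_max_left _ _)
      · have h2 := h1 ξ
        rw [← h'] at h2 ⊢
        rw [Real.zero_rpow hs'.ne', mul_zero]
        rw [zero_pow, mul_zero] at h2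
        · exact h2
        · intro h3
          rw [h3] at hs
          simp at hs
          linarith
    · refine (h1 ξ).trans (mul_le_mul (le_max_right _ _) ?_ (by positivity)
        (le_max_of_le_left hC0p.le))
      rw [← Real.rpow_natCast]
      exact Real.rpow_le_rpow_of_exponent_ge h' h hs
  · refine (h0 ξ).trans ?_
    calc C0 ≤ max C0 C1 := le_max_left _ _
      _ = max C0 C1 * 1 := (mul_one _).symm
      _ ≤ _ := mul_le_mul_of_nonneg_left (Real.one_le_rpow h hs0) (le_max_of_le_left hC0p.le)

lemma psiOf_eq (ψ₀ : Ed d → ℂ) :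
    psiOf d ψ₀ = MeasureTheory.convolution ψ₀ ψ₀ (ContinuousLinearMap.mul ℂ ℂ) volume := by
  funext x; rfl

lemma psi_cont (hψ : Admissible d ψ₀) : Continuous (psiOf d ψ₀) := by
  rw [psiOf_eq]
  exact (psi0_compact hψ).continuous_convolution_right _
    (psi0_cont hψ).locallyIntegrable (psi0_cont hψ)

lemma psi_supp (hψ : Admissible d ψ₀) (x : Ed d) (hx : psiOf d ψ₀ x ≠ 0) : ‖x‖ ≤ 1 / 5 := by
  by_contra h
  apply hx
  unfold psiOf
  have : ∀ y, ψ₀ y * ψ₀ (x - y) = 0 := by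
    intro y
    by_contra h2
    have h3 := hψ.2.1 y (left_ne_zero_of_mul h2)
    have h4 := hψ.2.1 (x - y) (right_ne_zero_of_mul h2)
    have h5 : ‖x‖ ≤ ‖y‖ + ‖x - y‖ := by
      simpa using norm_add_le y (x - y)
    linarith
  simp [this]

lemma psi_compact (hψ : Admissible d ψ₀) : HasCompactSupport (psiOf d ψ₀) := by
  refine HasCompactSupport.of_support_subset_isCompact (isCompact_closedBall (0 : Ed d) (1 / 5)) ?_
  intro x hx
  simpa using psi_supp hψ x hx

lemma psi_integrable (hψ : Admissible d ψ₀) : Integrable (psiOf d ψ₀) :=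
  (psi_cont hψ).integrable_of_hasCompactSupport (psi_compact hψ)

lemma psi_bdd (hψ : Admissible d ψ₀) : ∃ B, ∀ x, ‖psiOf d ψ₀ x‖ ≤ B :=
  (psi_compact hψ).exists_bound_of_continuous (psi_cont hψ)

lemma psi_fourier (hψ : Admissible d ψ₀) (ξ : Ed d) : 𝓕 (psiOf d ψ₀) ξ = 𝓕 ψ₀ ξ ^ 2 := by
  rw [psiOf_eq, Real.fourier_mul_convolution_eq (psi0_integrable hψ) (psi0_integrable hψ), sq]

lemma F_supp (hψ : Admissible d ψ₀) (y : Ed d) (r : ℝ) (x : Ed d) (hx : Fyr d ψ₀ y r x ≠ 0) :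
    |‖x - y‖ - r| ≤ 1 / 5 := by
  by_contra h
  apply hx
  unfold Fyr
  rw [integral_eq_zero_of_ae]
  filter_upwards [sphereM_ae d r] with z hz
  by_contra h2
  have h3 := psi_supp hψ _ h2
  apply h
  rw [← hz]
  exact (abs_norm_sub_norm_le (x - y) z).trans h3

lemma F_cont (hd : 1 ≤ d) (hψ : Admissible d ψ₀) (y : Ed d) (r : ℝ) (hr : 0 < r) :
    Continuous (Fyr d ψ₀ y r) := by
  have := sphereM_finite d hd r hr
  obtain ⟨B, hB⟩ := psi_bdd hψ
  have hc := psi_cont hψ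
  unfold Fyr
  refine continuous_of_dominated (bound := fun _ => B) ?_ ?_ (integrable_const _) ?_
  · intro x; exact (Continuous.aestronglyMeasurable (by fun_prop))
  · intro x; exact Filter.Eventually.of_forall fun z => hB _
  · exact Filter.Eventually.of_forall fun z => by fun_prop

lemma F_compact (hψ : Admissible d ψ₀) (y : Ed d) (r : ℝ) :
    HasCompactSupport (Fyr d ψ₀ y r) := by
  refine HasCompactSupport.of_support_subset_isCompact (isCompact_closedBall y (r + 1 / 5)) ?_
  intro x hx
  have := abs_le.mp (F_supp hψ y r x hx)
  rw [mem_closedBall, dist_eq_norm]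
  linarith [this.2]

lemma F_integrable (hd : 1 ≤ d) (hψ : Admissible d ψ₀) (y : Ed d) (r : ℝ) (hr : 0 < r) :
    Integrable (Fyr d ψ₀ y r) :=
  (F_cont hd hψ y r hr).integrable_of_hasCompactSupport (F_compact hψ y r)

lemma F_memLp (hd : 1 ≤ d) (hψ : Admissible d ψ₀) (y : Ed d) (r : ℝ) (hr : 0 < r) (q : ℝ≥0∞) :
    MemLp (Fyr d ψ₀ y r) q volume :=
  (F_cont hd hψ y r hr).memLp_of_hasCompactSupport (F_compact hψ y r)

lemma sphere_fourier_r [NeZero d] (r : ℝ) (hr : 0 < r) (ξ : Ed d) :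
    ∫ z, ex z ξ ∂(sphereM d r) = ((r ^ (d - 1) * phi d (2 * Real.pi * (r * ‖ξ‖)) : ℝ) : ℂ) := by
  rw [sphereM_integral_scale d (Nat.one_le_iff_ne_zero.mpr (NeZero.ne d)) r hr]
  have := sphere_fourier d (r • ξ)
  rw [norm_smul, Real.norm_of_nonneg hr.le] at this
  rw [Complex.ofReal_mul, ← this, Complex.real_smul]
  congr 2
  funext z
  rw [ex, inner_smul_left, inner_smul_right]
  simp

lemma F_fourier [NeZero d] (hψ : Admissible d ψ₀) (y : Ed d) (r : ℝ) (hr : 0 < r) (ξ : Ed d) :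
    𝓕 (Fyr d ψ₀ y r) ξ =
      ex y ξ * (((r ^ (d - 1) * phi d (2 * Real.pi * (r * ‖ξ‖)) : ℝ) : ℂ) * 𝓕 ψ₀ ξ ^ 2) := by
  have hd1 : 1 ≤ d := Nat.one_le_iff_ne_zero.mpr (NeZero.ne d)
  have := sphereM_finite d hd1 r hr
  have hc := psi_cont hψ
  have hexc := fun v : Ed d => ex_cont_right v
  have hsymm : ∀ v w : Ed d, ex v w = ex w v := by
    intro v w; rw [ex, ex, real_inner_comm]
  have hexl : Continuous (fun v : Ed d => ex v ξ) := by
    simp_rw [hsymm _ ξ]; exact ex_cont_right ξ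
  rw [fourier_ex]
  unfold Fyr
  simp_rw [← integral_const_mul]
  rw [integral_integral_swap]
  · have h1 : ∀ z : Ed d, ∫ x, ex x ξ * psiOf d ψ₀ (x - y - z) = ex y ξ * 𝓕 ψ₀ ξ ^ 2 * ex z ξ := by
      intro z
      have h2 := integral_add_right_eq_self (μ := (volume : Measure (Ed d)))
        (fun x => ex x ξ * psiOf d ψ₀ (x - y - z)) (y + z)
      rw [← h2]
      rw [← psi_fourier hψ, fourier_ex]
      rw [mul_assoc, mul_comm _ (ex z ξ), ← mul_assoc, ← integral_const_mul]
      congr 1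
      funext x
      rw [ex_add, ex_add]
      have : x + (y + z) - y - z = x := by abel
      rw [this]; ring
    simp_rw [h1]
    rw [integral_const_mul, sphere_fourier_r r hr]
    ring
  · have hcont : Continuous (fun q : Ed d × Ed d => ex q.1 ξ * psiOf d ψ₀ (q.1 - y - q.2)) :=
      (hexl.comp continuous_fst).mul (by fun_prop)
    rw [integrable_prod_iff' (by exact hcont.aestronglyMeasurable)]
    have hn : ∀ x z : Ed d, ‖ex x ξ * psiOf d ψ₀ (x - y - z)‖ = ‖psiOf d ψ₀ (x - (y + z))‖ := by
      intro x z; rw [norm_mul, ex_norm, one_mul, sub_sub]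
    constructor
    · refine Filter.Eventually.of_forall fun z => ?_
      have h3 := ((psi_integrable hψ).comp_sub_right (y + z)).norm
      rw [← integrable_norm_iff]
      · simp only [Function.uncurry, hn]; exact h3
      · exact Continuous.aestronglyMeasurable (hcont.comp (by fun_prop : Continuous fun x : Ed d => (x, z)))
    · simp only [Function.uncurry, hn]
      have h4 : ∀ z : Ed d, ∫ x, ‖psiOf d ψ₀ (x - (y + z))‖ = ∫ x, ‖psiOf d ψ₀ x‖ := by
        intro z
        exact integral_sub_right_eq_self (fun x => ‖psiOf d ψ₀ x‖) (y + z)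
      simp_rw [h4]
      exact integrable_const _

lemma parseval (f g : Ed d → ℂ) (hf : Integrable f) (hg : Integrable g) (hgc : Continuous g)
    (hg' : Integrable (𝓕 g)) :
    ∫ x, (starRingEnd ℂ) (f x) * g x = ∫ ξ, (starRingEnd ℂ) (𝓕 f ξ) * 𝓕 g ξ := by
  have h := VectorFourier.integral_sesq_fourierIntegral_eq_neg_flip (innerSL ℂ (E := ℂ))
    (L := innerₗ (Ed d)) (μ := volume) (ν := volume) Real.continuous_fourierChar
    continuous_inner hf hg'
  have h2 : VectorFourier.fourierIntegral Real.fourierChar volume (-(innerₗ (Ed d)).flip) (𝓕 g) = g := by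
    have := hgc.fourierInv_fourier_eq hg hg'
    conv_rhs => rw [← this]
    rw [flip_innerₗ]
    rfl
  rw [h2] at h
  simp only [innerSL_apply_apply, RCLike.inner_apply] at h
  simp_rw [mul_comm (starRingEnd ℂ _)]
  exact h.symm

end

lemma phi_cont (d : ℕ) [NeZero d] : Continuous (phi d) := by
  unfold phi
  refine continuous_of_dominated (bound := fun _ => 1) ?_ ?_ (integrable_const _) ?_
  · intro x; exact (Continuous.aestronglyMeasurable (by fun_prop))
  · intro x; exact Filter.Eventually.of_forall fun z => by simpa using Real.abs_cos_le_one _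
  · exact Filter.Eventually.of_forall fun z => by fun_prop

/-- the Fourier multiplier of `σ_r` -/
def sym (d : ℕ) [NeZero d] (r : ℝ) (ξ : Ed d) : ℝ := r ^ (d - 1) * phi d (2 * Real.pi * (r * ‖ξ‖))

lemma sym_cont (d : ℕ) [NeZero d] (r : ℝ) : Continuous (sym d r) := by
  have := phi_cont d
  unfold sym; fun_prop

lemma sym_bound (d : ℕ) [NeZero d] (hd : 3 ≤ d) : ∃ K, 0 ≤ K ∧ ∀ r, 0 < r → ∀ ξ : Ed d,
    |sym d r ξ| * ‖ξ‖ ^ (((d : ℝ) - 1) / 2) ≤ K * r ^ (((d : ℝ) - 1) / 2) := by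
  obtain ⟨K, hK0, hK⟩ := phi_decay d hd
  refine ⟨K, hK0, fun r hr ξ => ?_⟩
  set m := ((d : ℝ) - 1) / 2 with hm
  have hm0 : 0 ≤ m := by
    have : (3 : ℝ) ≤ d := by exact_mod_cast hd
    rw [hm]; linarith
  have h := hK (2 * Real.pi * (r * ‖ξ‖)) (by positivity)
  rw [Real.mul_rpow (by positivity) (by positivity), Real.mul_rpow hr.le (norm_nonneg _)] at h
  have h1 : 1 ≤ (2 * Real.pi) ^ m := Real.one_le_rpow (by linarith [Real.pi_gt_three]) hm0
  have hr2 : r ^ (d - 1) = r ^ m * r ^ m := by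
    rw [← Real.rpow_add hr, ← Real.rpow_natCast]
    congr 1
    rw [Nat.cast_sub (by omega), hm]; push_cast; ring
  have hX : 0 ≤ |phi d (2 * Real.pi * (r * ‖ξ‖))| * (r ^ m * ‖ξ‖ ^ m) := by positivity
  have h2 : |phi d (2 * Real.pi * (r * ‖ξ‖))| * (r ^ m * ‖ξ‖ ^ m) ≤ K := by
    nlinarith
  rw [sym, abs_mul, abs_of_pos (by positivity : 0 < r ^ (d - 1)), hr2]
  have hrm : 0 < r ^ m := by positivity
  nlinarith

section
variable {d : ℕ} {ψ₀ : Ed d → ℂ}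

lemma m_le (hd : 4 ≤ d) : 0 ≤ ((d : ℝ) - 1) / 2 ∧ ((d : ℝ) - 1) / 2 ≤ ((20 * d : ℕ) : ℝ) := by
  have : (4 : ℝ) ≤ d := by exact_mod_cast hd
  push_cast
  constructor <;> linarith

lemma symP_bound [NeZero d] (hd : 4 ≤ d) (hψ : Admissible d ψ₀) : ∃ K, 0 ≤ K ∧ ∀ r, 0 < r → ∀ ξ : Ed d,
    |sym d r ξ| * ‖𝓕 ψ₀ ξ‖ ≤ K * r ^ (((d : ℝ) - 1) / 2) := by
  obtain ⟨K, hK0, hK⟩ := sym_bound d (by omega)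
  obtain ⟨C, hC0, hC⟩ := P_bound hψ _ (m_le hd).1 (m_le hd).2
  refine ⟨K * C, by positivity, fun r hr ξ => ?_⟩
  have h1 := hK r hr ξ
  have h2 := hC ξ
  calc |sym d r ξ| * ‖𝓕 ψ₀ ξ‖ ≤ |sym d r ξ| * (C * ‖ξ‖ ^ (((d : ℝ) - 1) / 2)) := by gcongr
    _ = C * (|sym d r ξ| * ‖ξ‖ ^ (((d : ℝ) - 1) / 2)) := by ring
    _ ≤ C * (K * r ^ (((d : ℝ) - 1) / 2)) := by gcongr
    _ = _ := by ring

lemma phiP_bound [NeZero d] (hd : 4 ≤ d) (hψ : Admissible d ψ₀) : ∃ K, 0 ≤ K ∧ ∀ ρ, 0 ≤ ρ → ∀ ξ : Ed d,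
    |phi d (2 * Real.pi * (ρ * ‖ξ‖))| * ‖𝓕 ψ₀ ξ‖ * ρ ^ (((d : ℝ) - 1) / 2) ≤ K := by
  obtain ⟨K, hK0, hK⟩ := symP_bound hd hψ
  refine ⟨K, hK0, fun r hr ξ => ?_⟩
  set m := ((d : ℝ) - 1) / 2 with hm
  have hm0 : 0 < m := by
    have : (4 : ℝ) ≤ d := by exact_mod_cast hd
    rw [hm]; linarith
  rcases hr.eq_or_lt with h | h
  · rw [← h, Real.zero_rpow hm0.ne']; simpa using hK0
  have hr2 : r ^ (d - 1) = r ^ m * r ^ m := by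
    rw [← Real.rpow_add h, ← Real.rpow_natCast]
    congr 1
    rw [Nat.cast_sub (by omega), hm]; push_cast; ring
  have h1 := hK r h ξ
  rw [sym, abs_mul, abs_of_pos (by positivity : 0 < r ^ (d - 1)), hr2] at h1
  have hrm : 0 < r ^ m := by positivity
  refine le_of_mul_le_mul_right ?_ hrm
  linarith

lemma radial_avg [NeZero d] (Q : Ed d → ℂ) (hQ : Integrable Q)
    (hrad : ∀ ξ η : Ed d, ‖ξ‖ = ‖η‖ → Q ξ = Q η) (v : Ed d) :
    (((sphereM d 1).real univ : ℝ) : ℂ) * ∫ ξ, ex v ξ * Q ξ =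
      ∫ ξ, ((phi d (2 * Real.pi * (‖v‖ * ‖ξ‖)) : ℝ) : ℂ) * Q ξ := by
  have hJ : ∀ w : Ed d, ‖w‖ = ‖v‖ → ∫ ξ, ex w ξ * Q ξ = ∫ ξ, ex v ξ * Q ξ := by
    intro w hw
    obtain ⟨U, hU⟩ := exists_isometry v w hw.symm
    have h1 := (U.measurePreserving).integral_comp U.toHomeomorph.measurableEmbedding
      (fun ξ => ex w ξ * Q ξ)
    rw [← h1]
    congr 1
    funext ξ
    rw [hrad (U ξ) ξ (by simp), ← hU, ex, ex, U.inner_map_map]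
  have h2 : ∫ z, (∫ ξ, ex (‖v‖ • z) ξ * Q ξ) ∂(sphereM d 1) =
      (((sphereM d 1).real univ : ℝ) : ℂ) * ∫ ξ, ex v ξ * Q ξ := by
    rw [integral_congr_ae (g := fun _ => ∫ ξ, ex v ξ * Q ξ)]
    · rw [integral_const, Complex.real_smul]
    · filter_upwards [sphereM_ae d 1] with z hz
      exact hJ _ (by rw [norm_smul, hz]; simp)
  rw [← h2, integral_integral_swap]
  · congr 1
    funext ξ
    rw [integral_mul_const]
    congr 1
    have := sphere_fourier d (‖v‖ • ξ)
    rw [norm_smul, norm_norm] at this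
    rw [← this]
    congr 1
    funext z
    rw [ex, inner_smul_left, inner_smul_right]
    simp
  · refine Integrable.bdd_mul (c := 1) (hQ.comp_snd (sphereM d 1)) ?_ ?_
    · exact (ex_cont.comp (by fun_prop : Continuous fun q : Ed d × Ed d => (‖v‖ • q.1, q.2))).aestronglyMeasurable
    · exact Filter.Eventually.of_forall fun q => by rw [ex_norm]

lemma P_bdd (hψ : Admissible d ψ₀) : ∃ C, 0 ≤ C ∧ ∀ ξ, ‖𝓕 ψ₀ ξ‖ ≤ C := by
  obtain ⟨C, h0, h⟩ := P_bound hψ 0 le_rfl (by positivity)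
  exact ⟨C, h0, by simpa using h⟩

lemma FF_integrable [NeZero d] (hd : 4 ≤ d) (hψ : Admissible d ψ₀) (y : Ed d) (r : ℝ) (hr : 0 < r) :
    Integrable (𝓕 (Fyr d ψ₀ y r)) := by
  obtain ⟨K, hK0, hK⟩ := symP_bound hd hψ
  have hs := sym_cont d r
  have he := ex_cont_right y
  have hP := P_cont hψ
  have : 𝓕 (Fyr d ψ₀ y r) = fun ξ => ex y ξ * ((sym d r ξ : ℂ) * 𝓕 ψ₀ ξ ^ 2) :=
    funext fun ξ => F_fourier hψ y r hr ξ
  rw [this]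
  refine Integrable.mono' ((P_integrable hψ).norm.const_mul (K * r ^ (((d : ℝ) - 1) / 2))) ?_ ?_
  · exact Continuous.aestronglyMeasurable (by fun_prop)
  · refine Filter.Eventually.of_forall fun ξ => ?_
    rw [norm_mul, ex_norm, one_mul, norm_mul, norm_pow, sq, ← mul_assoc, Complex.norm_real, Real.norm_eq_abs]
    exact mul_le_mul_of_nonneg_right (hK r hr ξ) (norm_nonneg _)

lemma inner_formula [NeZero d] (hd : 4 ≤ d) (hψ : Admissible d ψ₀) (y y' : Ed d) (r r' : ℝ)
    (hr : 0 < r) (hr' : 0 < r') :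
    ∫ x, (starRingEnd ℂ) (Fyr d ψ₀ y r x) * Fyr d ψ₀ y' r' x =
      ∫ ξ, ex (y' - y) ξ * ((sym d r ξ * sym d r' ξ * ‖𝓕 ψ₀ ξ‖ ^ 4 : ℝ) : ℂ) := by
  rw [parseval _ _ (F_integrable (by omega) hψ y r hr) (F_integrable (by omega) hψ y' r' hr')
    (F_cont (by omega) hψ y' r' hr') (FF_integrable hd hψ y' r' hr')]
  congr 1
  funext ξ
  rw [F_fourier hψ y r hr, F_fourier hψ y' r' hr', map_mul, ex_conj, sub_eq_add_neg, ex_add, map_mul,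
    Complex.conj_ofReal, map_pow]
  have : (starRingEnd ℂ) (𝓕 ψ₀ ξ) ^ 2 * (𝓕 ψ₀ ξ) ^ 2 = ((‖𝓕 ψ₀ ξ‖ ^ 4 : ℝ) : ℂ) := by
    rw [← mul_pow, Complex.conj_mul']; push_cast; ring
  rw [Complex.ofReal_mul (_ * _), Complex.ofReal_mul (sym _ _ _), ← this, sym, sym]
  ring

lemma inner_bound [NeZero d] (hd : 4 ≤ d) (hψ : Admissible d ψ₀) : ∃ K, 0 ≤ K ∧
    ∀ (y y' : Ed d) (r r' : ℝ), 0 < r → 0 < r' →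
    ‖∫ x, (starRingEnd ℂ) (Fyr d ψ₀ y r x) * Fyr d ψ₀ y' r' x‖ *
      (1 + dist y y') ^ (((d : ℝ) - 1) / 2) ≤ K * (r * r') ^ (((d : ℝ) - 1) / 2) := by
  obtain ⟨K, hK0, hK⟩ := symP_bound hd hψ
  obtain ⟨L, hL0, hL⟩ := phiP_bound hd hψ
  obtain ⟨B, hB0, hB⟩ := P_bdd hψ
  set m := ((d : ℝ) - 1) / 2 with hm
  have hm0 : 0 ≤ m := (m_le hd).1
  set S := (sphereM d 1).real univ with hS
  have hS0 : 0 ≤ S := by positivity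
  set N := ∫ ξ, ‖𝓕 ψ₀ ξ‖ with hN
  have hN0 : 0 ≤ N := by positivity
  have hPi := (P_integrable hψ).norm
  refine ⟨2 ^ m * (K * K * B * N + K * K * L * N / S), by positivity, fun y y' r r' hr hr' => ?_⟩
  rw [inner_formula hd hψ y y' r r' hr hr']
  set Q : Ed d → ℝ := fun ξ => sym d r ξ * sym d r' ξ * ‖𝓕 ψ₀ ξ‖ ^ 4 with hQ
  have hQle : ∀ ξ, |Q ξ| ≤ K * K * (r * r') ^ m * ‖𝓕 ψ₀ ξ‖ ^ 2 := by
    intro ξ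
    have h1 := hK r hr ξ
    have h2 := hK r' hr' ξ
    rw [Real.mul_rpow hr.le hr'.le]
    calc |Q ξ| = (|sym d r ξ| * ‖𝓕 ψ₀ ξ‖) * (|sym d r' ξ| * ‖𝓕 ψ₀ ξ‖) * ‖𝓕 ψ₀ ξ‖ ^ 2 := by
          rw [hQ, abs_mul, abs_mul, abs_of_nonneg (by positivity : 0 ≤ ‖𝓕 ψ₀ ξ‖ ^ 4)]; ring
      _ ≤ (K * r ^ m) * (K * r' ^ m) * ‖𝓕 ψ₀ ξ‖ ^ 2 := by gcongr
      _ = _ := by ring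
  have hQle2 : ∀ ξ, |Q ξ| ≤ K * K * B * (r * r') ^ m * ‖𝓕 ψ₀ ξ‖ := by
    intro ξ
    refine (hQle ξ).trans ?_
    rw [sq]
    calc K * K * (r * r') ^ m * (‖𝓕 ψ₀ ξ‖ * ‖𝓕 ψ₀ ξ‖) ≤ K * K * (r * r') ^ m * (B * ‖𝓕 ψ₀ ξ‖) := by
          have := hB ξ; gcongr
      _ = _ := by ring
  have hQc : Continuous Q := by
    have := sym_cont d r
    have := sym_cont d r'
    have := P_cont hψ
    rw [hQ]; fun_prop
  have hQi : Integrable (fun ξ => ((Q ξ : ℝ) : ℂ)) := by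
    refine Integrable.mono' (hPi.const_mul (K * K * B * (r * r') ^ m)) ?_ ?_
    · exact Continuous.aestronglyMeasurable (by fun_prop)
    · exact Filter.Eventually.of_forall fun ξ => by
        rw [Complex.norm_real, Real.norm_eq_abs]; exact hQle2 ξ
  have hQr : ∀ ξ η : Ed d, ‖ξ‖ = ‖η‖ → ((Q ξ : ℝ) : ℂ) = ((Q η : ℝ) : ℂ) := by
    intro ξ η h
    simp only [hQ, sym, h, P_radial hψ ξ η h]
  set J := ∫ ξ, ex (y' - y) ξ * ((Q ξ : ℝ) : ℂ) with hJ
  have hJ1 : ‖J‖ ≤ K * K * B * (r * r') ^ m * N := by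
    rw [hN, ← integral_const_mul]
    refine norm_integral_le_of_norm_le (hPi.const_mul _) (Filter.Eventually.of_forall fun ξ => ?_)
    rw [norm_mul, ex_norm, one_mul, Complex.norm_real, Real.norm_eq_abs]
    exact hQle2 ξ
  have hJ2 : S * ‖J‖ * dist y y' ^ m ≤ K * K * L * (r * r') ^ m * N := by
    have h3 := radial_avg _ hQi hQr (y' - y)
    have h4 : S * ‖J‖ = ‖∫ ξ, ((phi d (2 * Real.pi * (‖y' - y‖ * ‖ξ‖)) : ℝ) : ℂ) * ((Q ξ : ℝ) : ℂ)‖ := by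
      rw [← h3, norm_mul, Complex.norm_real, Real.norm_of_nonneg hS0]
    have h5 : S * ‖J‖ * dist y y' ^ m = ‖∫ ξ, ((dist y y' ^ m : ℝ) : ℂ) *
        (((phi d (2 * Real.pi * (‖y' - y‖ * ‖ξ‖)) : ℝ) : ℂ) * ((Q ξ : ℝ) : ℂ))‖ := by
      rw [integral_const_mul, norm_mul, Complex.norm_real, Real.norm_of_nonneg (by positivity), h4, mul_comm]
    rw [h5, hN, ← integral_const_mul]
    refine norm_integral_le_of_norm_le (hPi.const_mul _) (Filter.Eventually.of_forall fun ξ => ?_)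
    rw [norm_mul, norm_mul, Complex.norm_real, Complex.norm_real, Complex.norm_real,
      Real.norm_of_nonneg (by positivity), Real.norm_eq_abs, Real.norm_eq_abs, ← dist_eq_norm, dist_comm y' y]
    have h6 := hL (dist y y') dist_nonneg ξ
    calc dist y y' ^ m * (|phi d (2 * Real.pi * (dist y y' * ‖ξ‖))| * |Q ξ|)
        ≤ dist y y' ^ m * (|phi d (2 * Real.pi * (dist y y' * ‖ξ‖))| *
            (K * K * (r * r') ^ m * ‖𝓕 ψ₀ ξ‖ ^ 2)) := by have := hQle ξ; gcongr
      _ = K * K * (r * r') ^ m * ‖𝓕 ψ₀ ξ‖ * (|phi d (2 * Real.pi * (dist y y' * ‖ξ‖))| * ‖𝓕 ψ₀ ξ‖ * dist y y' ^ m) := by ring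
      _ ≤ K * K * (r * r') ^ m * ‖𝓕 ψ₀ ξ‖ * L := by gcongr
      _ = _ := by ring
  have hJ3 : ‖J‖ * dist y y' ^ m ≤ K * K * L * (r * r') ^ m * N / S := by
    rcases hS0.eq_or_lt with h | h
    · have hphi : ∀ t, phi d t = 0 := by
        intro t
        have := phi_bound d t
        rw [← hS, ← h] at this
        exact abs_nonpos_iff.mp this
      have : J = 0 := by
        rw [hJ]
        simp [hQ, sym, hphi]
      rw [this, ← h]; simp
    · rw [le_div_iff₀ h]; linarith
  have h7 : (1 + dist y y') ^ m ≤ 2 ^ m * (1 + dist y y' ^ m) := by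
    have hd0 : 0 ≤ dist y y' := dist_nonneg
    have hp : 0 ≤ dist y y' ^ m := by positivity
    rcases le_total (dist y y') 1 with h | h
    · calc (1 + dist y y') ^ m ≤ 2 ^ m := Real.rpow_le_rpow (by positivity) (by linarith) hm0
        _ ≤ _ := le_mul_of_one_le_right (by positivity) (by linarith)
    · calc (1 + dist y y') ^ m ≤ (2 * dist y y') ^ m := Real.rpow_le_rpow (by positivity) (by linarith) hm0
        _ = 2 ^ m * dist y y' ^ m := Real.mul_rpow (by norm_num) hd0
        _ ≤ _ := by gcongr; linarith
  calc ‖J‖ * (1 + dist y y') ^ m ≤ ‖J‖ * (2 ^ m * (1 + dist y y' ^ m)) := by gcongr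
    _ = 2 ^ m * (‖J‖ + ‖J‖ * dist y y' ^ m) := by ring
    _ ≤ 2 ^ m * (K * K * B * (r * r') ^ m * N + K * K * L * (r * r') ^ m * N / S) := by gcongr
    _ = _ := by ring

lemma inner_zero (hψ : Admissible d ψ₀) (y y' : Ed d) (r r' : ℝ)
    (h : ∫ x, (starRingEnd ℂ) (Fyr d ψ₀ y r x) * Fyr d ψ₀ y' r' x ≠ 0) :
    |r - r'| ≤ dist y y' + 2 / 5 ∧ dist y y' ≤ r + r' + 2 / 5 := by
  have : ∃ x, (starRingEnd ℂ) (Fyr d ψ₀ y r x) * Fyr d ψ₀ y' r' x ≠ 0 := by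
    by_contra! h2
    exact h (by simp [h2])
  obtain ⟨x, hx⟩ := this
  have h1 : Fyr d ψ₀ y r x ≠ 0 := fun h => left_ne_zero_of_mul hx (by simp [h])
  have h2 : Fyr d ψ₀ y' r' x ≠ 0 := right_ne_zero_of_mul hx
  have h3 := abs_le.mp (F_supp hψ y r x h1)
  have h4 := abs_le.mp (F_supp hψ y' r' x h2)
  rw [← dist_eq_norm] at h3 h4
  have t1 := dist_triangle_left y y' x
  have t2 := dist_triangle x y y'
  have t3 := dist_triangle x y' y
  rw [dist_comm y' y] at t3
  refine ⟨abs_le.mpr ⟨by linarith, by linarith⟩, by linarith⟩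

end

section
variable {d : ℕ} {ψ₀ : Ed d → ℂ}

lemma integral_conj_mul_self (f : Ed d → ℂ) :
    ∫ x, (starRingEnd ℂ) (f x) * f x = ((∫ x, ‖f x‖ ^ 2 : ℝ) : ℂ) := by
  rw [← integral_complex_ofReal]
  congr 1
  funext x
  rw [Complex.conj_mul']; push_cast; rfl

lemma plancherel (f : Ed d → ℂ) (hf : Integrable f) (hfc : Continuous f)
    (hf' : Integrable (𝓕 f)) : ∫ x, ‖f x‖ ^ 2 = ∫ ξ, ‖𝓕 f ξ‖ ^ 2 := by
  have := parseval f f hf hf hfc hf'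
  rw [integral_conj_mul_self, integral_conj_mul_self] at this
  exact_mod_cast this

lemma fourier_sum (Y : Finset (Ed d)) (g : Ed d → Ed d → ℂ) (c : Ed d → ℂ)
    (hg : ∀ y ∈ Y, Integrable (g y)) (ξ : Ed d) :
    𝓕 (fun x => ∑ y ∈ Y, c y * g y x) ξ = ∑ y ∈ Y, c y * 𝓕 (g y) ξ := by
  rw [fourier_ex]
  simp_rw [Finset.mul_sum]
  have hexl : Continuous (fun v : Ed d => ex v ξ) := by
    unfold ex; fun_prop
  rw [integral_finsetSum]
  · refine Finset.sum_congr rfl fun y _ => ?_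
    rw [fourier_ex, ← integral_const_mul]
    congr 1
    funext x
    ring
  · intro y hy
    refine Integrable.bdd_mul (c := 1) ((hg y hy).const_mul (c y)) hexl.aestronglyMeasurable ?_
    exact Filter.Eventually.of_forall fun q => by rw [ex_norm]

lemma fourier_translate (f : Ed d → ℂ) (y ξ : Ed d) :
    𝓕 (fun x => f (x - y)) ξ = ex y ξ * 𝓕 f ξ := by
  rw [fourier_ex, fourier_ex, ← integral_const_mul,
    ← integral_add_right_eq_self (μ := (volume : Measure (Ed d))) _ y]
  congr 1
  funext x
  rw [ex_add, add_sub_cancel_right]; ring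

lemma fixed_r_bound [NeZero d] (hd : 4 ≤ d) (hψ : Admissible d ψ₀) : ∃ K, 0 ≤ K ∧
    ∀ r, 0 < r → ∀ Y : Finset (Ed d), (∀ y ∈ Y, ∀ y' ∈ Y, y ≠ y' → 1 ≤ dist y y') → ∀ c : Ed d → ℂ,
      ∫ x, ‖∑ y ∈ Y, c y * Fyr d ψ₀ y r x‖ ^ 2 ≤ K * r ^ (d - 1) * ∑ y ∈ Y, ‖c y‖ ^ 2 := by
  obtain ⟨K, hK0, hK⟩ := symP_bound hd hψ
  refine ⟨K ^ 2 * ∫ x, ‖ψ₀ x‖ ^ 2, by positivity, fun r hr Y hY c => ?_⟩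
  have hr2 : r ^ (d - 1) = (r ^ (((d : ℝ) - 1) / 2)) ^ 2 := by
    rw [sq, ← Real.rpow_add hr, ← Real.rpow_natCast]
    congr 1
    rw [Nat.cast_sub (by omega)]; push_cast; ring
  have hFi := fun y => F_integrable (by omega) hψ y r hr
  have hFc := fun y => F_cont (by omega) hψ y r hr
  have hFF := fun y => FF_integrable hd hψ y r hr
  have hpi : ∀ y : Ed d, Integrable (fun x => ψ₀ (x - y)) := fun y => (psi0_integrable hψ).comp_sub_right y
  have hpc := psi0_cont hψ
  set g : Ed d → ℂ := fun x => ∑ y ∈ Y, c y * ψ₀ (x - y) with hg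
  have hFg : ∀ ξ, 𝓕 g ξ = ∑ y ∈ Y, c y * (ex y ξ * 𝓕 ψ₀ ξ) := by
    intro ξ
    rw [hg, fourier_sum Y (fun y x => ψ₀ (x - y)) c (fun y _ => hpi y)]
    refine Finset.sum_congr rfl fun y _ => ?_
    rw [fourier_translate]
  have hFgi : Integrable (𝓕 g) := by
    have : 𝓕 g = fun ξ => ∑ y ∈ Y, c y * (ex y ξ * 𝓕 ψ₀ ξ) := funext hFg
    rw [this]
    refine integrable_finsetSum _ fun y _ => Integrable.const_mul ?_ _
    refine Integrable.bdd_mul (c := 1) (P_integrable hψ) (ex_cont_right y).aestronglyMeasurable ?_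
    exact Filter.Eventually.of_forall fun q => by rw [ex_norm]
  have hgi : Integrable g := integrable_finsetSum _ fun y _ => (hpi y).const_mul _
  have hgc : Continuous g := by rw [hg]; fun_prop
  have hgcs : ∀ x, ‖g x‖ ^ 2 ≤ ∑ y ∈ Y, ‖c y‖ ^ 2 * ‖ψ₀ (x - y)‖ ^ 2 := by
    intro x
    by_cases h : ∃ y ∈ Y, ψ₀ (x - y) ≠ 0
    · obtain ⟨y, hy, hne⟩ := h
      have : g x = c y * ψ₀ (x - y) := by
        rw [hg]
        refine Finset.sum_eq_single_of_mem y hy fun y' hy' hyy => ?_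
        by_contra h2
        have h3 := hψ.2.1 _ (right_ne_zero_of_mul h2)
        have h4 := hψ.2.1 _ hne
        have h5 := hY y hy y' hy' hyy.symm
        rw [← dist_eq_norm] at h3 h4
        have := dist_triangle_left y y' x
        linarith
      rw [this, norm_mul, mul_pow]
      exact Finset.single_le_sum (f := fun y => ‖c y‖ ^ 2 * ‖ψ₀ (x - y)‖ ^ 2) (fun _ _ => by positivity) hy
    · push Not at h
      have : g x = 0 := Finset.sum_eq_zero fun y hy => by rw [h y hy, mul_zero]
      rw [this]; simp; positivity
  have hp2 : Integrable (fun x => ‖ψ₀ x‖ ^ 2) := by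
    refine Continuous.integrable_of_hasCompactSupport (by fun_prop) ?_
    exact (psi0_compact hψ).comp_left (g := fun z : ℂ => ‖z‖ ^ 2) (by simp)
  have hgint : ∫ x, ‖g x‖ ^ 2 ≤ (∫ x, ‖ψ₀ x‖ ^ 2) * ∑ y ∈ Y, ‖c y‖ ^ 2 := by
    calc ∫ x, ‖g x‖ ^ 2 ≤ ∫ x, ∑ y ∈ Y, ‖c y‖ ^ 2 * ‖ψ₀ (x - y)‖ ^ 2 := by
          refine integral_mono_of_nonneg (Filter.Eventually.of_forall fun x => by positivity) ?_
            (Filter.Eventually.of_forall hgcs)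
          exact integrable_finsetSum _ fun y _ => (hp2.comp_sub_right y).const_mul _
      _ = ∑ y ∈ Y, ‖c y‖ ^ 2 * ∫ x, ‖ψ₀ x‖ ^ 2 := by
          rw [integral_finsetSum _ fun y _ => (hp2.comp_sub_right y).const_mul _]
          refine Finset.sum_congr rfl fun y _ => ?_
          rw [integral_const_mul, integral_sub_right_eq_self (fun x => ‖ψ₀ x‖ ^ 2) y]
      _ = _ := by rw [← Finset.sum_mul, mul_comm]
  have hG : ∀ ξ, 𝓕 (fun x => ∑ y ∈ Y, c y * Fyr d ψ₀ y r x) ξ = (sym d r ξ : ℂ) * 𝓕 ψ₀ ξ * 𝓕 g ξ := by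
    intro ξ
    rw [fourier_sum Y (fun y x => Fyr d ψ₀ y r x) c (fun y _ => hFi y), hFg, Finset.mul_sum]
    refine Finset.sum_congr rfl fun y _ => ?_
    have := F_fourier hψ y r hr ξ
    rw [this, sym]; ring
  have hGle : ∀ ξ, ‖𝓕 (fun x => ∑ y ∈ Y, c y * Fyr d ψ₀ y r x) ξ‖ ^ 2 ≤ K ^ 2 * r ^ (d - 1) * ‖𝓕 g ξ‖ ^ 2 := by
    intro ξ
    rw [hG, hr2, ← mul_pow, ← mul_pow, norm_mul, norm_mul, Complex.norm_real, Real.norm_eq_abs]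
    have := hK r hr ξ
    gcongr
  have hg2i : Integrable (fun ξ => ‖𝓕 g ξ‖ ^ 2) := by
    have hbd : ∃ M, ∀ ξ, ‖𝓕 g ξ‖ ≤ M := by
      refine ⟨∫ x, ‖g x‖, fun ξ => ?_⟩
      rw [fourier_ex]
      refine (norm_integral_le_integral_norm _).trans (le_of_eq ?_)
      congr 1; funext x; rw [norm_mul, ex_norm, one_mul]
    obtain ⟨M, hM⟩ := hbd
    refine Integrable.mono' (hFgi.norm.const_mul M) (by
      have := hFgi.aestronglyMeasurable.norm
      exact this.pow 2) (Filter.Eventually.of_forall fun ξ => ?_)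
    rw [Real.norm_of_nonneg (by positivity), sq]
    exact mul_le_mul_of_nonneg_right (hM ξ) (norm_nonneg _)
  rw [plancherel]
  · calc ∫ ξ, ‖𝓕 (fun x => ∑ y ∈ Y, c y * Fyr d ψ₀ y r x) ξ‖ ^ 2
        ≤ ∫ ξ, K ^ 2 * r ^ (d - 1) * ‖𝓕 g ξ‖ ^ 2 :=
          integral_mono_of_nonneg (Filter.Eventually.of_forall fun x => by positivity)
            (hg2i.const_mul _) (Filter.Eventually.of_forall hGle)
      _ = K ^ 2 * r ^ (d - 1) * ∫ x, ‖g x‖ ^ 2 := by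
          rw [integral_const_mul, plancherel g hgi hgc hFgi]
      _ ≤ K ^ 2 * r ^ (d - 1) * ((∫ x, ‖ψ₀ x‖ ^ 2) * ∑ y ∈ Y, ‖c y‖ ^ 2) := by gcongr
      _ = _ := by ring
  · exact integrable_finsetSum _ fun y _ => (hFi y).const_mul _
  · exact continuous_finsetSum _ fun y _ => (hFc y).const_mul _
  · have : 𝓕 (fun x => ∑ y ∈ Y, c y * Fyr d ψ₀ y r x) = fun ξ => ∑ y ∈ Y, c y * 𝓕 (Fyr d ψ₀ y r) ξ :=
      funext fun ξ => fourier_sum Y (fun y x => Fyr d ψ₀ y r x) c (fun y _ => hFi y) ξ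
    rw [this]
    exact integrable_finsetSum _ fun y _ => (hFF y).const_mul _

/-- the abstract `L²` setting -/
lemma L2_setting (hd : 4 ≤ d) (hψ : Admissible d ψ₀) : ∃ K : ℝ, 0 ≤ K ∧
    ∃ f : Ed d × ℝ → Lp ℂ 2 (volume : Measure (Ed d)),
      (∀ e e', 1 ≤ e.2 → 1 ≤ e'.2 → ‖inner ℂ (f e) (f e')‖ * (1 + dist e.1 e'.1) ^ (((d : ℝ) - 1) / 2) ≤
        K * (e.2 * e'.2) ^ (((d : ℝ) - 1) / 2)) ∧
      (∀ e e', 1 ≤ e.2 → 1 ≤ e'.2 → inner ℂ (f e) (f e') ≠ 0 → |e.2 - e'.2| ≤ dist e.1 e'.1 + 2 / 5 ∧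
        dist e.1 e'.1 ≤ e.2 + e'.2 + 2 / 5) ∧
      (∀ r, 1 ≤ r → ∀ Y : Finset (Ed d), (∀ y ∈ Y, ∀ y' ∈ Y, y ≠ y' → 1 ≤ dist y y') → ∀ c : Ed d → ℂ,
        ‖∑ y ∈ Y, c y • f (y, r)‖ ^ 2 ≤ K * r ^ (d - 1) * ∑ y ∈ Y, ‖c y‖ ^ 2) ∧
      (∀ A : Finset (Ed d × ℝ), (∀ e ∈ A, 1 ≤ e.2) → ∀ c : Ed d × ℝ → ℂ,
        eLpNorm (fun x => ∑ e ∈ A, c e * Fyr d ψ₀ e.1 e.2 x) 2 volume =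
          ENNReal.ofReal ‖∑ e ∈ A, c e • f e‖) := by
  have : NeZero d := ⟨by omega⟩
  obtain ⟨K1, hK10, hK1⟩ := inner_bound hd hψ
  obtain ⟨K2, hK20, hK2⟩ := fixed_r_bound hd hψ
  have hmem : ∀ y r, 0 < r → MemLp (Fyr d ψ₀ y r) 2 volume := fun y r hr => F_memLp (by omega) hψ y r hr 2
  have hpos : ∀ {r : ℝ}, 1 ≤ r → 0 < r := fun h => by linarith
  set f : Ed d × ℝ → Lp ℂ 2 (volume : Measure (Ed d)) := fun e =>
    if h : 0 < e.2 then (hmem e.1 e.2 h).toLp _ else 0 with hf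
  have hfe : ∀ e, 1 ≤ e.2 → (f e : Ed d → ℂ) =ᵐ[volume] Fyr d ψ₀ e.1 e.2 := by
    intro e he
    simp only [hf, dif_pos (hpos he)]
    exact MemLp.coeFn_toLp _
  have hin : ∀ e e', 1 ≤ e.2 → 1 ≤ e'.2 → inner ℂ (f e) (f e') =
      ∫ x, (starRingEnd ℂ) (Fyr d ψ₀ e.1 e.2 x) * Fyr d ψ₀ e'.1 e'.2 x := by
    intro e e' he he'
    rw [L2.inner_def]
    refine integral_congr_ae ?_
    filter_upwards [hfe e he, hfe e' he'] with x h1 h2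
    rw [h1, h2, RCLike.inner_apply, mul_comm]
  have hsum : ∀ A : Finset (Ed d × ℝ), (∀ e ∈ A, 1 ≤ e.2) → ∀ c : Ed d × ℝ → ℂ,
      ((∑ e ∈ A, c e • f e : Lp ℂ 2 (volume : Measure (Ed d))) : Ed d → ℂ) =ᵐ[volume]
        fun x => ∑ e ∈ A, c e * Fyr d ψ₀ e.1 e.2 x := by
    intro A hA c
    classical
    induction A using Finset.induction_on with
    | empty => simp only [Finset.sum_empty]; exact Lp.coeFn_zero _ _ _
    | insert e A he ih =>
      rw [Finset.sum_insert he]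
      filter_upwards [ih (fun e' he' => hA e' (Finset.mem_insert_of_mem he')),
        Lp.coeFn_add (c e • f e) (∑ e ∈ A, c e • f e), Lp.coeFn_smul (c e) (f e),
        hfe e (hA e (Finset.mem_insert_self _ _))] with x h1 h2 h3 h4
      rw [h2, Pi.add_apply, h1, h3, Pi.smul_apply, h4, Finset.sum_insert he, smul_eq_mul]
  have hnorm : ∀ A : Finset (Ed d × ℝ), (∀ e ∈ A, 1 ≤ e.2) → ∀ c : Ed d × ℝ → ℂ,
        eLpNorm (fun x => ∑ e ∈ A, c e * Fyr d ψ₀ e.1 e.2 x) 2 volume =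
          ENNReal.ofReal ‖∑ e ∈ A, c e • f e‖ := by
    intro A hA c
    rw [← eLpNorm_congr_ae (hsum A hA c), Lp.norm_def, ENNReal.ofReal_toReal (Lp.eLpNorm_ne_top _)]
  refine ⟨max K1 K2, le_max_of_le_left hK10, f, ?_, ?_, ?_, hnorm⟩
  · intro e e' he he'
    rw [hin e e' he he']
    refine (hK1 e.1 e'.1 e.2 e'.2 (hpos he) (hpos he')).trans ?_
    have := hpos he
    have := hpos he'
    gcongr
    exact le_max_left _ _
  · intro e e' he he' h
    rw [hin e e' he he'] at h
    exact inner_zero hψ _ _ _ _ h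
  · intro r hr Y hY c
    classical
    have h1 : ∑ y ∈ Y, c y • f (y, r) = ∑ e ∈ Y.image (fun y => (y, r)), c e.1 • f e := by
      rw [Finset.sum_image]
      intro a _ b _ h; exact (Prod.mk.inj h).1
    have h2 := hsum (Y.image (fun y => (y, r))) (by
      intro e he
      obtain ⟨y, _, rfl⟩ := Finset.mem_image.mp he
      exact hr) (fun e => c e.1)
    have h3 : ‖∑ y ∈ Y, c y • f (y, r)‖ ^ 2 = ∫ x, ‖∑ y ∈ Y, c y * Fyr d ψ₀ y r x‖ ^ 2 := by
      rw [h1]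
      have h4 := inner_self_eq_norm_sq_to_K (𝕜 := ℂ) (∑ e ∈ Y.image (fun y => (y, r)), c e.1 • f e)
      rw [L2.inner_def] at h4
      have h5 : ∫ x, inner ℂ ((∑ e ∈ Y.image (fun y => (y, r)), c e.1 • f e : Lp ℂ 2 (volume : Measure (Ed d))) x)
          ((∑ e ∈ Y.image (fun y => (y, r)), c e.1 • f e : Lp ℂ 2 (volume : Measure (Ed d))) x) =
          ((∫ x, ‖∑ y ∈ Y, c y * Fyr d ψ₀ y r x‖ ^ 2 : ℝ) : ℂ) := by
        rw [← integral_conj_mul_self]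
        refine integral_congr_ae ?_
        filter_upwards [h2] with x hx
        rw [hx, RCLike.inner_apply, mul_comm]
        rw [Finset.sum_image (by intro a _ b _ h; exact (Prod.mk.inj h).1)]
      rw [h5] at h4
      refine Complex.ofReal_injective ?_
      rw [h4, Complex.ofReal_pow]
      rfl
    rw [h3]
    refine (hK2 r (hpos hr) Y hY c).trans ?_
    have := hpos hr
    gcongr
    exact le_max_right _ _

end

/-- dyadic scale of `e = (y, r)` -/
def kap {d : ℕ} (e : Ed d × ℝ) : ℕ := Nat.log 2 ⌊e.2⌋₊

lemma kap_spec {d : ℕ} (e : Ed d × ℝ) (he : 1 ≤ e.2) :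
    (2 : ℝ) ^ kap e ≤ e.2 ∧ e.2 < 2 ^ (kap e + 1) := by
  have h0 : ⌊e.2⌋₊ ≠ 0 := (Nat.floor_pos.mpr he).ne'
  constructor
  · have h1 := Nat.pow_log_le_self 2 h0
    calc (2 : ℝ) ^ kap e = ((2 ^ Nat.log 2 ⌊e.2⌋₊ : ℕ) : ℝ) := by push_cast; rfl
      _ ≤ (⌊e.2⌋₊ : ℝ) := by exact_mod_cast h1
      _ ≤ e.2 := Nat.floor_le (by linarith)
  · have h1 := Nat.lt_pow_succ_log_self (b := 2) (by norm_num) ⌊e.2⌋₊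
    have h2 : ⌊e.2⌋₊ + 1 ≤ 2 ^ (kap e + 1) := h1
    calc e.2 < ⌊e.2⌋₊ + 1 := Nat.lt_floor_add_one _
      _ ≤ _ := by exact_mod_cast h2

/-- separation -/
def SepA {d : ℕ} (A : Finset (Ed d × ℝ)) : Prop :=
  (∀ e ∈ A, 1 ≤ e.2) ∧ (∀ e ∈ A, ∀ e' ∈ A, e.1 ≠ e'.1 → 1 ≤ dist e.1 e'.1) ∧
  (∀ e ∈ A, ∀ e' ∈ A, e.2 ≠ e'.2 → 1 ≤ |e.2 - e'.2|)

lemma SepA.mono {d : ℕ} {A B : Finset (Ed d × ℝ)} (hA : SepA A) (h : B ⊆ A) : SepA B :=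
  ⟨fun e he => hA.1 e (h he), fun e he e' he' => hA.2.1 e (h he) e' (h he'),
    fun e he e' he' => hA.2.2 e (h he) e' (h he')⟩

open Classical in
/-- density -/
def Dens {d : ℕ} (A : Finset (Ed d × ℝ)) (U : ℝ) : Prop :=
  ∀ e ∈ A, ∀ ρ : ℝ, 1 ≤ ρ → ρ ≤ 16 * 2 ^ kap e →
    ((A.filter (fun e' => kap e' = kap e ∧ dist e e' ≤ ρ)).card : ℝ) ≤ U * ρ

/-- the abstract `L²` hypotheses -/
structure L2Set (d : ℕ) (H : Type*) [NormedAddCommGroup H] [InnerProductSpace ℂ H]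
    (f : Ed d × ℝ → H) (K : ℝ) : Prop where
  hd : 4 ≤ d
  hK : 0 ≤ K
  h1 : ∀ e e', 1 ≤ e.2 → 1 ≤ e'.2 → ‖inner ℂ (f e) (f e')‖ * (1 + dist e.1 e'.1) ^ (((d : ℝ) - 1) / 2) ≤
        K * (e.2 * e'.2) ^ (((d : ℝ) - 1) / 2)
  h2 : ∀ e e', 1 ≤ e.2 → 1 ≤ e'.2 → inner ℂ (f e) (f e') ≠ 0 → |e.2 - e'.2| ≤ dist e.1 e'.1 + 2 / 5 ∧
        dist e.1 e'.1 ≤ e.2 + e'.2 + 2 / 5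
  h3 : ∀ r, 1 ≤ r → ∀ Y : Finset (Ed d), (∀ y ∈ Y, ∀ y' ∈ Y, y ≠ y' → 1 ≤ dist y y') → ∀ c : Ed d → ℂ,
        ‖∑ y ∈ Y, c y • f (y, r)‖ ^ 2 ≤ K * r ^ (d - 1) * ∑ y ∈ Y, ‖c y‖ ^ 2

open Classical in
lemma schur_near {H : Type*} [NormedAddCommGroup H] [InnerProductSpace ℂ H] {ι : Type*}
    (s : Finset ι) (v : ι → H) (near : ι → ι → Prop) (hsym : ∀ i j, near i j → near j i) (M : ℝ)
    (hM : ∀ i ∈ s, ((s.filter (fun j => near i j)).card : ℝ) ≤ M) :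
    ‖∑ i ∈ s, v i‖ ^ 2 ≤ M * ∑ i ∈ s, ‖v i‖ ^ 2 +
      ∑ i ∈ s, ∑ j ∈ s.filter (fun j => ¬ near i j), ‖inner ℂ (v i) (v j)‖ := by
  have h0 : ‖∑ i ∈ s, v i‖ ^ 2 ≤ ∑ i ∈ s, ∑ j ∈ s, ‖inner ℂ (v i) (v j)‖ := by
    have h1 : ‖∑ i ∈ s, v i‖ ^ 2 = ‖inner ℂ (∑ i ∈ s, v i) (∑ i ∈ s, v i)‖ := by
      rw [inner_self_eq_norm_sq_to_K]; simp
    rw [h1, sum_inner]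
    refine (norm_sum_le _ _).trans (Finset.sum_le_sum fun i _ => ?_)
    rw [inner_sum]
    exact norm_sum_le _ _
  have h2 : ∑ i ∈ s, ∑ j ∈ s, ‖inner ℂ (v i) (v j)‖ =
      ∑ i ∈ s, ∑ j ∈ s.filter (fun j => near i j), ‖inner ℂ (v i) (v j)‖ +
      ∑ i ∈ s, ∑ j ∈ s.filter (fun j => ¬ near i j), ‖inner ℂ (v i) (v j)‖ := by
    rw [← Finset.sum_add_distrib]
    exact Finset.sum_congr rfl fun i _ => (Finset.sum_filter_add_sum_filter_not _ _ _).symm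
  have h3 : ∑ i ∈ s, ∑ j ∈ s.filter (fun j => near i j), ‖inner ℂ (v i) (v j)‖ ≤ M * ∑ i ∈ s, ‖v i‖ ^ 2 := by
    have h4 : ∀ i j, ‖inner ℂ (v i) (v j)‖ ≤ ‖v i‖ ^ 2 / 2 + ‖v j‖ ^ 2 / 2 := by
      intro i j
      have := norm_inner_le_norm (𝕜 := ℂ) (v i) (v j)
      nlinarith [sq_nonneg (‖v i‖ - ‖v j‖)]
    have h5 : ∑ i ∈ s, ∑ j ∈ s.filter (fun j => near i j), ‖v i‖ ^ 2 / 2 ≤ M * (∑ i ∈ s, ‖v i‖ ^ 2) / 2 := by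
      rw [Finset.mul_sum, Finset.sum_div]
      refine Finset.sum_le_sum fun i hi => ?_
      rw [Finset.sum_const, nsmul_eq_mul]
      have := hM i hi
      rw [mul_div_assoc]
      gcongr
    have h6 : ∑ i ∈ s, ∑ j ∈ s.filter (fun j => near i j), ‖v j‖ ^ 2 / 2 =
        ∑ i ∈ s, ∑ j ∈ s.filter (fun j => near i j), ‖v i‖ ^ 2 / 2 := by
      simp_rw [Finset.sum_filter]
      rw [Finset.sum_comm]
      refine Finset.sum_congr rfl fun i _ => Finset.sum_congr rfl fun j _ => ?_
      have : near j i ↔ near i j := ⟨hsym _ _, hsym _ _⟩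
      simp only [this]
    calc _ ≤ ∑ i ∈ s, ∑ j ∈ s.filter (fun j => near i j), (‖v i‖ ^ 2 / 2 + ‖v j‖ ^ 2 / 2) :=
          Finset.sum_le_sum fun i _ => Finset.sum_le_sum fun j _ => h4 i j
      _ = ∑ i ∈ s, ∑ j ∈ s.filter (fun j => near i j), ‖v i‖ ^ 2 / 2 +
          ∑ i ∈ s, ∑ j ∈ s.filter (fun j => near i j), ‖v j‖ ^ 2 / 2 := by
          simp_rw [Finset.sum_add_distrib]
      _ ≤ _ := by rw [h6]; linarith
  linarith

lemma geom_half (N : ℕ) : ∑ l ∈ Finset.range N, ((2 : ℝ) ^ (-(1 / 2) : ℝ)) ^ l ≤ 4 := by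
  set q := (2 : ℝ) ^ (-(1 / 2) : ℝ) with hq
  have hq0 : 0 < q := by positivity
  have hq2 : q ^ 2 = 1 / 2 := by
    rw [hq, ← Real.rpow_natCast, ← Real.rpow_mul (by norm_num)]
    norm_num
  have hq1 : q ≤ 3 / 4 := by nlinarith

  have h2 := Finset.sum_nonneg (s := Finset.range N) (f := fun l => q ^ l) (fun l _ => by positivity)
  have h3 := mul_neg_geom_sum q N
  have h4 : 0 ≤ q ^ N := by positivity
  nlinarith

open Classical in
lemma dyadic_sum {ι : Type*} (T : Finset ι) (D : ι → ℝ) (U L R m : ℝ) (hL : 1 ≤ L) (hm : 3 / 2 ≤ m)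
    (hU : 0 ≤ U) (hc : ∀ ρ : ℝ, 1 ≤ ρ → ρ ≤ R → ((T.filter (fun t => D t ≤ ρ)).card : ℝ) ≤ U * ρ)
    (hD : ∀ t ∈ T, L < D t ∧ 2 * D t ≤ R) :
    ∑ t ∈ T, D t ^ (-m) ≤ 8 * U * L ^ (1 - m) := by
  have hL0 : 0 < L := by linarith
  have hex : ∀ t ∈ T, ∃ l : ℕ, 2 ^ l * L < D t ∧ D t ≤ 2 ^ (l + 1) * L := by
    intro t ht
    have h1 := (hD t ht).1
    have hex : ∃ n : ℕ, D t ≤ 2 ^ n * L := by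
      obtain ⟨n, hn⟩ := pow_unbounded_of_one_lt (D t) (by norm_num : (1 : ℝ) < 2)
      exact ⟨n, by nlinarith [pow_pos (by norm_num : (0 : ℝ) < 2) n]⟩
    have hn0 : Nat.find hex ≠ 0 := by
      intro h
      have := Nat.find_spec hex
      rw [h] at this; linarith
    obtain ⟨l, hl⟩ := Nat.exists_eq_succ_of_ne_zero hn0
    refine ⟨l, ?_, ?_⟩
    · have := Nat.find_min hex (m := l) (by omega)
      linarith
    · have := Nat.find_spec hex
      rw [hl] at this; exact this
  choose! l hl1 hl2 using hex
  set N := T.sup l + 1 with hN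
  have hlN : ∀ t ∈ T, l t ∈ Finset.range N := fun t ht => by
    rw [Finset.mem_range, hN]; exact Nat.lt_succ_of_le (Finset.le_sup ht)
  rw [← Finset.sum_fiberwise_of_maps_to hlN]
  have hterm : ∀ n ∈ Finset.range N, ∑ t ∈ T.filter (fun t => l t = n), D t ^ (-m) ≤
      2 * U * L ^ (1 - m) * ((2 : ℝ) ^ (-(1 / 2) : ℝ)) ^ n := by
    intro n _
    by_cases hne : ∃ t ∈ T, l t = n
    · obtain ⟨t0, ht0, hlt0⟩ := hne
      have hb : 2 ^ (n + 1) * L ≤ R := by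
        have h1 := hl1 t0 ht0
        have h2 := (hD t0 ht0).2
        rw [hlt0] at h1
        rw [pow_succ]; linarith
      have hb1 : 1 ≤ 2 ^ (n + 1) * L := by
        have : (1 : ℝ) ≤ 2 ^ (n + 1) := one_le_pow₀ (by norm_num)
        nlinarith
      have hcard := hc _ hb1 hb
      have hsub : (((T.filter (fun t => l t = n)).card : ℕ) : ℝ) ≤ U * (2 ^ (n + 1) * L) := by
        refine le_trans ?_ hcard
        exact Nat.cast_le.mpr <| Finset.card_le_card (by
          intro t ht
          rw [Finset.mem_filter] at ht ⊢
          refine ⟨ht.1, ?_⟩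
          have := hl2 t ht.1
          rw [ht.2] at this; exact this)
      calc ∑ t ∈ T.filter (fun t => l t = n), D t ^ (-m)
          ≤ ∑ t ∈ T.filter (fun t => l t = n), (2 ^ n * L) ^ (-m) := by
            refine Finset.sum_le_sum fun t ht => ?_
            rw [Finset.mem_filter] at ht
            have h1 := hl1 t ht.1
            rw [ht.2] at h1
            exact Real.rpow_le_rpow_of_nonpos (by positivity) h1.le (by linarith)
        _ = ((T.filter (fun t => l t = n)).card : ℝ) * (2 ^ n * L) ^ (-m) := by
            rw [Finset.sum_const, nsmul_eq_mul]
        _ ≤ U * (2 ^ (n + 1) * L) * (2 ^ n * L) ^ (-m) := by gcongr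
        _ = 2 * U * ((2 ^ n * L) ^ (1 : ℝ) * (2 ^ n * L) ^ (-m)) := by rw [Real.rpow_one]; ring
        _ = 2 * U * (2 ^ n * L) ^ (1 - m) := by
            rw [← Real.rpow_add (by positivity)]; rfl
        _ = 2 * U * L ^ (1 - m) * ((2 : ℝ) ^ n) ^ (1 - m) := by
            rw [Real.mul_rpow (by positivity) hL0.le]; ring
        _ ≤ 2 * U * L ^ (1 - m) * ((2 : ℝ) ^ n) ^ (-(1 / 2) : ℝ) := by
            gcongr
            · exact one_le_pow₀ (by norm_num)
            · linarith
        _ = _ := by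
            congr 1
            rw [← Real.rpow_natCast, ← Real.rpow_natCast, ← Real.rpow_mul (by norm_num),
              ← Real.rpow_mul (by norm_num), mul_comm]
    · push Not at hne
      rw [Finset.filter_false_of_mem (by intro t ht; exact hne t ht), Finset.sum_empty]
      positivity
  refine (Finset.sum_le_sum hterm).trans ?_
  rw [← Finset.mul_sum]
  have := geom_half N
  have h0 : 0 ≤ 2 * U * L ^ (1 - m) := by positivity
  nlinarith

open Classical in
lemma count_reals (S : Finset ℝ) (hS : ∀ r ∈ S, ∀ r' ∈ S, r ≠ r' → 1 ≤ |r - r'|) (r L : ℝ) (hL : 0 ≤ L) :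
    ((S.filter (fun r' => |r - r'| ≤ L)).card : ℝ) ≤ 2 * L + 1 := by
  have h1 : (S.filter (fun r' => |r - r'| ≤ L)).card ≤ (Finset.range (⌊2 * L⌋₊ + 1)).card := by
    refine Finset.card_le_card_of_injOn (fun r' => ⌊r' - (r - L)⌋₊) ?_ ?_
    · intro r' hr'
      have h := abs_le.mp (Finset.mem_filter.mp hr').2
      simp only [Finset.coe_range, mem_Iio]
      exact Nat.lt_succ_of_le (Nat.floor_le_floor (by linarith [h.1]))
    · intro a ha b hb hab
      have h := abs_le.mp (Finset.mem_filter.mp ha).2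
      have h' := abs_le.mp (Finset.mem_filter.mp hb).2
      by_contra hne
      have h3 := hS a (Finset.mem_filter.mp ha).1 b (Finset.mem_filter.mp hb).1 hne
      simp only at hab
      have f1 := Nat.floor_le (a := a - (r - L)) (by linarith [h.2])
      have f2 := Nat.floor_le (a := b - (r - L)) (by linarith [h'.2])
      have f3 := Nat.lt_floor_add_one (a - (r - L))
      have f4 := Nat.lt_floor_add_one (b - (r - L))
      rw [hab] at f1 f3
      have : |a - b| < 1 := abs_lt.mpr ⟨by linarith, by linarith⟩
      linarith
  rw [Finset.card_range] at h1
  have h2 := Nat.floor_le (a := 2 * L) (by linarith)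
  have h3 : ((S.filter (fun r' => |r - r'| ≤ L)).card : ℝ) ≤ ⌊2 * L⌋₊ + 1 := by exact_mod_cast h1
  linarith

open Classical in
lemma fiber_far {α β : Type*} (A : Finset α) (π : α → β) (P : β → Prop) (g : α → ℝ) :
    ∑ b ∈ (A.image π).filter P, ∑ a ∈ A.filter (fun a => π a = b), g a =
      ∑ a ∈ A.filter (fun a => P (π a)), g a := by
  rw [← Finset.sum_fiberwise_of_maps_to (s := A.filter (fun a => P (π a))) (t := (A.image π).filter P) (g := π)]
  · refine Finset.sum_congr rfl fun b hb => ?_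
    rw [Finset.filter_filter]
    refine Finset.sum_congr ?_ fun _ _ => rfl
    refine Finset.filter_congr fun a _ => ?_
    constructor
    · intro h; exact ⟨by rw [h]; exact (Finset.mem_filter.mp hb).2, h⟩
    · exact fun h => h.2
  · intro a ha
    rw [Finset.mem_filter] at ha ⊢
    exact ⟨Finset.mem_image_of_mem _ ha.1, ha.2⟩

lemma inner_sum_le {H : Type*} [NormedAddCommGroup H] [InnerProductSpace ℂ H] {α : Type*}
    (s t : Finset α) (f : α → H) (c : α → ℂ) (hc : ∀ a, ‖c a‖ ≤ 1) :
    ‖inner ℂ (∑ a ∈ s, c a • f a) (∑ a ∈ t, c a • f a)‖ ≤ ∑ a ∈ s, ∑ b ∈ t, ‖inner ℂ (f a) (f b)‖ := by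
  rw [sum_inner]
  refine (norm_sum_le _ _).trans (Finset.sum_le_sum fun i _ => ?_)
  rw [inner_sum]
  refine (norm_sum_le _ _).trans (Finset.sum_le_sum fun j _ => ?_)
  rw [inner_smul_left, inner_smul_right, norm_mul, norm_mul, RCLike.norm_conj]
  have h1 := hc i
  have h2 := hc j
  calc ‖c i‖ * (‖c j‖ * ‖inner ℂ (f i) (f j)‖) ≤ 1 * (1 * ‖inner ℂ (f i) (f j)‖) := by gcongr
    _ = _ := by ring

open Classical in
lemma grouped_schur {H : Type*} [NormedAddCommGroup H] [InnerProductSpace ℂ H] {α β : Type*}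
    (A : Finset α) (π : α → β) (f : α → H) (c : α → ℂ) (hc : ∀ a, ‖c a‖ ≤ 1)
    (near : β → β → Prop) (hsym : ∀ i j, near i j → near j i) (M : ℝ) (hM0 : 0 ≤ M)
    (hM : ∀ i ∈ A.image π, (((A.image π).filter (fun j => near i j)).card : ℝ) ≤ M)
    (N : α → ℝ) (hN : ∀ b ∈ A.image π, ‖∑ a ∈ A.filter (fun a => π a = b), c a • f a‖ ^ 2 ≤
      ∑ a ∈ A.filter (fun a => π a = b), N a) (B : ℝ)
    (hB : ∑ a ∈ A, ∑ a' ∈ A.filter (fun a' => ¬ near (π a) (π a')), ‖inner ℂ (f a) (f a')‖ ≤ B) :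
    ‖∑ a ∈ A, c a • f a‖ ^ 2 ≤ M * ∑ a ∈ A, N a + B := by
  have hmap : ∀ a ∈ A, π a ∈ A.image π := fun a ha => Finset.mem_image_of_mem _ ha
  rw [← Finset.sum_fiberwise_of_maps_to hmap, ← Finset.sum_fiberwise_of_maps_to hmap (f := N)]
  refine (schur_near (A.image π) _ near hsym M hM).trans ?_
  refine add_le_add (mul_le_mul_of_nonneg_left (Finset.sum_le_sum hN) hM0) ?_
  refine le_trans ?_ hB
  rw [← Finset.sum_fiberwise_of_maps_to hmap]
  refine Finset.sum_le_sum fun b _ => ?_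
  calc _ ≤ ∑ b' ∈ (A.image π).filter (fun b' => ¬ near b b'), ∑ a ∈ A.filter (fun a => π a = b),
        ∑ a' ∈ A.filter (fun a => π a = b'), ‖inner ℂ (f a) (f a')‖ :=
        Finset.sum_le_sum fun b' _ => inner_sum_le _ _ f c hc
    _ = ∑ a ∈ A.filter (fun a => π a = b), ∑ b' ∈ (A.image π).filter (fun b' => ¬ near b b'),
        ∑ a' ∈ A.filter (fun a => π a = b'), ‖inner ℂ (f a) (f a')‖ := Finset.sum_comm
    _ ≤ _ := by
        refine Finset.sum_le_sum fun a ha => ?_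
        have h := fiber_far A π (fun b' => ¬ near b b') (fun a' => ‖inner ℂ (f a) (f a')‖)
        rw [(Finset.mem_filter.mp ha).2]
        refine le_of_eq ?_
        convert h

lemma rpow_m {d : ℕ} (hd : 4 ≤ d) (r : ℝ) (hr : 0 < r) :
    (r * r) ^ (((d : ℝ) - 1) / 2) = r ^ (d - 1) := by
  rw [Real.mul_rpow hr.le hr.le, ← Real.rpow_add hr, ← Real.rpow_natCast]
  congr 1
  rw [Nat.cast_sub (by omega)]; push_cast; ring

open Classical in
lemma single_scale {d : ℕ} {H : Type*} [NormedAddCommGroup H] [InnerProductSpace ℂ H]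
    {f : Ed d × ℝ → H} {K : ℝ} (hS : L2Set d H f K) (A : Finset (Ed d × ℝ)) (hA : SepA A) (k : ℕ)
    (hk : ∀ e ∈ A, kap e = k) (ν : ℕ) (hdens : Dens A (2 ^ (ν + 1))) (c : Ed d × ℝ → ℂ)
    (hc : ∀ e, ‖c e‖ ≤ 1) :
    ‖∑ e ∈ A, c e • f e‖ ^ 2 ≤
      K * (3 + 16 * 2 ^ (((d : ℝ) - 1) / 2)) * 2 ^ ((ν : ℝ) / (((d : ℝ) - 1) / 2)) *
        ∑ e ∈ A, e.2 ^ (d - 1) := by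
  have hd := hS.hd
  have hK := hS.hK
  set m := ((d : ℝ) - 1) / 2 with hm
  have hm32 : 3 / 2 ≤ m := by
    have : (4 : ℝ) ≤ d := by exact_mod_cast hd
    rw [hm]; linarith
  set L := (2 : ℝ) ^ ((ν : ℝ) / m) with hL
  have hL1 : 1 ≤ L := Real.one_le_rpow (by norm_num) (by positivity)
  have hLm : L ^ (1 - m) * 2 ^ ν = L := by
    rw [hL, ← Real.rpow_mul (by norm_num), ← Real.rpow_natCast, ← Real.rpow_add (by norm_num)]
    congr 1
    field_simp
    ring
  have hpos : ∀ e ∈ A, 0 < e.2 := fun e he => by linarith [hA.1 e he]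
  have hfar : ∀ e ∈ A, ∑ e' ∈ A.filter (fun e' => ¬ |e.2 - e'.2| ≤ L), ‖inner ℂ (f e) (f e')‖ ≤
      K * (16 * 2 ^ m) * L * e.2 ^ (d - 1) := by
    intro e he
    have hep := hpos e he
    set T := A.filter (fun e' => ¬ |e.2 - e'.2| ≤ L ∧ inner ℂ (f e) (f e') ≠ 0) with hT
    have hTA : ∀ e' ∈ T, e' ∈ A ∧ L < |e.2 - e'.2| ∧ |e.2 - e'.2| ≤ dist e.1 e'.1 + 2 / 5 ∧
        dist e.1 e'.1 ≤ e.2 + e'.2 + 2 / 5 := by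
      intro e' he'
      rw [hT, Finset.mem_filter] at he'
      have := hS.h2 e e' (hA.1 e he) (hA.1 e' he'.1) he'.2.2
      exact ⟨he'.1, not_le.mp he'.2.1, this.1, this.2⟩
    have hTd : ∀ e' ∈ T, dist e e' ≤ 1 + dist e.1 e'.1 ∧ L < dist e e' ∧ 2 * dist e e' ≤ 16 * 2 ^ k := by
      intro e' he'
      obtain ⟨h1, h2, h3, h4⟩ := hTA e' he'
      have hk1 := (kap_spec e (hA.1 e he)).2
      have hk2 := (kap_spec e' (hA.1 e' h1)).2
      rw [hk e he, pow_succ] at hk1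
      rw [hk e' h1, pow_succ] at hk2
      have hk0 : (1 : ℝ) ≤ 2 ^ k := one_le_pow₀ (by norm_num)
      rw [Prod.dist_eq, Real.dist_eq]
      refine ⟨max_le (by linarith) (by linarith), lt_max_of_lt_right h2, ?_⟩
      have := max_le (by linarith : dist e.1 e'.1 ≤ 8 * 2 ^ k) (by linarith : |e.2 - e'.2| ≤ 8 * 2 ^ k)
      linarith
    calc ∑ e' ∈ A.filter (fun e' => ¬ |e.2 - e'.2| ≤ L), ‖inner ℂ (f e) (f e')‖
        = ∑ e' ∈ T, ‖inner ℂ (f e) (f e')‖ := by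
          rw [hT, ← Finset.filter_filter]
          refine (Finset.sum_filter_of_ne ?_).symm
          intro x _ h h2; exact h (by rw [h2, norm_zero])
      _ ≤ ∑ e' ∈ T, K * 2 ^ m * e.2 ^ (d - 1) * dist e e' ^ (-m) := by
          refine Finset.sum_le_sum fun e' he' => ?_
          obtain ⟨h1, h2, h3, h4⟩ := hTA e' he'
          obtain ⟨g1, g2, g3⟩ := hTd e' he'
          have hD0 : 0 < dist e e' := by linarith
          have he'p := hpos e' h1
          rw [Real.rpow_neg hD0.le, ← div_eq_mul_inv, le_div_iff₀ (by positivity)]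
          have hk1 := (kap_spec e (hA.1 e he)).1
          have hk2 := (kap_spec e' (hA.1 e' h1)).2
          rw [hk e he] at hk1
          rw [hk e' h1, pow_succ] at hk2
          calc ‖inner ℂ (f e) (f e')‖ * dist e e' ^ m ≤ ‖inner ℂ (f e) (f e')‖ * (1 + dist e.1 e'.1) ^ m := by
                gcongr
            _ ≤ K * (e.2 * e'.2) ^ m := hS.h1 e e' (hA.1 e he) (hA.1 e' h1)
            _ ≤ K * (2 * (e.2 * e.2)) ^ m := by
                have hle : e.2 * e'.2 ≤ 2 * (e.2 * e.2) := by nlinarith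
                have := Real.rpow_le_rpow (by positivity) hle (by linarith : 0 ≤ m)
                gcongr
            _ = _ := by
                rw [Real.mul_rpow (by norm_num) (by positivity), rpow_m hd _ hep]; ring
      _ = K * 2 ^ m * e.2 ^ (d - 1) * ∑ e' ∈ T, dist e e' ^ (-m) := by rw [Finset.mul_sum]
      _ ≤ K * 2 ^ m * e.2 ^ (d - 1) * (8 * 2 ^ (ν + 1) * L ^ (1 - m)) := by
          gcongr
          refine dyadic_sum T (fun e' => dist e e') (2 ^ (ν + 1)) L (16 * 2 ^ k) m hL1 hm32 (by positivity) ?_ ?_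
          · intro ρ h1 h2
            refine le_trans ?_ (hdens e he ρ h1 (by rw [hk e he]; exact h2))
            refine Nat.cast_le.mpr (Finset.card_le_card ?_)
            intro e' he'
            rw [Finset.mem_filter] at he' ⊢
            have := (hTA e' he'.1).1
            exact ⟨this, by rw [hk e he, hk e' this], he'.2⟩
          · intro e' he'; exact (hTd e' he').2
      _ = K * (16 * 2 ^ m) * (L ^ (1 - m) * 2 ^ ν) * e.2 ^ (d - 1) := by rw [pow_succ]; ring
      _ = _ := by rw [hLm]
  have hRsep : ∀ r ∈ A.image Prod.snd, ∀ r' ∈ A.image Prod.snd, r ≠ r' → 1 ≤ |r - r'| := by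
    intro r hr r' hr' h
    obtain ⟨e, he, rfl⟩ := Finset.mem_image.mp hr
    obtain ⟨e', he', rfl⟩ := Finset.mem_image.mp hr'
    exact hA.2.2 e he e' he' h
  have := grouped_schur A Prod.snd f c hc (fun r r' => |r - r'| ≤ L) (by
      intro i j h; rw [abs_sub_comm]; exact h) (3 * L) (by positivity)
    (by
      intro r _
      have := count_reals (A.image Prod.snd) hRsep r L (by linarith)
      linarith)
    (fun e => K * e.2 ^ (d - 1))
    (by
      intro r hr
      obtain ⟨e0, he0, rfl⟩ := Finset.mem_image.mp hr
      have hinj : Set.InjOn (Prod.fst) (SetLike.coe (A.filter (fun a => a.2 = e0.2)) : Set (Ed d × ℝ)) := by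
        intro a ha b hb h
        have ha := (Finset.mem_filter.mp ha).2
        have hb := (Finset.mem_filter.mp hb).2
        exact Prod.ext h (ha.trans hb.symm)
      have h := hS.h3 e0.2 (hA.1 e0 he0) ((A.filter (fun a => a.2 = e0.2)).image Prod.fst) (by
        intro y hy y' hy' hne
        obtain ⟨e, he, rfl⟩ := Finset.mem_image.mp hy
        obtain ⟨e', he', rfl⟩ := Finset.mem_image.mp hy'
        exact hA.2.1 e (Finset.mem_filter.mp he).1 e' (Finset.mem_filter.mp he').1 hne) (fun y => c (y, e0.2))
      rw [Finset.sum_image hinj, Finset.sum_image hinj] at h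
      have h1 : ∑ a ∈ A.filter (fun a => a.2 = e0.2), c a • f a =
          ∑ a ∈ A.filter (fun a => a.2 = e0.2), c (a.1, e0.2) • f (a.1, e0.2) := by
        refine Finset.sum_congr rfl fun a ha => ?_
        rw [← (Finset.mem_filter.mp ha).2]
      rw [h1]
      refine h.trans ?_
      rw [Finset.mul_sum]
      refine Finset.sum_le_sum fun a ha => ?_
      rw [← (Finset.mem_filter.mp ha).2]
      have h2 : ‖c (a.1, a.2)‖ ^ 2 ≤ 1 := pow_le_one₀ (norm_nonneg _) (hc _)
      have h3 := hpos a (Finset.mem_filter.mp ha).1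
      exact mul_le_of_le_one_right (by positivity) h2)
    _ (Finset.sum_le_sum hfar)
  refine this.trans (le_of_eq ?_)
  rw [← Finset.mul_sum, ← Finset.mul_sum]
  ring

lemma grouped_schur_dec {H : Type*} [NormedAddCommGroup H] [InnerProductSpace ℂ H] {α β : Type*} [DecidableEq β]
    (A : Finset α) (π : α → β) (f : α → H) (c : α → ℂ) (hc : ∀ a, ‖c a‖ ≤ 1)
    (near : β → β → Prop) [∀ i j, Decidable (near i j)] (hsym : ∀ i j, near i j → near j i) (M : ℝ) (hM0 : 0 ≤ M)
    (hM : ∀ i ∈ A.image π, (((A.image π).filter (fun j => near i j)).card : ℝ) ≤ M)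
    (N : α → ℝ) (hN : ∀ b ∈ A.image π, ‖∑ a ∈ A.filter (fun a => π a = b), c a • f a‖ ^ 2 ≤
      ∑ a ∈ A.filter (fun a => π a = b), N a) (B : ℝ)
    (hB : ∑ a ∈ A, ∑ a' ∈ A.filter (fun a' => ¬ near (π a) (π a')), ‖inner ℂ (f a) (f a')‖ ≤ B) :
    ‖∑ a ∈ A, c a • f a‖ ^ 2 ≤ M * ∑ a ∈ A, N a + B := by
  refine grouped_schur A π f c hc near hsym M hM0 ?_ N ?_ B ?_
  · intro i hi
    have h := hM i (by simpa using hi)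
    convert h
  · intro b hb
    have h := hN b (by simpa using hb)
    convert h
  · convert hB

lemma vol_ball_real {d : ℕ} (y : Ed d) (s : ℝ) (hs : 0 ≤ s) :
    volume.real (closedBall y s) = s ^ d * volume.real (ball (0 : Ed d) 1) := by
  rw [measureReal_def, Measure.addHaar_closedBall _ _ hs, ENNReal.toReal_mul, ENNReal.toReal_ofReal (by positivity),
    finrank_euclideanSpace_fin, measureReal_def]

lemma vol_unit_pos (d : ℕ) : 0 < volume.real (ball (0 : Ed d) 1) := by
  rw [measureReal_def]
  exact ENNReal.toReal_pos (measure_ball_pos _ _ one_pos).ne' measure_ball_lt_top.ne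

lemma annulus_vol {d : ℕ} (hd : 1 ≤ d) (y : Ed d) (r s : ℝ) (hs : 0 ≤ s) (hr : s ≤ r) :
    volume.real (closedBall y (r + s) \ ball y (r - s)) ≤
      d * (r + s) ^ (d - 1) * (2 * s) * volume.real (ball (0 : Ed d) 1) := by
  have : NeZero d := ⟨by omega⟩
  have hrs : 0 ≤ r - s := by linarith
  have h1 : volume.real (ball y (r - s)) = (r - s) ^ d * volume.real (ball (0 : Ed d) 1) := by
    rw [measureReal_def, Measure.addHaar_ball _ _ hrs, ENNReal.toReal_mul,
      ENNReal.toReal_ofReal (by positivity), finrank_euclideanSpace_fin, measureReal_def]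
  rw [measureReal_sdiff (ball_subset_closedBall.trans (closedBall_subset_closedBall (by linarith)))
    measurableSet_ball (measure_closedBall_lt_top.ne),
    vol_ball_real _ _ (by linarith), h1, ← sub_mul]
  refine mul_le_mul_of_nonneg_right ?_ (vol_unit_pos d).le
  have h2 := abs_pow_sub_pow_le (r + s) (r - s) d
  rw [abs_of_nonneg hrs, abs_of_nonneg (by linarith : 0 ≤ r + s), max_eq_left (by linarith),
    abs_of_nonneg (by linarith : 0 ≤ r + s - (r - s))] at h2
  refine (le_abs_self _).trans (h2.trans (le_of_eq ?_))
  ring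

open Classical in
lemma annulus_count {d : ℕ} (hd : 1 ≤ d) (T : Finset (Ed d × ℝ)) (y : Ed d) (r w M : ℝ) (hw : 0 < w)
    (hM : 0 ≤ M) (hr : 4 * w ≤ r) (hT : ∀ e ∈ T, |dist y e.1 - r| ≤ 3 * w)
    (hx : ∀ x : Ed d, ((T.filter (fun e => dist x e.1 ≤ w / 2)).card : ℝ) ≤ M) :
    (T.card : ℝ) * (w / 2) ^ d ≤ M * (d * (2 * r) ^ (d - 1) * (8 * w)) := by
  set V := volume.real (ball (0 : Ed d) 1) with hV
  have hV0 : 0 < V := vol_unit_pos d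
  set Ann := closedBall y (r + 4 * w) \ ball y (r - 4 * w) with hAnn
  have hAm : MeasurableSet Ann := measurableSet_closedBall.diff measurableSet_ball
  have hAf : volume Ann ≠ ∞ := ((measure_mono sdiff_subset).trans_lt measure_closedBall_lt_top).ne
  have h1 : (T.card : ℝ) * (w / 2) ^ d * V = ∫ x, ∑ e ∈ T, (closedBall e.1 (w / 2)).indicator (1 : Ed d → ℝ) x := by
    rw [integral_finsetSum]
    · simp_rw [integral_indicator_one measurableSet_closedBall]
      rw [Finset.sum_congr rfl (fun e _ => vol_ball_real e.1 (w / 2) (by positivity)), Finset.sum_const, nsmul_eq_mul]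
      ring
    · intro e _
      rw [integrable_indicator_iff measurableSet_closedBall]
      exact integrableOn_const measure_closedBall_lt_top.ne
  have h2 : ∫ x, ∑ e ∈ T, (closedBall e.1 (w / 2)).indicator (1 : Ed d → ℝ) x ≤ ∫ x, M * Ann.indicator (1 : Ed d → ℝ) x := by
    refine integral_mono_of_nonneg (Filter.Eventually.of_forall fun x => ?_) ?_ (Filter.Eventually.of_forall fun x => ?_)
    · exact Finset.sum_nonneg fun e _ => indicator_nonneg (fun _ _ => zero_le_one) _
    · refine Integrable.const_mul ?_ M
      rw [integrable_indicator_iff hAm]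
      exact integrableOn_const hAf
    · have h3 : ∑ e ∈ T, (closedBall e.1 (w / 2)).indicator (1 : Ed d → ℝ) x =
          ((T.filter (fun e => dist x e.1 ≤ w / 2)).card : ℝ) := by
        rw [Finset.card_filter, Nat.cast_sum]
        refine Finset.sum_congr rfl fun e _ => ?_
        rw [indicator_apply]
        simp only [mem_closedBall, Pi.one_apply]
        split_ifs <;> simp
      simp only
      rw [h3]
      by_cases hxA : x ∈ Ann
      · rw [indicator_of_mem hxA, Pi.one_apply, mul_one]; exact hx x
      · rw [indicator_of_notMem hxA, mul_zero]
        have : T.filter (fun e => dist x e.1 ≤ w / 2) = ∅ := by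
          refine Finset.filter_false_of_mem fun e he h => hxA ?_
          have h4 := abs_le.mp (hT e he)
          have t1 := dist_triangle y e.1 x
          have t2 := dist_triangle y x e.1
          rw [dist_comm e.1 x] at t1
          rw [hAnn, mem_sdiff, mem_closedBall, mem_ball, dist_comm x y]
          constructor
          · linarith
          · rw [not_lt]; linarith
        rw [this]; simp
  rw [integral_const_mul, integral_indicator_one hAm] at h2
  have h3 := annulus_vol hd y r (4 * w) (by linarith) hr
  rw [← hAnn, ← hV] at h3
  have h4 : d * (r + 4 * w) ^ (d - 1) * (2 * (4 * w)) * V ≤ (d * (2 * r) ^ (d - 1) * (8 * w)) * V := by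
    have : r + 4 * w ≤ 2 * r := by linarith
    have h0 : 0 ≤ r + 4 * w := by linarith
    have e8 : 2 * (4 * w) = 8 * w := by ring
    rw [e8]
    gcongr
  refine le_of_mul_le_mul_right ?_ hV0
  calc _ ≤ M * volume.real Ann := by rw [h1]; exact h2
    _ ≤ M * ((d * (2 * r) ^ (d - 1) * (8 * w)) * V) := by gcongr; linarith
    _ = _ := by ring

/-- cross-scale constant -/
def crossC (d : ℕ) (K : ℝ) : ℝ := K * 4 ^ (((d : ℝ) - 1) / 2) * (d * 2 ^ (d - 1) * 8 * 2 ^ d)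

open Classical in
lemma cross_pair {d : ℕ} {H : Type*} [NormedAddCommGroup H] [InnerProductSpace ℂ H]
    {f : Ed d × ℝ → H} {K : ℝ} (hS : L2Set d H f K) (A : Finset (Ed d × ℝ)) (hA : SepA A)
    (U : ℝ) (hU : 0 ≤ U) (hdens : Dens A U) (e : Ed d × ℝ) (he : 1 ≤ e.2) (k' : ℕ) (hk' : k' + 2 ≤ kap e) :
    ∑ e' ∈ A.filter (fun e' => kap e' = k'), ‖inner ℂ (f e) (f e')‖ ≤
      crossC d K * U * e.2 ^ (d - 1) * ((2 : ℝ) ^ (-(1 / 2) : ℝ)) ^ k' := by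
  have hd := hS.hd
  have hK := hS.hK
  rw [crossC]
  set m := ((d : ℝ) - 1) / 2 with hm
  have hm32 : 3 / 2 ≤ m := by
    have : (4 : ℝ) ≤ d := by exact_mod_cast hd
    rw [hm]; linarith
  set w := (2 : ℝ) ^ k' with hw
  have hw1 : 1 ≤ w := one_le_pow₀ (by norm_num)
  have hw0 : 0 < w := by linarith
  have hwr : 4 * w ≤ e.2 := by
    calc 4 * w = 2 ^ (k' + 2) := by rw [hw]; ring
      _ ≤ 2 ^ kap e := pow_le_pow_right₀ (by norm_num) hk'
      _ ≤ e.2 := (kap_spec e he).1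
  have her : 0 < e.2 := by linarith
  set T := A.filter (fun e' => kap e' = k' ∧ inner ℂ (f e) (f e') ≠ 0) with hT
  have hTA : ∀ e' ∈ T, e' ∈ A ∧ kap e' = k' ∧ w ≤ e'.2 ∧ e'.2 < 2 * w ∧ |e.2 - e'.2| ≤ dist e.1 e'.1 + 2 / 5 ∧
      dist e.1 e'.1 ≤ e.2 + e'.2 + 2 / 5 := by
    intro e' he'
    rw [hT, Finset.mem_filter] at he'
    have h1 := hS.h2 e e' he (hA.1 e' he'.1) he'.2.2
    have h2 := kap_spec e' (hA.1 e' he'.1)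
    rw [he'.2.1, pow_succ, ← hw] at h2
    exact ⟨he'.1, he'.2.1, h2.1, by linarith [h2.2], h1.1, h1.2⟩
  have hcard : (T.card : ℝ) * (w / 2) ^ d ≤ (U * w) * (d * (2 * e.2) ^ (d - 1) * (8 * w)) := by
    refine annulus_count (by omega) T e.1 e.2 w (U * w) hw0 (by positivity) hwr ?_ ?_
    · intro e' he'
      obtain ⟨h1, h2, h3, h4, h5, h6⟩ := hTA e' he'
      have := abs_le.mp h5
      exact abs_le.mpr ⟨by linarith, by linarith⟩
    · intro x
      by_cases hne : (T.filter (fun e => dist x e.1 ≤ w / 2)).Nonempty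
      · obtain ⟨e0, he0⟩ := hne
        rw [Finset.mem_filter] at he0
        obtain ⟨h1, h2, h3, h4, h5, h6⟩ := hTA e0 he0.1
        refine le_trans ?_ (hdens e0 h1 w hw1 (by rw [h2, ← hw]; linarith))
        refine Nat.cast_le.mpr (Finset.card_le_card ?_)
        intro e' he'
        rw [Finset.mem_filter] at he' ⊢
        obtain ⟨g1, g2, g3, g4, g5, g6⟩ := hTA e' he'.1
        refine ⟨g1, by rw [g2, h2], ?_⟩
        rw [Prod.dist_eq, Real.dist_eq]
        refine max_le ?_ (abs_le.mpr ⟨by linarith, by linarith⟩)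
        have := dist_triangle_left e0.1 e'.1 x
        linarith [he'.2, he0.2]
      · rw [Finset.not_nonempty_iff_eq_empty.mp hne]
        simp; positivity
  have hinner : ∀ e' ∈ T, ‖inner ℂ (f e) (f e')‖ ≤ K * 4 ^ m * w ^ m := by
    intro e' he'
    obtain ⟨h1, h2, h3, h4, h5, h6⟩ := hTA e' he'
    have g := hS.h1 e e' he (hA.1 e' h1)
    have h7 := abs_le.mp h5
    have h8 : e.2 / 2 ≤ 1 + dist e.1 e'.1 := by linarith
    have h9 : (e.2 / 2) ^ m ≤ (1 + dist e.1 e'.1) ^ m := Real.rpow_le_rpow (by positivity) h8 (by linarith)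
    have h10 : (e.2 * e'.2) ^ m ≤ (4 * w * (e.2 / 2)) ^ m :=
      Real.rpow_le_rpow (by nlinarith) (by nlinarith) (by linarith)
    have h11 : (4 * w * (e.2 / 2)) ^ m = 4 ^ m * w ^ m * (e.2 / 2) ^ m := by
      rw [Real.mul_rpow (by positivity) (by positivity), Real.mul_rpow (by norm_num) hw0.le]
    rw [h11] at h10
    have hp : 0 < (e.2 / 2) ^ m := by positivity
    refine le_of_mul_le_mul_right ?_ hp
    calc ‖inner ℂ (f e) (f e')‖ * (e.2 / 2) ^ m ≤ ‖inner ℂ (f e) (f e')‖ * (1 + dist e.1 e'.1) ^ m := by gcongr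
      _ ≤ _ := g
      _ ≤ K * (4 ^ m * w ^ m * (e.2 / 2) ^ m) := by gcongr
      _ = _ := by ring
  have hwpow : w ^ 2 * w ^ m ≤ w ^ d * ((2 : ℝ) ^ (-(1 / 2) : ℝ)) ^ k' := by
    have h1 : ((2 : ℝ) ^ (-(1 / 2) : ℝ)) ^ k' = w ^ (-(1 / 2) : ℝ) := by
      rw [hw, ← Real.rpow_natCast, ← Real.rpow_natCast, ← Real.rpow_mul (by norm_num),
              ← Real.rpow_mul (by norm_num), mul_comm]
    rw [h1, ← Real.rpow_natCast, ← Real.rpow_natCast, ← Real.rpow_add hw0, ← Real.rpow_add hw0]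
    refine Real.rpow_le_rpow_of_exponent_le hw1 ?_
    have : (d : ℝ) = 2 * m + 1 := by rw [hm]; ring
    rw [this]; push_cast; linarith
  have hcard2 : (T.card : ℝ) * w ^ m ≤
      U * (d * 2 ^ (d - 1) * 8 * 2 ^ d) * e.2 ^ (d - 1) * ((2 : ℝ) ^ (-(1 / 2) : ℝ)) ^ k' := by
    have hwd : 0 < w ^ d := by positivity
    refine le_of_mul_le_mul_right ?_ hwd
    have h1 : (w / 2) ^ d * 2 ^ d = w ^ d := by rw [← mul_pow]; congr 1; ring
    calc (T.card : ℝ) * w ^ m * w ^ d = ((T.card : ℝ) * (w / 2) ^ d) * (2 ^ d * w ^ m) := by rw [← h1]; ring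
      _ ≤ ((U * w) * (d * (2 * e.2) ^ (d - 1) * (8 * w))) * (2 ^ d * w ^ m) := by gcongr
      _ = U * (d * 2 ^ (d - 1) * 8 * 2 ^ d) * e.2 ^ (d - 1) * (w ^ 2 * w ^ m) := by rw [mul_pow]; ring
      _ ≤ U * (d * 2 ^ (d - 1) * 8 * 2 ^ d) * e.2 ^ (d - 1) * (w ^ d * ((2 : ℝ) ^ (-(1 / 2) : ℝ)) ^ k') := by gcongr
      _ = _ := by ring
  calc ∑ e' ∈ A.filter (fun e' => kap e' = k'), ‖inner ℂ (f e) (f e')‖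
      = ∑ e' ∈ T, ‖inner ℂ (f e) (f e')‖ := by
        rw [hT, ← Finset.filter_filter]
        refine (Finset.sum_filter_of_ne ?_).symm
        intro x _ h h2; exact h (by rw [h2, norm_zero])
    _ ≤ ∑ e' ∈ T, K * 4 ^ m * w ^ m := Finset.sum_le_sum hinner
    _ = K * 4 ^ m * ((T.card : ℝ) * w ^ m) := by rw [Finset.sum_const, nsmul_eq_mul]; ring
    _ ≤ K * 4 ^ m * (U * (d * 2 ^ (d - 1) * 8 * 2 ^ d) * e.2 ^ (d - 1) * ((2 : ℝ) ^ (-(1 / 2) : ℝ)) ^ k') := by gcongr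
    _ = _ := by ring

open Classical in
lemma Dens.mono {d : ℕ} {A B : Finset (Ed d × ℝ)} {U : ℝ} (hA : Dens A U) (h : B ⊆ A) : Dens B U := by
  intro e he ρ h1 h2
  refine le_trans ?_ (hA e (h he) ρ h1 h2)
  refine Nat.cast_le.mpr (Finset.card_le_card ?_)
  exact Finset.filter_subset_filter _ h

open Classical in
lemma cross_sum {d : ℕ} {H : Type*} [NormedAddCommGroup H] [InnerProductSpace ℂ H]
    {f : Ed d × ℝ → H} {K : ℝ} (hS : L2Set d H f K) (A : Finset (Ed d × ℝ)) (hA : SepA A) (ν : ℕ)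
    (hdens : Dens A (2 ^ (ν + 1))) (hlow : ∀ e ∈ A, 2 * ν ≤ kap e) (e : Ed d × ℝ) (he : 1 ≤ e.2) :
    ∑ e' ∈ A.filter (fun e' => kap e' + 2 ≤ kap e), ‖inner ℂ (f e) (f e')‖ ≤
      8 * crossC d K * e.2 ^ (d - 1) := by
  have hC0 : 0 ≤ crossC d K := by have := hS.hK; rw [crossC]; positivity
  have hmaps : ∀ e' ∈ A.filter (fun e' => kap e' + 2 ≤ kap e), kap e' ∈ Finset.Ico (2 * ν) (kap e - 1) := by
    intro e' he'
    rw [Finset.mem_filter] at he'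
    rw [Finset.mem_Ico]
    have := hlow e' he'.1
    omega
  rw [← Finset.sum_fiberwise_of_maps_to hmaps]
  have hq : ((2 : ℝ) ^ (-(1 / 2) : ℝ)) ^ (2 * ν) * 2 ^ ν = 1 := by
    rw [pow_mul, ← Real.rpow_natCast _ 2, ← Real.rpow_mul (by norm_num), ← mul_pow]
    norm_num
  set q := (2 : ℝ) ^ (-(1 / 2) : ℝ) with hqd
  calc _ ≤ ∑ k' ∈ Finset.Ico (2 * ν) (kap e - 1), crossC d K * 2 ^ (ν + 1) * e.2 ^ (d - 1) * q ^ k' := by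
        refine Finset.sum_le_sum fun k' hk' => ?_
        rw [Finset.mem_Ico] at hk'
        refine le_trans ?_ (cross_pair hS A hA _ (by positivity) hdens e he k' (by omega))
        refine Finset.sum_le_sum_of_subset_of_nonneg ?_ (fun _ _ _ => norm_nonneg _)
        exact Finset.filter_subset_filter _ (Finset.filter_subset _ _)
    _ = crossC d K * 2 ^ (ν + 1) * e.2 ^ (d - 1) * (q ^ (2 * ν) * ∑ l ∈ Finset.range (kap e - 1 - 2 * ν), q ^ l) := by
        rw [← Finset.mul_sum]
        congr 1
        rw [Finset.sum_Ico_eq_sum_range, Finset.mul_sum]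
        exact Finset.sum_congr rfl fun l _ => pow_add _ _ _
    _ ≤ crossC d K * 2 ^ (ν + 1) * e.2 ^ (d - 1) * (q ^ (2 * ν) * 4) := by
        gcongr
        exact geom_half _
    _ = 8 * crossC d K * e.2 ^ (d - 1) * (q ^ (2 * ν) * 2 ^ ν) := by rw [pow_succ]; ring
    _ = _ := by rw [hq, mul_one]

open Classical in
lemma L2_bound {d : ℕ} {H : Type*} [NormedAddCommGroup H] [InnerProductSpace ℂ H]
    {f : Ed d × ℝ → H} {K : ℝ} (hS : L2Set d H f K) : ∃ C, 0 ≤ C ∧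
    ∀ (A : Finset (Ed d × ℝ)) (_ : SepA A) (ν : ℕ)
    (_ : Dens A (2 ^ (ν + 1))) (c : Ed d × ℝ → ℂ) (_ : ∀ e, ‖c e‖ ≤ 1),
    ‖∑ e ∈ A, c e • f e‖ ^ 2 ≤ C * (1 + ν) * 2 ^ ((ν : ℝ) / (((d : ℝ) - 1) / 2)) * ∑ e ∈ A, e.2 ^ (d - 1) := by
  have hK := hS.hK
  have hC0 : 0 ≤ crossC d K := by rw [crossC]; positivity
  set m := ((d : ℝ) - 1) / 2 with hm
  have hm0 : 0 < m := by
    have : (4 : ℝ) ≤ d := by exact_mod_cast hS.hd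
    rw [hm]; linarith
  set Cs := K * (3 + 16 * 2 ^ m) with hCs
  have hCs0 : 0 ≤ Cs := by positivity
  refine ⟨6 * Cs + 32 * crossC d K, by positivity, fun A hA ν hdens c hc => ?_⟩
  set X := (2 : ℝ) ^ ((ν : ℝ) / m) with hX
  have hX1 : 1 ≤ X := Real.one_le_rpow (by norm_num) (by positivity)
  have hN : ∀ B ⊆ A, ∀ b ∈ B.image kap, ‖∑ a ∈ B.filter (fun a => kap a = b), c a • f a‖ ^ 2 ≤
      ∑ a ∈ B.filter (fun a => kap a = b), Cs * X * a.2 ^ (d - 1) := by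
    intro B hB b _
    have hsub : B.filter (fun a => kap a = b) ⊆ A := (Finset.filter_subset _ _).trans hB
    rw [← Finset.mul_sum]
    exact single_scale hS _ (hA.mono hsub) b (fun e he => (Finset.mem_filter.mp he).2) ν (hdens.mono hsub) c hc
  set Al := A.filter (fun e => kap e < 2 * ν) with hAl
  set Ah := A.filter (fun e => ¬ kap e < 2 * ν) with hAh
  have hsl : Al ⊆ A := Finset.filter_subset _ _
  have hsh : Ah ⊆ A := Finset.filter_subset _ _
  have hlow : ‖∑ e ∈ Al, c e • f e‖ ^ 2 ≤ (2 * ν : ℕ) * ∑ e ∈ Al, Cs * X * e.2 ^ (d - 1) + 0 := by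
    refine grouped_schur_dec Al kap f c hc (fun _ _ => True) (fun _ _ _ => trivial) _ (by positivity) ?_ _ (hN Al hsl) 0 ?_
    · intro i _
      refine Nat.cast_le.mpr ?_
      calc _ ≤ (Finset.range (2 * ν)).card := Finset.card_le_card (by
            intro j hj
            obtain ⟨e, he, rfl⟩ := Finset.mem_image.mp (Finset.mem_filter.mp hj).1
            exact Finset.mem_range.mpr (Finset.mem_filter.mp he).2)
        _ = _ := Finset.card_range _
    · simp
  have hAhs := hA.mono hsh
  have hcr : ∀ e ∈ Ah, ∑ e' ∈ Ah.filter (fun e' => kap e' + 2 ≤ kap e), ‖inner ℂ (f e) (f e')‖ ≤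
      8 * crossC d K * e.2 ^ (d - 1) := fun e he =>
    cross_sum hS Ah hAhs ν (hdens.mono hsh) (fun e he => not_lt.mp (Finset.mem_filter.mp he).2) e (hAhs.1 e he)
  have hhigh : ‖∑ e ∈ Ah, c e • f e‖ ^ 2 ≤ 3 * ∑ e ∈ Ah, Cs * X * e.2 ^ (d - 1) +
      2 * ∑ e ∈ Ah, 8 * crossC d K * e.2 ^ (d - 1) := by
    refine grouped_schur_dec Ah kap f c hc (fun i j => i ≤ j + 1 ∧ j ≤ i + 1) (fun _ _ h => ⟨h.2, h.1⟩) 3 (by norm_num)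
      ?_ _ (hN Ah hsh) _ ?_
    · intro i _
      have : ((Ah.image kap).filter (fun j => i ≤ j + 1 ∧ j ≤ i + 1)).card ≤ 3 := by
        calc _ ≤ (Finset.Icc (i - 1) (i + 1)).card := Finset.card_le_card (by
              intro j hj
              have := (Finset.mem_filter.mp hj).2
              rw [Finset.mem_Icc]; omega)
          _ ≤ 3 := by rw [Nat.card_Icc]; omega
      exact_mod_cast this
    · have h1 : ∀ e ∈ Ah, ∑ e' ∈ Ah.filter (fun e' => ¬ (kap e ≤ kap e' + 1 ∧ kap e' ≤ kap e + 1)), ‖inner ℂ (f e) (f e')‖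
          ≤ ∑ e' ∈ Ah.filter (fun e' => kap e' + 2 ≤ kap e), ‖inner ℂ (f e) (f e')‖ +
            ∑ e' ∈ Ah.filter (fun e' => kap e + 2 ≤ kap e'), ‖inner ℂ (f e) (f e')‖ := by
        intro e _
        rw [← Finset.sum_union]
        · refine Finset.sum_le_sum_of_subset_of_nonneg ?_ (fun _ _ _ => norm_nonneg _)
          intro e' he'
          obtain ⟨g1, g2⟩ := Finset.mem_filter.mp he'
          rcases (by omega : kap e' + 2 ≤ kap e ∨ kap e + 2 ≤ kap e') with h | h
          · exact Finset.mem_union.mpr (Or.inl (Finset.mem_filter.mpr ⟨g1, h⟩))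
          · exact Finset.mem_union.mpr (Or.inr (Finset.mem_filter.mpr ⟨g1, h⟩))
        · rw [Finset.disjoint_filter]
          intro x _ h1 h2; omega
      have h2 : ∑ e ∈ Ah, ∑ e' ∈ Ah.filter (fun e' => kap e + 2 ≤ kap e'), ‖inner ℂ (f e) (f e')‖ =
          ∑ e ∈ Ah, ∑ e' ∈ Ah.filter (fun e' => kap e' + 2 ≤ kap e), ‖inner ℂ (f e) (f e')‖ := by
        simp_rw [Finset.sum_filter]
        rw [Finset.sum_comm]
        refine Finset.sum_congr rfl fun i _ => Finset.sum_congr rfl fun j _ => ?_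
        rw [norm_inner_symm]
      refine (Finset.sum_le_sum h1).trans ?_
      rw [Finset.sum_add_distrib, h2]
      have := Finset.sum_le_sum hcr
      linarith
  have hsum : ∑ e ∈ A, c e • f e = ∑ e ∈ Al, c e • f e + ∑ e ∈ Ah, c e • f e :=
    (Finset.sum_filter_add_sum_filter_not _ _ _).symm
  have hsumS : ∑ e ∈ A, e.2 ^ (d - 1) = ∑ e ∈ Al, e.2 ^ (d - 1) + ∑ e ∈ Ah, e.2 ^ (d - 1) :=
    (Finset.sum_filter_add_sum_filter_not _ _ _).symm
  have hpar : ‖∑ e ∈ A, c e • f e‖ ^ 2 ≤ 2 * ‖∑ e ∈ Al, c e • f e‖ ^ 2 + 2 * ‖∑ e ∈ Ah, c e • f e‖ ^ 2 := by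
    rw [hsum]
    have := norm_add_le (∑ e ∈ Al, c e • f e) (∑ e ∈ Ah, c e • f e)
    have h0 := norm_nonneg (∑ e ∈ Al, c e • f e + ∑ e ∈ Ah, c e • f e)
    nlinarith [sq_nonneg (‖∑ e ∈ Al, c e • f e‖ - ‖∑ e ∈ Ah, c e • f e‖)]
  rw [← Finset.mul_sum, add_zero] at hlow
  rw [← Finset.mul_sum, ← Finset.mul_sum] at hhigh
  rw [hsumS]
  have hSl : 0 ≤ ∑ e ∈ Al, e.2 ^ (d - 1) := Finset.sum_nonneg fun e he => by
    have := hA.1 e (hsl he); positivity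
  have hSh : 0 ≤ ∑ e ∈ Ah, e.2 ^ (d - 1) := Finset.sum_nonneg fun e he => by
    have := hA.1 e (hsh he); positivity
  set Sl := ∑ e ∈ Al, e.2 ^ (d - 1)
  set Sh := ∑ e ∈ Ah, e.2 ^ (d - 1)
  have hν : (0 : ℝ) ≤ ν := by positivity
  push_cast at hlow
  have b1 : 2 * (2 * ν * (Cs * X * Sl)) ≤ (6 * Cs + 32 * crossC d K) * (1 + ν) * X * Sl := by
    have : 2 * (2 * ν * Cs) ≤ (6 * Cs + 32 * crossC d K) * (1 + ν) := by nlinarith [mul_nonneg hν hCs0, mul_nonneg hν hC0]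
    calc _ = 2 * (2 * ν * Cs) * (X * Sl) := by ring
      _ ≤ (6 * Cs + 32 * crossC d K) * (1 + ν) * (X * Sl) := by gcongr
      _ = _ := by ring
  have b2 : 2 * (3 * (Cs * X * Sh) + 2 * (8 * crossC d K * Sh)) ≤ (6 * Cs + 32 * crossC d K) * (1 + ν) * X * Sh := by
    have h1 : 8 * crossC d K * Sh ≤ 8 * crossC d K * Sh * X := le_mul_of_one_le_right (by positivity) hX1
    calc _ ≤ 2 * (3 * (Cs * X * Sh) + 2 * (8 * crossC d K * Sh * X)) := by linarith
      _ = (6 * Cs + 32 * crossC d K) * 1 * X * Sh := by ring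
      _ ≤ _ := by gcongr; linarith
  have e1 : (6 * Cs + 32 * crossC d K) * (1 + ν) * X * (Sl + Sh) =
      (6 * Cs + 32 * crossC d K) * (1 + ν) * X * Sl + (6 * Cs + 32 * crossC d K) * (1 + ν) * X * Sh := by ring
  rw [e1]
  linarith

open Classical in
lemma dens_exists {d : ℕ} (E : Finset (Ed d × ℝ)) : ∃ ν : Ed d × ℝ → ℕ, ∀ e ∈ E,
    (∀ ρ : ℝ, 1 ≤ ρ → ρ ≤ 16 * 2 ^ kap e →
      ((E.filter (fun e' => kap e' = kap e ∧ dist e e' ≤ ρ)).card : ℝ) ≤ 2 ^ (ν e + 1) * ρ) ∧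
    ∃ ρ : ℝ, 1 ≤ ρ ∧ ρ ≤ 16 * 2 ^ kap e ∧
      2 ^ (ν e) * ρ ≤ ((E.filter (fun e' => kap e' = kap e ∧ dist e e' ≤ ρ)).card : ℝ) := by
  have key : ∀ e ∈ E, ∃ n : ℕ, (∀ ρ : ℝ, 1 ≤ ρ → ρ ≤ 16 * 2 ^ kap e →
      ((E.filter (fun e' => kap e' = kap e ∧ dist e e' ≤ ρ)).card : ℝ) ≤ 2 ^ (n + 1) * ρ) ∧
    ∃ ρ : ℝ, 1 ≤ ρ ∧ ρ ≤ 16 * 2 ^ kap e ∧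
      2 ^ n * ρ ≤ ((E.filter (fun e' => kap e' = kap e ∧ dist e e' ≤ ρ)).card : ℝ) := by
    intro e he
    have hex : ∃ n : ℕ, ∀ ρ : ℝ, 1 ≤ ρ → ρ ≤ 16 * 2 ^ kap e →
      ((E.filter (fun e' => kap e' = kap e ∧ dist e e' ≤ ρ)).card : ℝ) ≤ 2 ^ (n + 1) * ρ := by
      refine ⟨E.card, fun ρ h1 _ => ?_⟩
      have h2 : ((E.filter (fun e' => kap e' = kap e ∧ dist e e' ≤ ρ)).card : ℝ) ≤ E.card :=
        Nat.cast_le.mpr (Finset.card_le_card (Finset.filter_subset _ _))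
      have h3 : (E.card : ℝ) ≤ 2 ^ (E.card + 1) := by
        have : E.card ≤ 2 ^ (E.card + 1) := (Nat.lt_two_pow_self).le.trans (Nat.pow_le_pow_right (by norm_num) (by omega))
        exact_mod_cast this
      have h4 : (0 : ℝ) < 2 ^ (E.card + 1) := by positivity
      nlinarith
    refine ⟨Nat.find hex, Nat.find_spec hex, ?_⟩
    rcases Nat.eq_zero_or_pos (Nat.find hex) with h0 | h0
    · have h1 : (1 : ℝ) ≤ 2 ^ kap e := one_le_pow₀ (by norm_num)
      refine ⟨1, le_rfl, by linarith, ?_⟩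
      rw [h0, pow_zero, one_mul]
      have : 0 < (E.filter (fun e' => kap e' = kap e ∧ dist e e' ≤ 1)).card :=
        Finset.card_pos.mpr ⟨e, Finset.mem_filter.mpr ⟨he, rfl, by simp⟩⟩
      exact_mod_cast this
    · have := Nat.find_min hex (m := Nat.find hex - 1) (by omega)
      push Not at this
      obtain ⟨ρ, h1, h2, h3⟩ := this
      refine ⟨ρ, h1, h2, ?_⟩
      rw [Nat.sub_add_cancel h0] at h3
      exact h3.le
  choose! ν hν using key
  exact ⟨ν, hν⟩

/-- thick annulus -/
def annW {d : ℕ} (b : Ed d × ℝ) (s : ℝ) : Set (Ed d) := {x | |dist x b.1 - b.2| ≤ s}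

lemma annW_meas {d : ℕ} (b : Ed d × ℝ) (s : ℝ) : MeasurableSet (annW b s) := by
  have : IsClosed (annW b s) := isClosed_le (by fun_prop) continuous_const
  exact this.measurableSet

lemma annW_fin {d : ℕ} (b : Ed d × ℝ) (s : ℝ) : volume (annW b s) < ∞ := by
  refine (measure_mono ?_).trans_lt (measure_closedBall_lt_top (x := b.1) (r := b.2 + s))
  intro x hx
  have := abs_le.mp (show |dist x b.1 - b.2| ≤ s from hx)
  rw [mem_closedBall]; linarith

/-- covering constant -/
def covC (d : ℕ) : ℝ := d * 352 ^ (d - 1) * 22 * volume.real (ball (0 : Ed d) 1)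

lemma covC_nonneg (d : ℕ) : 0 ≤ covC d := by rw [covC]; positivity

lemma annW_vol {d : ℕ} (hd : 1 ≤ d) (b : Ed d × ℝ) (ρ : ℝ) (hb : 1 ≤ b.2) (h1 : 1 ≤ ρ) (h2 : ρ ≤ 16 * b.2) :
    volume.real (annW b (11 * ρ)) ≤ covC d * (b.2 ^ (d - 1) * ρ) := by
  have hV := vol_unit_pos d
  have hd' : (1 : ℝ) ≤ d := by exact_mod_cast hd
  rw [covC]
  set V := volume.real (ball (0 : Ed d) 1)
  by_cases h : 11 * ρ ≤ b.2
  · have h3 := annulus_vol hd b.1 b.2 (11 * ρ) (by linarith) h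
    have h4 : volume.real (annW b (11 * ρ)) ≤ volume.real (closedBall b.1 (b.2 + 11 * ρ) \ ball b.1 (b.2 - 11 * ρ)) := by
      refine measureReal_mono ?_ ((measure_mono sdiff_subset).trans_lt measure_closedBall_lt_top).ne
      intro x hx
      have := abs_le.mp (show |dist x b.1 - b.2| ≤ 11 * ρ from hx)
      rw [mem_sdiff, mem_closedBall, mem_ball]
      exact ⟨by linarith, by rw [not_lt]; linarith⟩
    refine h4.trans (h3.trans ?_)
    calc _ ≤ d * (352 * b.2) ^ (d - 1) * (2 * (11 * ρ)) * V := by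
          gcongr; linarith
      _ = _ := by rw [mul_pow]; ring
  · push Not at h
    have h4 : volume.real (annW b (11 * ρ)) ≤ volume.real (closedBall b.1 (22 * ρ)) := by
      refine measureReal_mono ?_ measure_closedBall_lt_top.ne
      intro x hx
      have := abs_le.mp (show |dist x b.1 - b.2| ≤ 11 * ρ from hx)
      rw [mem_closedBall]; linarith
    refine h4.trans ?_
    rw [vol_ball_real _ _ (by linarith)]
    have e1 : (22 * ρ) ^ d = (22 * ρ) ^ (d - 1) * (22 * ρ) := by
      rw [← pow_succ, Nat.sub_add_cancel hd]
    rw [e1]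
    calc _ ≤ (352 * b.2) ^ (d - 1) * (22 * ρ) * V := by
          have : 22 * ρ ≤ 352 * b.2 := by linarith
          gcongr
      _ = 1 * ((352 * b.2) ^ (d - 1) * (22 * ρ) * V) := by ring
      _ ≤ d * ((352 * b.2) ^ (d - 1) * (22 * ρ) * V) := by gcongr
      _ = _ := by rw [mul_pow]; ring

open Classical in
lemma scale_cover {d : ℕ} (hd : 1 ≤ d) (E B : Finset (Ed d × ℝ)) (hE : ∀ e ∈ E, 1 ≤ e.2) (hBE : B ⊆ E) (k ν : ℕ)
    (hk : ∀ e ∈ B, kap e = k) (hB : ∀ e ∈ B, ∃ ρ : ℝ, 1 ≤ ρ ∧ ρ ≤ 16 * 2 ^ kap e ∧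
      2 ^ ν * ρ ≤ ((E.filter (fun e' => kap e' = kap e ∧ dist e e' ≤ ρ)).card : ℝ)) :
    ∃ W : Set (Ed d), MeasurableSet W ∧ volume W < ∞ ∧ (∀ e ∈ B, annW e (1 / 5) ⊆ W) ∧
      2 ^ ν * volume.real W ≤ covC d * 2 ^ (d - 1) * ∑ e ∈ E.filter (fun e => kap e = k), e.2 ^ (d - 1) := by
  choose! ρ hρ1 hρ2 hρ3 using hB
  obtain ⟨u, hu, hdisj, hcov⟩ := Vitali.exists_disjoint_subfamily_covering_enlargement_closedBall
    (SetLike.coe B : Set (Ed d × ℝ)) id ρ (16 * 2 ^ k) (fun e he => by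
      have := hρ2 e he
      rwa [hk e he] at this) 5 (by norm_num)
  have hufin : u.Finite := B.finite_toSet.subset hu
  set u' := hufin.toFinset with hu'
  have huB : ∀ b ∈ u', b ∈ B := fun b hb => by
    have : b ∈ u := by simpa [hu'] using hb
    exact hu this
  refine ⟨⋃ b ∈ u', annW b (11 * ρ b), Finset.measurableSet_biUnion _ fun b _ => annW_meas _ _, ?_, ?_, ?_⟩
  · exact measure_biUnion_lt_top u'.finite_toSet fun b _ => annW_fin _ _
  · intro e he x hx
    obtain ⟨b, hb, hsub⟩ := hcov e he
    have hbu : b ∈ u' := by simpa [hu'] using hb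
    have hρb := hρ1 b (huB b hbu)
    refine mem_biUnion (x := b) hbu ?_
    have h1 : e ∈ closedBall b (5 * ρ b) := hsub (mem_closedBall_self (by linarith [hρ1 e he]))
    rw [mem_closedBall, Prod.dist_eq, max_le_iff, Real.dist_eq] at h1
    have h2 := abs_le.mp h1.2
    have h3 := abs_le.mp (show |dist x e.1 - e.2| ≤ 1 / 5 from hx)
    have t1 := dist_triangle x e.1 b.1
    have t2 := dist_triangle_right x e.1 b.1
    change |dist x b.1 - b.2| ≤ 11 * ρ b
    rw [abs_le]
    constructor <;> linarith [h1.1]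
  · set S : Ed d × ℝ → Finset (Ed d × ℝ) := fun b => E.filter (fun e' => kap e' = kap b ∧ dist b e' ≤ ρ b) with hS
    have h1 : volume.real (⋃ b ∈ u', annW b (11 * ρ b)) ≤ ∑ b ∈ u', volume.real (annW b (11 * ρ b)) :=
      measureReal_biUnion_finset_le _ _
    have h2 : ∀ b ∈ u', 2 ^ ν * volume.real (annW b (11 * ρ b)) ≤ covC d * 2 ^ (d - 1) * ∑ e ∈ S b, e.2 ^ (d - 1) := by
      intro b hb
      have hbB := huB b hb
      have hb1 := hE b (hBE hbB)
      have hkb := (kap_spec b hb1)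
      have h3 := annW_vol hd b (ρ b) hb1 (hρ1 b hbB) ((hρ2 b hbB).trans (by linarith [hkb.1]))
      have h4 : b.2 ^ (d - 1) * (S b).card ≤ 2 ^ (d - 1) * ∑ e ∈ S b, e.2 ^ (d - 1) := by
        rw [Finset.mul_sum, mul_comm, ← nsmul_eq_mul]
        refine Finset.card_nsmul_le_sum _ _ _ fun e he => ?_
        have he' := Finset.mem_filter.mp he
        have hke := kap_spec e (hE e he'.1)
        rw [he'.2.1] at hke
        rw [← mul_pow]
        refine pow_le_pow_left₀ (by linarith) ?_ _
        have := hkb.2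
        rw [pow_succ] at this
        linarith [hke.1]
      have hc0 := covC_nonneg d
      calc _ ≤ 2 ^ ν * (covC d * (b.2 ^ (d - 1) * ρ b)) := by gcongr
        _ = covC d * (b.2 ^ (d - 1) * (2 ^ ν * ρ b)) := by ring
        _ ≤ covC d * (b.2 ^ (d - 1) * (S b).card) := by
            have := hρ3 b hbB
            have h0 : 0 ≤ b.2 := by linarith
            gcongr
        _ ≤ covC d * (2 ^ (d - 1) * ∑ e ∈ S b, e.2 ^ (d - 1)) := by gcongr
        _ = _ := by ring
    calc _ ≤ 2 ^ ν * ∑ b ∈ u', volume.real (annW b (11 * ρ b)) := by gcongr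
      _ ≤ ∑ b ∈ u', covC d * 2 ^ (d - 1) * ∑ e ∈ S b, e.2 ^ (d - 1) := by
          rw [Finset.mul_sum]; exact Finset.sum_le_sum h2
      _ = covC d * 2 ^ (d - 1) * ∑ e ∈ u'.biUnion S, e.2 ^ (d - 1) := by
          rw [← Finset.mul_sum, Finset.sum_biUnion]
          intro b hb b' hb' hne
          have hb2 : b ∈ u := by simpa [hu'] using hb
          have hb2' : b' ∈ u := by simpa [hu'] using hb'
          have hd1 := hdisj hb2 hb2' hne
          change Disjoint (S b) (S b')
          rw [Finset.disjoint_left]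
          intro e h3 h4
          refine (Set.disjoint_left.mp hd1 : _) (?_ : e ∈ closedBall (id b) (ρ b)) ?_
          · have := (Finset.mem_filter.mp h3).2.2
            simpa [dist_comm] using this
          · have := (Finset.mem_filter.mp h4).2.2
            simpa [dist_comm] using this
      _ ≤ _ := by
          have hc0 := covC_nonneg d
          refine mul_le_mul_of_nonneg_left ?_ (by positivity)
          refine Finset.sum_le_sum_of_subset_of_nonneg ?_ ?_
          · intro e he
            obtain ⟨b, hb, he⟩ := Finset.mem_biUnion.mp he
            have he' := Finset.mem_filter.mp he
            exact Finset.mem_filter.mpr ⟨he'.1, he'.2.1.trans (hk b (huB b hb))⟩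
          · intro e he _
            have := hE e (Finset.mem_filter.mp he).1
            positivity

open Classical in
lemma full_cover {d : ℕ} (hd : 1 ≤ d) (E B : Finset (Ed d × ℝ)) (hE : ∀ e ∈ E, 1 ≤ e.2) (hBE : B ⊆ E) (ν : ℕ)
    (hB : ∀ e ∈ B, ∃ ρ : ℝ, 1 ≤ ρ ∧ ρ ≤ 16 * 2 ^ kap e ∧
      2 ^ ν * ρ ≤ ((E.filter (fun e' => kap e' = kap e ∧ dist e e' ≤ ρ)).card : ℝ)) :
    ∃ W : Set (Ed d), MeasurableSet W ∧ volume W < ∞ ∧ (∀ e ∈ B, annW e (1 / 5) ⊆ W) ∧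
      2 ^ ν * volume.real W ≤ covC d * 2 ^ (d - 1) * ∑ e ∈ E, e.2 ^ (d - 1) := by
  have h1 : ∀ k, ∃ W : Set (Ed d), MeasurableSet W ∧ volume W < ∞ ∧ (∀ e ∈ B.filter (fun e => kap e = k), annW e (1 / 5) ⊆ W) ∧
      2 ^ ν * volume.real W ≤ covC d * 2 ^ (d - 1) * ∑ e ∈ E.filter (fun e => kap e = k), e.2 ^ (d - 1) := fun k =>
    scale_cover hd E (B.filter (fun e => kap e = k)) hE ((Finset.filter_subset _ _).trans hBE) k ν
      (fun e he => (Finset.mem_filter.mp he).2) (fun e he => hB e (Finset.mem_filter.mp he).1)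
  choose W hW1 hW2 hW3 hW4 using h1
  refine ⟨⋃ k ∈ E.image kap, W k, Finset.measurableSet_biUnion _ fun b _ => hW1 _, 
    measure_biUnion_lt_top (E.image kap).finite_toSet fun b _ => hW2 _, ?_, ?_⟩
  · intro e he x hx
    exact mem_biUnion (x := kap e) (Finset.mem_coe.mpr (Finset.mem_image_of_mem _ (hBE he)))
      (hW3 (kap e) e (Finset.mem_filter.mpr ⟨he, rfl⟩) hx)
  · calc _ ≤ 2 ^ ν * ∑ k ∈ E.image kap, volume.real (W k) := by
          gcongr; exact measureReal_biUnion_finset_le _ _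
      _ ≤ ∑ k ∈ E.image kap, covC d * 2 ^ (d - 1) * ∑ e ∈ E.filter (fun e => kap e = k), e.2 ^ (d - 1) := by
          rw [Finset.mul_sum]; exact Finset.sum_le_sum fun k _ => hW4 k
      _ = _ := by
          rw [← Finset.mul_sum, Finset.sum_fiberwise_of_maps_to (fun e he => Finset.mem_image_of_mem _ he)]

lemma summable_aux (δ : ℝ) (hδ : 0 < δ) : Summable (fun ν : ℕ => (1 + (ν : ℝ)) * (2 : ℝ) ^ (-(ν * δ))) := by
  set q := (2 : ℝ) ^ (-δ) with hq
  have hq0 : 0 < q := by positivity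
  have hq1 : q < 1 := Real.rpow_lt_one_of_one_lt_of_neg (by norm_num) (by linarith)
  have h1 : ∀ ν : ℕ, (2 : ℝ) ^ (-(ν * δ)) = q ^ ν := by
    intro ν
    rw [hq, ← Real.rpow_natCast, ← Real.rpow_mul (by norm_num)]
    congr 1; ring
  have hn : ‖q‖ < 1 := by rw [Real.norm_of_nonneg hq0.le]; exact hq1
  have h2 := (summable_geometric_of_norm_lt_one hn).add (by simpa using summable_pow_mul_geometric_of_norm_lt_one 1 hn)
  refine h2.congr fun ν => ?_
  rw [h1]; ring

lemma holder_supp {d : ℕ} (G : Ed d → ℂ) (hG : Continuous G) (W : Set (Ed d)) (hW : MeasurableSet W) (hWf : volume W < ∞)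
    (hs : ∀ x, G x ≠ 0 → x ∈ W) (q : ℝ) (hq1 : 1 ≤ q) (hq2 : q ≤ 2) (N : ℝ) (hN : eLpNorm G 2 volume = ENNReal.ofReal N)
    (hN0 : 0 ≤ N) :
    eLpNorm G (ENNReal.ofReal q) volume ≤ ENNReal.ofReal (N * volume.real W ^ (1 / q - 1 / 2)) := by
  rw [← eLpNorm_restrict_eq_of_support_subset (s := W) (fun x hx => hs x hx)]
  have h1 := eLpNorm_le_eLpNorm_mul_rpow_measure_univ (μ := volume.restrict W) (f := G) (p := ENNReal.ofReal q) (q := 2)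
    (by rw [← ENNReal.ofReal_ofNat]; exact ENNReal.ofReal_le_ofReal hq2) hG.aestronglyMeasurable
  rw [ENNReal.toReal_ofReal (by linarith), Measure.restrict_apply_univ, ENNReal.toReal_ofNat] at h1
  refine h1.trans ?_
  rw [ENNReal.ofReal_mul hN0, ← hN]
  refine mul_le_mul' (eLpNorm_mono_measure _ Measure.restrict_le_self) (le_of_eq ?_)
  have h2 : 0 ≤ 1 / q - 1 / 2 := by
    rw [sub_nonneg]; exact one_div_le_one_div_of_le (by linarith) hq2
  rw [← ENNReal.ofReal_rpow_of_nonneg measureReal_nonneg h2, measureReal_def, ENNReal.ofReal_toReal hWf.ne]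

lemma sum_F_cont {d : ℕ} {ψ₀ : Ed d → ℂ} (hd : 1 ≤ d) (hψ : Admissible d ψ₀) (A : Finset (Ed d × ℝ)) (hA : ∀ e ∈ A, 1 ≤ e.2)
    (c : Ed d × ℝ → ℂ) : Continuous (fun x => ∑ e ∈ A, c e * Fyr d ψ₀ e.1 e.2 x) :=
  continuous_finsetSum _ fun e he => continuous_const.mul (F_cont hd hψ e.1 e.2 (by linarith [hA e he]))

lemma real_est (C C' S X Y q m ν N V : ℝ) (hν : 0 ≤ ν) (hC : 0 ≤ C) (hC' : 0 ≤ C') (hS : 0 ≤ S) (hm : 0 < m)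
    (hq : 0 < 1 / q - 1 / 2) (hX : X = 2 ^ ν) (hY : Y = 2 ^ (ν / m)) (hN0 : 0 ≤ N)
    (hN : N ^ 2 ≤ C * (1 + ν) * Y * S) (hV0 : 0 ≤ V) (hV : X * V ≤ C' * S) :
    N * V ^ (1 / q - 1 / 2) ≤
      (C ^ (1 / 2 : ℝ) * C' ^ (1 / q - 1 / 2)) * ((1 + ν) * 2 ^ (-(ν * (1 / q - 1 / 2 - 1 / (2 * m))))) * S ^ (1 / q) := by
  set α := 1 / q - 1 / 2 with hα
  have h1q : 1 / q = 1 / 2 + α := by rw [hα]; ring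
  have hX0 : 0 < X := by rw [hX]; positivity
  have hY0 : 0 < Y := by rw [hY]; positivity
  have hV' : V ≤ C' * S * 2 ^ (-ν) := by
    rw [Real.rpow_neg (by norm_num), ← hX, ← div_eq_mul_inv, le_div_iff₀ hX0]; linarith
  have a1 : V ^ α ≤ C' ^ α * S ^ α * 2 ^ (-ν * α) := by
    refine (Real.rpow_le_rpow hV0 hV' hq.le).trans (le_of_eq ?_)
    rw [Real.mul_rpow (by positivity) (by positivity), Real.mul_rpow hC' hS, ← Real.rpow_mul (by norm_num)]
  have a2 : N ≤ C ^ (1 / 2 : ℝ) * (1 + ν) * 2 ^ (ν / (2 * m)) * S ^ (1 / 2 : ℝ) := by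
    have b1 : N = (N ^ 2) ^ (1 / 2 : ℝ) := by rw [← Real.sqrt_eq_rpow, Real.sqrt_sq hN0]
    have b2 : (1 + ν) ^ (1 / 2 : ℝ) ≤ 1 + ν := by
      conv_rhs => rw [← Real.rpow_one (1 + ν)]
      exact Real.rpow_le_rpow_of_exponent_le (by linarith) (by norm_num)
    rw [b1]
    refine (Real.rpow_le_rpow (by positivity) hN (by norm_num)).trans ?_
    rw [Real.mul_rpow (by positivity) hS, Real.mul_rpow (by positivity) hY0.le, Real.mul_rpow hC (by positivity), hY,
      ← Real.rpow_mul (by norm_num)]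
    have b3 : ν / m * (1 / 2) = ν / (2 * m) := by field_simp
    rw [b3]
    gcongr
  calc N * V ^ α ≤ (C ^ (1 / 2 : ℝ) * (1 + ν) * 2 ^ (ν / (2 * m)) * S ^ (1 / 2 : ℝ)) * (C' ^ α * S ^ α * 2 ^ (-ν * α)) := by
        gcongr
    _ = (C ^ (1 / 2 : ℝ) * C' ^ α) * ((1 + ν) * (2 ^ (ν / (2 * m)) * 2 ^ (-ν * α))) * (S ^ (1 / 2 : ℝ) * S ^ α) := by ring
    _ = _ := by
        have e1 : S ^ (1 / 2 : ℝ) * S ^ α = S ^ (1 / q) := by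
          rw [h1q, ← Real.rpow_add_of_nonneg hS (by norm_num) hq.le]
        have e2 : (2 : ℝ) ^ (ν / (2 * m)) * 2 ^ (-ν * α) = 2 ^ (-(ν * (α - 1 / (2 * m)))) := by
          rw [← Real.rpow_add (by norm_num)]
          congr 1
          field_simp; ring
        rw [e1, e2]

open Classical in
lemma restricted {d : ℕ} {ψ₀ : Ed d → ℂ} (hd : 4 ≤ d) (hψ : Admissible d ψ₀) (q : ℝ) (hq1 : 1 < q)
    (hq2 : q < (2 * (d : ℝ) - 2) / ((d : ℝ) + 1)) : ∃ C : ℝ, 0 ≤ C ∧ ∀ E : Finset (Ed d × ℝ), SepA E →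
    ∀ c : Ed d × ℝ → ℂ, (∀ e, ‖c e‖ ≤ 1) →
    eLpNorm (fun x => ∑ e ∈ E, c e * Fyr d ψ₀ e.1 e.2 x) (ENNReal.ofReal q) volume ≤
      ENNReal.ofReal (C * (∑ e ∈ E, e.2 ^ (d - 1)) ^ (1 / q)) := by
  obtain ⟨K, hK, f, h1, h2, h3, h4⟩ := L2_setting hd hψ
  have hS : L2Set d _ f K := ⟨hd, hK, h1, h2, h3⟩
  obtain ⟨C, hC, hL2⟩ := L2_bound hS
  have hd4 : (4 : ℝ) ≤ d := by exact_mod_cast hd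
  have hq0 : 0 < q := by linarith
  have hq2' : q * (d + 1) < 2 * d - 2 := (lt_div_iff₀ (by linarith)).mp hq2
  have hqle : q ≤ 2 := by nlinarith
  set m := ((d : ℝ) - 1) / 2 with hm
  have hm0 : 0 < m := by rw [hm]; linarith
  have hδ : 0 < 1 / q - 1 / 2 - 1 / (2 * m) := by
    have e1 : 2 * m = d - 1 := by rw [hm]; ring
    have e2 : 1 / q - 1 / 2 - 1 / (d - 1 : ℝ) = (2 * d - 2 - q * (d + 1)) / (2 * q * (d - 1)) := by
      have : (d - 1 : ℝ) ≠ 0 := by linarith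
      field_simp; ring
    rw [e1, e2]
    exact div_pos (by linarith) (by have : 0 < (d : ℝ) - 1 := by linarith
                                    positivity)
  set δ := 1 / q - 1 / 2 - 1 / (2 * m) with hδd
  have hα : 0 < 1 / q - 1 / 2 := by
    have : 0 < 1 / (2 * m) := by positivity
    linarith
  set C' := covC d * 2 ^ (d - 1) with hC'
  have hC'0 : 0 ≤ C' := by have := covC_nonneg d; positivity
  have hsum := summable_aux δ hδ
  set T := ∑' ν : ℕ, (1 + (ν : ℝ)) * (2 : ℝ) ^ (-(ν * δ)) with hT
  have hT0 : 0 ≤ T := tsum_nonneg fun ν => by positivity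
  set C0 := C ^ (1 / 2 : ℝ) * C' ^ (1 / q - 1 / 2) with hC0
  have hC00 : 0 ≤ C0 := by positivity
  refine ⟨C0 * T, by positivity, fun E hE c hc => ?_⟩
  obtain ⟨ν, hν⟩ := dens_exists E
  set S := ∑ e ∈ E, e.2 ^ (d - 1) with hSd
  have hS0 : 0 ≤ S := Finset.sum_nonneg fun e he => by have := hE.1 e he; positivity
  set B : ℕ → Finset (Ed d × ℝ) := fun n => E.filter (fun e => ν e = n) with hB
  have hBE : ∀ n, B n ⊆ E := fun n => Finset.filter_subset _ _
  have hone : ∀ n, eLpNorm (fun x => ∑ e ∈ B n, c e * Fyr d ψ₀ e.1 e.2 x) (ENNReal.ofReal q) volume ≤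
      ENNReal.ofReal (C0 * ((1 + (n : ℝ)) * (2 : ℝ) ^ (-(n * δ))) * S ^ (1 / q)) := by
    intro n
    obtain ⟨W, hW1, hW2, hW3, hW4⟩ := full_cover (by omega) E (B n) hE.1 (hBE n) n (fun e he => by
      have he' := Finset.mem_filter.mp he
      have := (hν e he'.1).2
      rwa [he'.2] at this)
    have hBs := hE.mono (hBE n)
    have hdens : Dens (B n) (2 ^ (n + 1)) := by
      intro e he ρ g1 g2
      have he' := Finset.mem_filter.mp he
      have := (hν e he'.1).1 ρ g1 g2
      rw [he'.2] at this
      refine le_trans ?_ this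
      exact Nat.cast_le.mpr (Finset.card_le_card (Finset.filter_subset_filter _ (hBE n)))
    have hN := hL2 (B n) hBs n hdens c hc
    have hSB : ∑ e ∈ B n, e.2 ^ (d - 1) ≤ S :=
      Finset.sum_le_sum_of_subset_of_nonneg (hBE n) fun e he _ => by have := hE.1 e he; positivity
    refine (holder_supp _ (sum_F_cont (by omega) hψ _ hBs.1 c) W hW1 hW2 ?_ q hq1.le hqle _ (h4 _ hBs.1 c) (norm_nonneg _)).trans ?_
    · intro x hx
      obtain ⟨e, he, hne⟩ := Finset.exists_ne_zero_of_sum_ne_zero hx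
      refine hW3 e he ?_
      have := F_supp hψ e.1 e.2 x (right_ne_zero_of_mul hne)
      rw [← dist_eq_norm] at this
      exact this
    · refine ENNReal.ofReal_le_ofReal ?_
      refine real_est C C' S (2 ^ n) _ q m n _ _ (by positivity) hC hC'0 hS0 hm0 hα (Real.rpow_natCast _ _).symm rfl (norm_nonneg _)
        (hN.trans ?_) measureReal_nonneg hW4
      exact mul_le_mul_of_nonneg_left hSB (by positivity)
  have hmaps : ∀ e ∈ E, ν e ∈ E.image ν := fun e he => Finset.mem_image_of_mem _ he
  have heq : (fun x => ∑ e ∈ E, c e * Fyr d ψ₀ e.1 e.2 x) =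
      ∑ n ∈ E.image ν, fun x => ∑ e ∈ B n, c e * Fyr d ψ₀ e.1 e.2 x := by
    funext x
    rw [Finset.sum_apply, Finset.sum_fiberwise_of_maps_to hmaps]
  rw [heq]
  refine (eLpNorm_sum_le (fun n _ => (sum_F_cont (by omega) hψ _ (hE.mono (hBE n)).1 c).aestronglyMeasurable)
    (by rw [← ENNReal.ofReal_one]; exact ENNReal.ofReal_le_ofReal hq1.le)).trans ?_
  refine (Finset.sum_le_sum fun n _ => hone n).trans ?_
  rw [← ENNReal.ofReal_sum_of_nonneg (fun n _ => by positivity)]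
  refine ENNReal.ofReal_le_ofReal ?_
  rw [← Finset.sum_mul, ← Finset.mul_sum]
  have := hsum.sum_le_tsum (E.image ν) (fun n _ => by positivity)
  gcongr

lemma sum_rpow_subadd {ι : Type*} (s : Finset ι) (u : ι → ℝ≥0∞) (t : ℝ) (ht0 : 0 < t) (ht : t ≤ 1) :
    (∑ i ∈ s, u i) ^ t ≤ ∑ i ∈ s, u i ^ t := by
  classical
  induction s using Finset.induction_on with
  | empty => simp [ht0]
  | insert a s ha ih =>
    rw [Finset.sum_insert ha, Finset.sum_insert ha]
    exact (ENNReal.rpow_add_le_add_rpow _ _ ht0.le ht).trans (add_le_add le_rfl ih)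

/-- decay kernel on the integers -/
def hker (c : ℝ) (n : ℤ) : ℝ := (2 : ℝ) ^ (-(|(n : ℝ)| * c))

lemma hker_nonneg (c : ℝ) (n : ℤ) : 0 ≤ hker c n := by rw [hker]; positivity

lemma hker_neg (c : ℝ) (n : ℤ) : hker c (-n) = hker c n := by rw [hker, hker]; push_cast; rw [abs_neg]

lemma hker_summable (c : ℝ) (hc : 0 < c) : Summable (hker c) := by
  have h1 : Summable (fun n : ℕ => (2 : ℝ) ^ (-((n : ℝ) * c))) := by
    refine Summable.of_nonneg_of_le (fun n => by positivity) (fun n => ?_) (summable_aux c hc)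
    exact le_mul_of_one_le_left (by positivity) (by linarith [Nat.cast_nonneg (α := ℝ) n])
  refine Summable.of_nat_of_neg (h1.congr fun n => ?_) (h1.congr fun n => ?_)
  · rw [hker]; simp
  · rw [hker]; simp

lemma hker_sum (c : ℝ) (hc : 0 < c) (J : Finset ℤ) (a : ℤ → ℝ) (ha : ∀ j, 0 ≤ a j) :
    ∑ j ∈ J, ∑ k ∈ J, hker c (j - k) * (a j + a k) ≤ 2 * (∑' n, hker c n) * ∑ j ∈ J, a j := by
  set D := ∑' n, hker c n with hD
  have h1 : ∀ j, ∑ k ∈ J, hker c (j - k) ≤ D := by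
    intro j
    have hinj : Set.InjOn (fun k : ℤ => j - k) (SetLike.coe J : Set ℤ) := by
      intro x _ y _ h
      have : j - x = j - y := h
      omega
    rw [← Finset.sum_image (f := hker c) hinj]
    exact (hker_summable c hc).sum_le_tsum _ (fun n _ => hker_nonneg c n)
  have h2 : ∑ j ∈ J, ∑ k ∈ J, hker c (j - k) * a j ≤ D * ∑ j ∈ J, a j := by
    rw [Finset.mul_sum]
    refine Finset.sum_le_sum fun j _ => ?_
    rw [← Finset.sum_mul]
    exact mul_le_mul_of_nonneg_right (h1 j) (ha j)
  have h3 : ∑ j ∈ J, ∑ k ∈ J, hker c (j - k) * a k = ∑ j ∈ J, ∑ k ∈ J, hker c (j - k) * a j := by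
    rw [Finset.sum_comm]
    refine Finset.sum_congr rfl fun i _ => Finset.sum_congr rfl fun j _ => ?_
    rw [← hker_neg, neg_sub]
  simp_rw [mul_add, Finset.sum_add_distrib]
  rw [h3]; linarith

lemma pair_num (C S T p θ j k : ℝ) (hC : 0 ≤ C) (hS : 0 ≤ S) (hT : 0 ≤ T) (hp : 0 < p) (hθ0 : 0 ≤ θ)
    (hθ1 : θ ≤ 1) :
    (C * 2 ^ j * S ^ (2 * θ / p)) ^ (p / 2) * (C * 2 ^ k * T ^ (2 * (1 - θ) / p)) ^ (p / 2) ≤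
      C ^ p * (2 ^ (-((j - k) * (p * (θ - 1 / 2)))) * (2 ^ (j * p) * S + 2 ^ (k * p) * T)) := by
  have e1 : ∀ x S θ : ℝ, 0 ≤ S → (C * 2 ^ x * S ^ (2 * θ / p)) ^ (p / 2) = C ^ (p / 2) * 2 ^ (x * p / 2) * S ^ θ := by
    intro x S θ hS
    rw [Real.mul_rpow (by positivity) (by positivity), Real.mul_rpow hC (by positivity), ← Real.rpow_mul (by norm_num),
      ← Real.rpow_mul hS]
    congr 2
    · ring_nf
    · field_simp
  rw [e1 j S θ hS, e1 k T (1 - θ) hT]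
  have e2 : C ^ p = C ^ (p / 2) * C ^ (p / 2) := by
    rw [← Real.rpow_add_of_nonneg hC (by positivity) (by positivity)]; congr 1; ring
  have e3 := Real.geom_mean_le_arith_mean2_weighted hθ0 (by linarith : 0 ≤ 1 - θ)
    (by positivity : 0 ≤ 2 ^ (j * p) * S) (by positivity : 0 ≤ 2 ^ (k * p) * T) (by ring)
  rw [Real.mul_rpow (by positivity) hS, Real.mul_rpow (by positivity) hT, ← Real.rpow_mul (by norm_num),
    ← Real.rpow_mul (by norm_num)] at e3
  have e4 : θ * (2 ^ (j * p) * S) + (1 - θ) * (2 ^ (k * p) * T) ≤ 2 ^ (j * p) * S + 2 ^ (k * p) * T := by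
    have a1 : 0 ≤ 2 ^ (j * p) * S := by positivity
    have a2 : 0 ≤ 2 ^ (k * p) * T := by positivity
    nlinarith
  have e5 : (2 : ℝ) ^ (j * p / 2) * 2 ^ (k * p / 2) =
      2 ^ (-((j - k) * (p * (θ - 1 / 2)))) * (2 ^ (j * p * θ) * 2 ^ (k * p * (1 - θ))) := by
    rw [← Real.rpow_add (by norm_num), ← Real.rpow_add (by norm_num), ← Real.rpow_add (by norm_num)]
    congr 1; ring
  calc _ = C ^ p * ((2 ^ (j * p / 2) * 2 ^ (k * p / 2)) * (S ^ θ * T ^ (1 - θ))) := by rw [e2]; ring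
    _ = C ^ p * (2 ^ (-((j - k) * (p * (θ - 1 / 2)))) * (2 ^ (j * p * θ) * S ^ θ * (2 ^ (k * p * (1 - θ)) * T ^ (1 - θ)))) := by
        rw [e5]; ring
    _ ≤ _ := by
        refine mul_le_mul_of_nonneg_left ?_ (by positivity)
        exact mul_le_mul_of_nonneg_left (e3.trans e4) (by positivity)

lemma pair_holder {α : Type*} [MeasurableSpace α] {μ : Measure α} (u v : α → ℂ) (hu : AEStronglyMeasurable u μ)
    (hv : AEStronglyMeasurable v μ) (p p0 p1 M N : ℝ) (hp : 0 < p) (hp0 : 0 < p0) (hp1 : 0 < p1)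
    (hconj : p / (2 * p0) + p / (2 * p1) = 1) (hM0 : 0 ≤ M) (hN0 : 0 ≤ N)
    (hM : eLpNorm u (ENNReal.ofReal p0) μ ≤ ENNReal.ofReal M)
    (hN : eLpNorm v (ENNReal.ofReal p1) μ ≤ ENNReal.ofReal N) :
    ∫⁻ x, ‖u x‖ₑ ^ (p / 2) * ‖v x‖ₑ ^ (p / 2) ∂μ ≤ ENNReal.ofReal (M ^ (p / 2) * N ^ (p / 2)) := by
  have hc : Real.HolderConjugate (2 * p0 / p) (2 * p1 / p) :=
    { inv_add_inv_eq_inv := by rw [inv_div, inv_div, hconj, inv_one]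
      left_pos := by positivity
      right_pos := by positivity }
  have h1 := ENNReal.lintegral_mul_le_Lp_mul_Lq μ hc (hu.enorm.pow_const (p / 2)) (hv.enorm.pow_const (p / 2))
  refine h1.trans ?_
  have key : ∀ (w : α → ℂ) (q Q : ℝ), 0 < q → 0 ≤ Q → eLpNorm w (ENNReal.ofReal q) μ ≤ ENNReal.ofReal Q →
      (∫⁻ x, (‖w x‖ₑ ^ (p / 2)) ^ (2 * q / p) ∂μ) ^ (1 / (2 * q / p)) ≤ ENNReal.ofReal (Q ^ (p / 2)) := by
    intro w q Q hq hQ h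
    rw [eLpNorm_eq_lintegral_rpow_enorm_toReal (by simpa using hq) ENNReal.ofReal_ne_top, ENNReal.toReal_ofReal hq.le] at h
    have e1 : ∀ x, (‖w x‖ₑ ^ (p / 2)) ^ (2 * q / p) = ‖w x‖ₑ ^ q := by
      intro x
      rw [← ENNReal.rpow_mul]; congr 1; field_simp
    simp_rw [e1]
    have e2 : 1 / (2 * q / p) = 1 / q * (p / 2) := by field_simp
    rw [e2, ENNReal.rpow_mul, ← ENNReal.ofReal_rpow_of_nonneg hQ (by positivity)]
    exact ENNReal.rpow_le_rpow h (by positivity)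
  rw [ENNReal.ofReal_mul (by positivity)]
  exact mul_le_mul' (key u p0 M hp0 hM0 hM) (key v p1 N hp1 hN0 hN)

lemma interp {α : Type*} [MeasurableSpace α] {μ : Measure α} (p p0 p1 θ C : ℝ) (hp : 0 < p) (hp2 : p ≤ 2) (hp0 : 0 < p0) (hp1 : 0 < p1)
    (hθ1 : 1 / 2 < θ) (hθ2 : θ ≤ 1) (e0 : 1 / p0 = 2 * θ / p) (e1 : 1 / p1 = 2 * (1 - θ) / p) (hC : 0 ≤ C)
    (J : Finset ℤ) (g : ℤ → α → ℂ) (hg : ∀ j, AEStronglyMeasurable (g j) μ) (S : ℤ → ℝ) (hS : ∀ j, 0 ≤ S j)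
    (h0 : ∀ j, eLpNorm (g j) (ENNReal.ofReal p0) μ ≤ ENNReal.ofReal (C * 2 ^ (j : ℝ) * S j ^ (1 / p0)))
    (h1 : ∀ j, eLpNorm (g j) (ENNReal.ofReal p1) μ ≤ ENNReal.ofReal (C * 2 ^ (j : ℝ) * S j ^ (1 / p1))) :
    ∫⁻ x, ‖∑ j ∈ J, g j x‖ₑ ^ p ∂μ ≤
      ENNReal.ofReal (C ^ p * (2 * (∑' n, hker (p * (θ - 1 / 2)) n)) * ∑ j ∈ J, 2 ^ ((j : ℝ) * p) * S j) := by
  set c := p * (θ - 1 / 2) with hc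
  have hc0 : 0 < c := mul_pos hp (by linarith)
  set a : ℤ → ℝ := fun j => 2 ^ ((j : ℝ) * p) * S j with ha
  have ha0 : ∀ j, 0 ≤ a j := fun j => by have := hS j; positivity
  have hconj : p / (2 * p0) + p / (2 * p1) = 1 := by
    have a1 : p / (2 * p0) = p / 2 * (1 / p0) := by field_simp
    have a2 : p / (2 * p1) = p / 2 * (1 / p1) := by field_simp
    rw [a1, a2, e0, e1]; field_simp; ring
  have hpair0 : ∀ j k : ℤ, k ≤ j → ∫⁻ x, ‖g j x‖ₑ ^ (p / 2) * ‖g k x‖ₑ ^ (p / 2) ∂μ ≤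
      ENNReal.ofReal (C ^ p * (hker c (j - k) * (a j + a k))) := by
    intro j k hjk
    have b0 := hS j
    have b1 := hS k
    refine (pair_holder (g j) (g k) (hg j) (hg k) p p0 p1 _ _ hp hp0 hp1 hconj (by positivity) (by positivity)
      (h0 j) (h1 k)).trans (ENNReal.ofReal_le_ofReal ?_)
    rw [e0, e1]
    refine (pair_num C (S j) (S k) p θ j k hC b0 b1 hp (by linarith) hθ2).trans (le_of_eq ?_)
    have hjk' : (k : ℝ) ≤ j := by exact_mod_cast hjk
    rw [hker]; push_cast
    rw [abs_of_nonneg (by linarith : (0 : ℝ) ≤ j - k)]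
  have hpair : ∀ j k : ℤ, ∫⁻ x, ‖g j x‖ₑ ^ (p / 2) * ‖g k x‖ₑ ^ (p / 2) ∂μ ≤
      ENNReal.ofReal (C ^ p * (hker c (j - k) * (a j + a k))) := by
    intro j k
    rcases le_total k j with h | h
    · exact hpair0 j k h
    · have := hpair0 k j h
      rw [← hker_neg, neg_sub, add_comm (a k)] at this
      simp_rw [mul_comm (‖g j _‖ₑ ^ (p / 2))]
      exact this
  have hpt : ∀ x, ‖∑ j ∈ J, g j x‖ₑ ^ p ≤ ∑ j ∈ J, ∑ k ∈ J, ‖g j x‖ₑ ^ (p / 2) * ‖g k x‖ₑ ^ (p / 2) := by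
    intro x
    have b1 : ‖∑ j ∈ J, g j x‖ₑ ≤ ∑ j ∈ J, ‖g j x‖ₑ := enorm_sum_le _ _
    have b2 : (∑ j ∈ J, ‖g j x‖ₑ) ^ (p / 2) ≤ ∑ j ∈ J, ‖g j x‖ₑ ^ (p / 2) :=
      sum_rpow_subadd _ _ _ (by positivity) (by linarith)
    rw [← Finset.sum_mul_sum]
    calc _ = ‖∑ j ∈ J, g j x‖ₑ ^ (p / 2) * ‖∑ j ∈ J, g j x‖ₑ ^ (p / 2) := by
          rw [← ENNReal.rpow_add_of_nonneg _ _ (by positivity) (by positivity)]; congr 1; ring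
      _ ≤ _ := by
          have b3 := (ENNReal.rpow_le_rpow b1 (by positivity : 0 ≤ p / 2)).trans b2
          exact mul_le_mul' b3 b3
  refine (lintegral_mono hpt).trans ?_
  have hme : ∀ j, AEMeasurable (fun x => ‖g j x‖ₑ ^ (p / 2)) μ := fun j => (hg j).enorm.pow_const _
  have hmm : ∀ j k, AEMeasurable (fun x => ‖g j x‖ₑ ^ (p / 2) * ‖g k x‖ₑ ^ (p / 2)) μ := fun j k => (hme j).mul (hme k)
  rw [lintegral_finsetSum' _ (fun j _ => Finset.aemeasurable_fun_sum _ fun k _ => hmm j k)]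
  have hst : ∀ j ∈ J, ∫⁻ x, ∑ k ∈ J, ‖g j x‖ₑ ^ (p / 2) * ‖g k x‖ₑ ^ (p / 2) ∂μ ≤
      ENNReal.ofReal (∑ k ∈ J, C ^ p * (hker c (j - k) * (a j + a k))) := by
    intro j _
    rw [lintegral_finsetSum' _ (fun k _ => hmm j k), ENNReal.ofReal_sum_of_nonneg]
    · exact Finset.sum_le_sum fun k _ => hpair j k
    · intro k _
      have := ha0 j; have := ha0 k; have := hker_nonneg c (j - k)
      positivity
  refine (Finset.sum_le_sum hst).trans ?_
  rw [← ENNReal.ofReal_sum_of_nonneg]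
  · refine ENNReal.ofReal_le_ofReal ?_
    simp_rw [← Finset.mul_sum]
    rw [mul_assoc]
    exact mul_le_mul_of_nonneg_left (hker_sum c hc0 J a ha0) (by positivity)
  · intro j _
    refine Finset.sum_nonneg fun k _ => ?_
    have := ha0 j; have := ha0 k; have := hker_nonneg c (j - k)
    positivity

lemma exponents (d : ℕ) (hd : 4 ≤ d) (p : ℝ) (hp1 : 1 < p) (hpd : p < (2 * (d : ℝ) - 2) / ((d : ℝ) + 1)) :
    ∃ p0 p1 θ : ℝ, 1 < p0 ∧ p0 < (2 * (d : ℝ) - 2) / ((d : ℝ) + 1) ∧ 1 < p1 ∧ p1 < (2 * (d : ℝ) - 2) / ((d : ℝ) + 1) ∧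
      1 / 2 < θ ∧ θ ≤ 1 ∧ 1 / p0 = 2 * θ / p ∧ 1 / p1 = 2 * (1 - θ) / p := by
  set P := (2 * (d : ℝ) - 2) / ((d : ℝ) + 1) with hP
  have hp0 : 0 < p := by linarith
  have hP0 : 0 < P := by linarith
  have a1 : 1 / P < 1 / p := one_div_lt_one_div_of_lt hp0 hpd
  have a2 : 1 / p < 1 := by rw [div_lt_one hp0]; exact hp1
  have a3 : 0 < 1 / P := by positivity
  set s := min (1 - 1 / p) (1 / p - 1 / P) / 2 with hs
  have b0 : 0 < s := by
    have : 0 < min (1 - 1 / p) (1 / p - 1 / P) := lt_min (by linarith) (by linarith)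
    rw [hs]; linarith
  have b1 : s < 1 - 1 / p := by have := min_le_left (1 - 1 / p) (1 / p - 1 / P); linarith
  have b2 : s < 1 / p - 1 / P := by have := min_le_right (1 - 1 / p) (1 / p - 1 / P); linarith
  have c1 : p * (1 / p) = 1 := by field_simp
  refine ⟨1 / (1 / p + s), 1 / (1 / p - s), (1 + p * s) / 2, ?_, ?_, ?_, ?_, ?_, ?_, ?_, ?_⟩
  · rw [lt_one_div (by norm_num) (by linarith)]; linarith
  · rw [one_div_lt (by linarith) hP0]; linarith
  · rw [lt_one_div (by norm_num) (by linarith)]; linarith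
  · rw [one_div_lt (by linarith) hP0]; linarith
  · have := mul_pos hp0 b0; linarith
  · nlinarith
  · rw [one_div_one_div]; field_simp
  · rw [one_div_one_div]; field_simp; ring

open Classical in
lemma level_bound {d : ℕ} {ψ₀ : Ed d → ℂ} (q C : ℝ)
    (hR : ∀ E : Finset (Ed d × ℝ), SepA E → ∀ c : Ed d × ℝ → ℂ, (∀ e, ‖c e‖ ≤ 1) →
    eLpNorm (fun x => ∑ e ∈ E, c e * Fyr d ψ₀ e.1 e.2 x) (ENNReal.ofReal q) volume ≤
      ENNReal.ofReal (C * (∑ e ∈ E, e.2 ^ (d - 1)) ^ (1 / q)))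
    (E : Finset (Ed d × ℝ)) (hE : SepA E) (γ : Ed d × ℝ → ℂ) (t : ℝ) (ht : 0 < t) (hγ : ∀ e ∈ E, ‖γ e‖ ≤ t) :
    eLpNorm (fun x => ∑ e ∈ E, γ e * Fyr d ψ₀ e.1 e.2 x) (ENNReal.ofReal q) volume ≤
      ENNReal.ofReal (t * (C * (∑ e ∈ E, e.2 ^ (d - 1)) ^ (1 / q))) := by
  have htc : (t : ℂ) ≠ 0 := by exact_mod_cast ht.ne'
  have h := hR E hE (fun e => if e ∈ E then γ e / t else 0) (by
    intro e
    split_ifs with he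
    · rw [norm_div, Complex.norm_real, Real.norm_of_nonneg ht.le, div_le_one ht]; exact hγ e he
    · simp)
  have heq : (fun x => ∑ e ∈ E, γ e * Fyr d ψ₀ e.1 e.2 x) =
      (t : ℂ) • (fun x => ∑ e ∈ E, (if e ∈ E then γ e / t else 0) * Fyr d ψ₀ e.1 e.2 x) := by
    funext x
    rw [Pi.smul_apply, smul_eq_mul, Finset.mul_sum]
    refine Finset.sum_congr rfl fun e he => ?_
    rw [if_pos he]; field_simp
  rw [heq, eLpNorm_const_smul, ENNReal.ofReal_mul ht.le]
  refine mul_le_mul' (le_of_eq ?_) h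
  rw [← ofReal_norm, Complex.norm_real, Real.norm_of_nonneg ht.le]

/-- the discrete `ℓ^p → L^p` inequality
`‖∑ γ(y,r) F_{y,r}‖_p ≲ (∑ |γ(y,r)|^p r^{d-1})^{1/p}`, `1 < p < (2d-2)/(d+1)`. -/
theorem discrete_lp_inequality
    (d : ℕ) (hd : 4 ≤ d) (p : ℝ) (hp1 : 1 < p)
    (hpd : p < (2 * (d : ℝ) - 2) / ((d : ℝ) + 1))
    (ψ₀ : Ed d → ℂ) (hψ : Admissible d ψ₀) :
    ∃ C : ℝ, 0 < C ∧
      ∀ (Y : Set (Ed d)) (R : Set ℝ),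
        (∀ y ∈ Y, ∀ y' ∈ Y, y ≠ y' → 1 ≤ dist y y') →
        (∀ r ∈ R, ∀ r' ∈ R, r ≠ r' → 1 ≤ |r - r'|) →
        (∀ r ∈ R, 1 ≤ r) →
        ∀ γ : Ed d × ℝ → ℂ, ∀ hfin : (Function.support γ).Finite,
          Function.support γ ⊆ Y ×ˢ R →
          eLpNorm (fun x => ∑ e ∈ hfin.toFinset, γ e * Fyr d ψ₀ e.1 e.2 x)
              (ENNReal.ofReal p) volume ≤
            ENNReal.ofReal
              (C * (∑ e ∈ hfin.toFinset, ‖γ e‖ ^ p * e.2 ^ (d - 1)) ^ (1 / p)) := by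
  classical
  obtain ⟨p0, p1, θ, hp01, hp0d, hp11, hp1d, hθ1, hθ2, e0, e1⟩ := exponents d hd p hp1 hpd
  obtain ⟨C0, hC0, hR0⟩ := restricted hd hψ p0 hp01 hp0d
  obtain ⟨C1, hC1, hR1⟩ := restricted hd hψ p1 hp11 hp1d
  have hd4 : (4 : ℝ) ≤ d := by exact_mod_cast hd
  have hp0 : 0 < p := by linarith
  have hp2 : p ≤ 2 := by
    have := (lt_div_iff₀ (by linarith)).mp hpd
    nlinarith
  set C := 2 * (C0 + C1) with hC
  have hCn : 0 ≤ C := by positivity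
  set D := C ^ p * (2 * (∑' n, hker (p * (θ - 1 / 2)) n)) with hD
  have hDn : 0 ≤ D := by
    have : 0 ≤ ∑' n, hker (p * (θ - 1 / 2)) n := tsum_nonneg fun n => hker_nonneg _ n
    positivity
  refine ⟨D ^ (1 / p) + 1, by positivity, ?_⟩
  intro Y R hY hR hR1' γ hfin hsupp
  set E := hfin.toFinset with hEd
  have hmemE : ∀ e ∈ E, γ e ≠ 0 ∧ e.1 ∈ Y ∧ e.2 ∈ R := by
    intro e he
    have h1 : e ∈ Function.support γ := by simpa [hEd] using he
    exact ⟨h1, (hsupp h1).1, (hsupp h1).2⟩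
  have hE : SepA E := ⟨fun e he => hR1' _ (hmemE e he).2.2,
    fun e he e' he' h => hY _ (hmemE e he).2.1 _ (hmemE e' he').2.1 h,
    fun e he e' he' h => hR _ (hmemE e he).2.2 _ (hmemE e' he').2.2 h⟩
  set lev : Ed d × ℝ → ℤ := fun e => Int.log 2 ‖γ e‖ with hlev
  have hlev1 : ∀ e ∈ E, (2 : ℝ) ^ (lev e : ℝ) ≤ ‖γ e‖ := by
    intro e he
    have := Int.zpow_log_le_self (b := 2) (by norm_num) (norm_pos_iff.mpr (hmemE e he).1)
    rw [Real.rpow_intCast]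
    exact_mod_cast this
  have hlev2 : ∀ e ∈ E, ‖γ e‖ ≤ 2 * (2 : ℝ) ^ (lev e : ℝ) := by
    intro e he
    have := (Int.lt_zpow_succ_log_self (b := 2) (by norm_num) ‖γ e‖).le
    rw [zpow_add_one₀ (by norm_num)] at this
    rw [Real.rpow_intCast, mul_comm]
    exact_mod_cast this
  set Ej : ℤ → Finset (Ed d × ℝ) := fun j => E.filter (fun e => lev e = j) with hEj
  have hEjE : ∀ j, Ej j ⊆ E := fun j => Finset.filter_subset _ _
  set S : ℤ → ℝ := fun j => ∑ e ∈ Ej j, e.2 ^ (d - 1) with hS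
  have hSn : ∀ j, 0 ≤ S j := fun j => Finset.sum_nonneg fun e he => by
    have := hE.1 e (hEjE j he); positivity
  have hb : ∀ (q C' : ℝ), C' ≤ C0 + C1 → (∀ E : Finset (Ed d × ℝ), SepA E → ∀ c : Ed d × ℝ → ℂ, (∀ e, ‖c e‖ ≤ 1) →
    eLpNorm (fun x => ∑ e ∈ E, c e * Fyr d ψ₀ e.1 e.2 x) (ENNReal.ofReal q) volume ≤
      ENNReal.ofReal (C' * (∑ e ∈ E, e.2 ^ (d - 1)) ^ (1 / q))) → ∀ j : ℤ,
      eLpNorm (fun x => ∑ e ∈ Ej j, γ e * Fyr d ψ₀ e.1 e.2 x) (ENNReal.ofReal q) volume ≤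
        ENNReal.ofReal (C * 2 ^ (j : ℝ) * S j ^ (1 / q)) := by
    intro q C' hC' hRq j
    refine (level_bound q C' hRq (Ej j) (hE.mono (hEjE j)) γ (2 * 2 ^ (j : ℝ)) (by positivity) ?_).trans
      (ENNReal.ofReal_le_ofReal ?_)
    · intro e he
      have := hlev2 e (hEjE j he)
      rwa [(Finset.mem_filter.mp he).2] at this
    · have := hSn j
      calc _ ≤ 2 * 2 ^ (j : ℝ) * ((C0 + C1) * (S j) ^ (1 / q)) := by gcongr
        _ = _ := by rw [hC]; ring
  have hmain := interp (μ := (volume : Measure (Ed d))) p p0 p1 θ C hp0 hp2 (by linarith) (by linarith) hθ1 hθ2 e0 e1 hCn (E.image lev)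
    (fun j x => ∑ e ∈ Ej j, γ e * Fyr d ψ₀ e.1 e.2 x)
    (fun j => (sum_F_cont (by omega) hψ _ (hE.mono (hEjE j)).1 γ).aestronglyMeasurable) S hSn
    (hb p0 C0 (by linarith) hR0) (hb p1 C1 (by linarith) hR1)
  have hmaps : ∀ e ∈ E, lev e ∈ E.image lev := fun e he => Finset.mem_image_of_mem _ he
  have heq : ∀ x, ∑ j ∈ E.image lev, ∑ e ∈ Ej j, γ e * Fyr d ψ₀ e.1 e.2 x = ∑ e ∈ E, γ e * Fyr d ψ₀ e.1 e.2 x :=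
    fun x => Finset.sum_fiberwise_of_maps_to hmaps _
  simp only [heq] at hmain
  set Q := ∑ e ∈ E, ‖γ e‖ ^ p * e.2 ^ (d - 1) with hQ
  have hQn : 0 ≤ Q := Finset.sum_nonneg fun e he => by have := hE.1 e he; positivity
  have hSQ : ∑ j ∈ E.image lev, 2 ^ ((j : ℝ) * p) * S j ≤ Q := by
    rw [hQ, ← Finset.sum_fiberwise_of_maps_to hmaps]
    refine Finset.sum_le_sum fun j _ => ?_
    rw [hS]
    simp only
    rw [Finset.mul_sum]
    refine Finset.sum_le_sum fun e he => ?_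
    have h1 := hlev1 e (hEjE j he)
    rw [(Finset.mem_filter.mp he).2] at h1
    have h2 := hE.1 e (hEjE j he)
    refine mul_le_mul_of_nonneg_right ?_ (by positivity)
    rw [Real.rpow_mul (by norm_num)]
    exact Real.rpow_le_rpow (by positivity) h1 hp0.le
  rw [eLpNorm_eq_lintegral_rpow_enorm_toReal (by simpa using hp0) ENNReal.ofReal_ne_top, ENNReal.toReal_ofReal hp0.le]
  calc _ ≤ ENNReal.ofReal (D * Q) ^ (1 / p) := by
        refine ENNReal.rpow_le_rpow (hmain.trans (ENNReal.ofReal_le_ofReal ?_)) (by positivity)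
        exact mul_le_mul_of_nonneg_left hSQ hDn
    _ = ENNReal.ofReal (D ^ (1 / p) * Q ^ (1 / p)) := by
        rw [ENNReal.ofReal_rpow_of_nonneg (by positivity) (by positivity), Real.mul_rpow hDn hQn]
    _ ≤ _ := by
        refine ENNReal.ofReal_le_ofReal (mul_le_mul_of_nonneg_right (by linarith) (by positivity))
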